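/- Let m > 7, and let G be a finite group with a normal subgroup V such that V is an elementary abelian 2-group of rank t, V is of maximal rank in G, and W = G/V is an elementary abelian 2-group. If G acts freely and continuously on the product (S^m)^t of t copies of the m-sphere, then rank(W) ≤ (m+1)·t. -/

import Mathlib

noncomputable section

/-- The unit sphere `S^m` in `ℝ^{m+1}`. -/
abbrev Sph (m : ℕ) : Type := Metric.sphere (0 : EuclideanSpace ℝ (Fin (m + 1))) 1

/-- The antipodal relation on the sphere `S^m`. -/
def antipodal (m : ℕ) (x y : Sph m) : Prop :=
  (y : EuclideanSpace ℝ (Fin (m + 1))) = (x : EuclideanSpace ℝ (Fin (m + 1))) ∨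
    (y : EuclideanSpace ℝ (Fin (m + 1))) = -(x : EuclideanSpace ℝ (Fin (m + 1)))

/-- Real projective `m`-space: the quotient of `S^m` by the antipodal map,
with the quotient topology. -/
abbrev RP (m : ℕ) : Type := Quot (antipodal m)

/-- A subgroup is an elementary abelian 2-group: every element squares to the
identity (such a subgroup is automatically abelian). -/
def IsElemAbelian2 {G : Type*} [Group G] (A : Subgroup G) : Prop :=
  (∀ a ∈ A, a * a = 1) ∧ ∀ a ∈ A, ∀ b ∈ A, a * b = b * a

/-- A subgroup `V` of `G` has maximal rank if every elementary abelian
2-subgroup `A` of `G` satisfies `|A| ≤ |V|`. -/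
def IsMaximalRank2 {G : Type*} [Group G] (V : Subgroup G) : Prop :=
  ∀ A : Subgroup G, IsElemAbelian2 A → Nat.card A ≤ Nat.card V

/-
Alexander–Spanier cochains are functions on lists of points, and a cocycle need only be one on
sufficiently small lists. Covering the sphere by two caps and the band between them computes
`H^m((S^m)^t; ℤ) = ℤ ^ t`, and the product of the `t` coordinate classes generates the top degree
`m * t`. Let `θ` be the action of `G` on `K = ℤ ^ t = H^m`, let `N` be its kernel and let `I ≤ K` be
the lattice of classes represented by `N`-invariant cochains.

* The order of `N` divides the index of `I`: in a Smith basis of `I`, the product of the elementary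
  divisors times an odd multiple of the top class is represented by an invariant cocycle, and since
  the action is free and there is no cohomology above the top degree, every invariant top cocycle is
  a sum over `N` of translates of one cocycle.
* If `J ≤ K` is generated by `2 K` and all `θ g x - x`, then `2 ^ m * J ≤ I`. The obstruction to
  making a class invariant is pushed down through `m` degrees, each of which costs a factor `2`
  because the group is an extension of two groups of exponent `2`.
* `|G / N| * [K : J] ≤ 4 ^ t` for every representation on `ℤ ^ t` of such a group, by induction on
  `t`: an involution in the image which is not a scalar and commutes with the image up to sign
  either splits `K` into invariant pieces or has two eigenlattices that are swapped by the group;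
  without it all squares are `±1` and the image has order at most `8` or exponent `2`.

Hence `|G| = |N| * |G / N| ≤ 2 ^ (m * t) * 4 ^ t`.
-/

theorem commute_of_mul_self_eq_one {Λ : Type*} [Group Λ] (hsq : ∀ x : Λ, x * x = 1) (a b : Λ) :
    Commute a b :=
  Commute.of_orderOf_dvd_two (fun g => orderOf_dvd_of_pow_eq_one ((sq g).trans (hsq g))) a b

/-- Alexander–Spanier cochains of all degrees at once: a cochain assigns a value to every list of
points. A cochain of degree `n` is seen through its values on the lists of length `n + 1`, and the
empty list carries the augmentation. -/
abbrev Cochain (X L : Type*) : Type _ := List X → L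

namespace Cochain

section Coboundary

variable {X Y Z L M : Type*}

/-- The pullback of a cochain along a map of point sets. -/
def pullback (φ : X → Y) (f : Cochain Y L) : Cochain X L := fun l => f (l.map φ)

theorem pullback_pullback (φ : X → Y) (ψ : Y → Z) (f : Cochain Z L) :
    pullback φ (pullback ψ f) = pullback (fun x => ψ (φ x)) f := by
  funext l; simp only [pullback, List.map_map]; rfl

theorem pullback_id (f : Cochain X L) : pullback (fun x => x) f = f := by
  funext l; simp [pullback]

variable [AddCommGroup L] [AddCommGroup M]

/-- The simplicial coboundary `(d f)(x₀, …, xₙ) = ∑ (-1)ⁱ f(x₀, …, x̂ᵢ, …, xₙ)` of the augmented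
complex, by recursion on the list of points. -/
def d : Cochain X L → Cochain X L
  | _, [] => 0
  | f, x :: r => f r - d (fun l => f (x :: l)) r

@[simp] theorem d_nil (f : Cochain X L) : d f [] = 0 := rfl

theorem d_cons (f : Cochain X L) (x : X) (r : List X) :
    d f (x :: r) = f r - d (fun l => f (x :: l)) r := rfl

theorem d_add (f g : Cochain X L) : d (f + g) = d f + d g := by
  funext l
  induction l generalizing f g with
  | nil => simp
  | cons x r ih =>
    have := ih (fun l => f (x :: l)) (fun l => g (x :: l))
    simp only [d_cons, Pi.add_apply] at this ⊢
    have hcons : (fun l => f (x :: l) + g (x :: l)) =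
      (fun l => f (x :: l)) + fun l => g (x :: l) := rfl
    rw [hcons, this]; abel

theorem d_hom (φ : L →+ M) (f : Cochain X L) (l : List X) :
    d (fun l => φ (f l)) l = φ (d f l) := by
  induction l generalizing f with
  | nil => simp
  | cons x r ih => simp only [d_cons, map_sub, ih]

/-- The coboundary as an additive homomorphism. -/
def dHom : Cochain X L →+ (Cochain X L) where
  toFun := d
  map_zero' := by
    have := d_add (0 : Cochain X L) 0
    simpa using this
  map_add' := d_add

@[simp] theorem d_zero : d (0 : Cochain X L) = 0 := dHom.map_zero
theorem d_sub (f g : Cochain X L) : d (f - g) = d f - d g := dHom.map_sub f g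

theorem d_zsmul (n : ℤ) (f : Cochain X L) : d (n • f) = n • d f := map_zsmul dHom n f

theorem d_sum {ι : Type*} (s : Finset ι) (f : ι → Cochain X L) :
    d (∑ i ∈ s, f i) = ∑ i ∈ s, d (f i) := map_sum dHom f s

@[simp] theorem d_d (f : Cochain X L) : d (d f) = 0 := by
  funext l
  induction l generalizing f with
  | nil => rfl
  | cons x r ih =>
    have hcons : (fun l => d f (x :: l)) = f - d (fun l => f (x :: l)) := rfl
    rw [d_cons, hcons, d_sub]
    simp [ih]

theorem pullback_add (φ : X → Y) (f g : Cochain Y L) :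
    pullback φ (f + g) = pullback φ f + pullback φ g := rfl

theorem pullback_sub (φ : X → Y) (f g : Cochain Y L) :
    pullback φ (f - g) = pullback φ f - pullback φ g := rfl

theorem pullback_neg (φ : X → Y) (f : Cochain Y L) : pullback φ (-f) = -pullback φ f := rfl

theorem pullback_zero (φ : X → Y) : pullback φ (0 : Cochain Y L) = 0 := rfl

theorem pullback_smul (φ : X → Y) (a : ℤ) (f : Cochain Y L) :
    pullback φ (a • f) = a • pullback φ f := rfl

theorem pullback_sum {ι : Type*} (φ : X → Y) (s : Finset ι) (f : ι → Cochain Y L) :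
    pullback φ (∑ i ∈ s, f i) = ∑ i ∈ s, pullback φ (f i) := by
  funext l; simp [pullback]

theorem d_pullback (φ : X → Y) (f : Cochain Y L) : d (pullback φ f) = pullback φ (d f) := by
  funext l
  induction l generalizing f with
  | nil => rfl
  | cons x r ih => exact congrArg (f (r.map φ) - ·) (ih fun l => f (φ x :: l))

theorem d_eq_zero {f : Cochain X L} {l : List X}
    (h : ∀ l', l'.Sublist l → l'.length + 1 = l.length → f l' = 0) : d f l = 0 := by
  induction l generalizing f with
  | nil => rfl
  | cons x r ih =>
    rw [d_cons, h r (List.sublist_cons_self x r) rfl, ih, sub_zero]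
    intro l' hsub hlen
    exact h _ (hsub.cons_cons x) (by simpa using hlen)

theorem d_congr {f g : Cochain X L} {l : List X}
    (h : ∀ l', l'.Sublist l → l'.length + 1 = l.length → f l' = g l') : d f l = d g l := by
  have : d (f - g) l = 0 := d_eq_zero fun l' hsub hlen => by simp [h l' hsub hlen]
  rw [d_sub] at this
  exact sub_eq_zero.1 this

theorem d_cone (f : Cochain X L) (x : X) (l : List X) (h : d f (x :: l) = 0) :
    d (fun l => f (x :: l)) l = f l := by
  rw [d_cons] at h
  exact (sub_eq_zero.1 h).symm

/-- The prism operator, a chain homotopy between the pullbacks along `f` and `g`. -/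
def prism (f g : X → Y) : Cochain Y L → Cochain X L
  | _, [] => 0
  | φ, x :: r => φ (f x :: g x :: r.map g) - prism f g (fun l => φ (f x :: l)) r

@[simp] theorem prism_nil (f g : X → Y) (φ : Cochain Y L) : prism f g φ [] = 0 := rfl

theorem prism_cons (f g : X → Y) (φ : Cochain Y L) (x : X) (r : List X) :
    prism f g φ (x :: r) =
      φ (f x :: g x :: r.map g) - prism f g (fun l => φ (f x :: l)) r := rfl

theorem prism_add (f g : X → Y) (φ ψ : Cochain Y L) :
    prism f g (φ + ψ) = prism f g φ + prism f g ψ := by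
  funext l
  induction l generalizing φ ψ with
  | nil => simp
  | cons x r ih =>
    have := ih (fun l => φ (f x :: l)) (fun l => ψ (f x :: l))
    simp only [prism_cons, Pi.add_apply] at this ⊢
    have hcons : (fun l => φ (f x :: l) + ψ (f x :: l)) =
      (fun l => φ (f x :: l)) + fun l => ψ (f x :: l) := rfl
    rw [hcons, this]; abel

theorem prism_sub (f g : X → Y) (φ ψ : Cochain Y L) :
    prism f g (φ - ψ) = prism f g φ - prism f g ψ := by
  rw [eq_sub_iff_add_eq, ← prism_add, sub_add_cancel]

theorem d_prism (f g : X → Y) (φ : Cochain Y L) :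
    d (prism f g φ) + prism f g (d φ) = pullback g φ - pullback f φ := by
  funext l
  simp only [Pi.add_apply, Pi.sub_apply]
  induction l generalizing φ with
  | nil => simp [pullback]
  | cons x r ih =>
    have hprism : (fun l => prism f g φ (x :: l)) =
        pullback g (fun l => φ (f x :: g x :: l)) - prism f g (fun l => φ (f x :: l)) := rfl
    have hd : (fun l => d φ (f x :: l)) = φ - d (fun l => φ (f x :: l)) := rfl
    rw [d_cons, prism_cons, hprism, hd, d_sub, prism_sub, Pi.sub_apply, Pi.sub_apply, d_pullback,
      eq_sub_iff_add_eq.2 (ih fun l => φ (f x :: l)), d_cons, d_cons]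
    simp only [pullback, List.map_cons]
    abel

theorem prism_eq_zero {f g : X → Y} {φ : Cochain Y L} {l : List X}
    (h : ∀ l' : List Y, l'.length = l.length + 1 →
      (∀ y ∈ l', ∃ x ∈ l, y = f x ∨ y = g x) → φ l' = 0) : prism f g φ l = 0 := by
  induction l generalizing φ with
  | nil => rfl
  | cons x r ih =>
    rw [prism_cons, h _ (by simp), ih, sub_zero]
    · intro l' hlen himage
      refine h _ (by simp [hlen]) ?_
      intro y hy
      rcases List.mem_cons.1 hy with rfl | hy
      · exact ⟨x, by simp, Or.inl rfl⟩
      · obtain ⟨z, hz, h⟩ := himage y hy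
        exact ⟨z, by simp [hz], h⟩
    · intro y hy
      simp only [List.mem_cons, List.mem_map] at hy
      rcases hy with rfl | rfl | ⟨z, hz, rfl⟩
      · exact ⟨x, by simp, Or.inl rfl⟩
      · exact ⟨x, by simp, Or.inr rfl⟩
      · exact ⟨z, by simp [hz], Or.inr rfl⟩

theorem prism_pullback {X' Y' : Type*} {f g : X → Y} {f' g' : X' → Y'} {a : X' → X} {b : Y' → Y}
    (hf : ∀ x, f (a x) = b (f' x)) (hg : ∀ x, g (a x) = b (g' x)) (φ : Cochain Y L) :
    pullback a (prism f g φ) = prism f' g' (pullback b φ) := by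
  funext l
  induction l generalizing φ with
  | nil => rfl
  | cons x r ih =>
    have hmap : r.map (g ∘ a) = r.map (b ∘ g') := List.map_congr_left fun x _ => hg x
    have ih' := ih fun l => φ (f (a x) :: l)
    simp only [pullback, List.map_cons, prism_cons, List.map_map, hf, hg, hmap] at ih' ⊢
    rw [ih']
    rfl

end Coboundary

section Cup

variable {X Y L : Type*} [AddCommGroup L]

/-- The cup product (front face times back face) of a cochain `φ` of degree `p` with an integral
cochain of any degree. -/
def cup (p : ℕ) (φ : Cochain X L) (ψ : Cochain X ℤ) : Cochain X L :=
  fun l => ψ (l.drop p) • φ (l.take (p + 1))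

theorem d_cup (p : ℕ) (φ : Cochain X L) (ψ : Cochain X ℤ) (l : List X) (hl : p + 2 ≤ l.length) :
    d (cup p φ ψ) l = cup (p + 1) (d φ) ψ l + (-1 : ℤ) ^ p • cup p φ (d ψ) l := by
  induction p generalizing φ l with
  | zero =>
    match l, hl with
    | x :: y :: r, _ =>
      have hscalar := d_hom ((smulAddHom ℤ L).flip (φ [x])) (fun l => ψ (x :: l)) (y :: r)
      simp only [AddMonoidHom.flip_apply, smulAddHom_apply] at hscalar
      simp only [cup, d_cons, List.drop_zero, List.take_succ_cons, List.take_zero,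
        List.drop_succ_cons, d_nil, zero_add, pow_zero, one_smul, sub_zero] at hscalar ⊢
      rw [hscalar]
      module
  | succ p ih =>
    match l, hl with
    | x :: r, hl =>
      have hcons : (fun l => cup (p + 1) φ ψ (x :: l)) = cup p (fun l => φ (x :: l)) ψ := rfl
      have hsucc : cup (p + 1 + 1) (d φ) ψ (x :: r) = cup (p + 1) φ ψ r
        - cup (p + 1) (d fun l => φ (x :: l)) ψ r := by
        simp [cup, d_cons, smul_sub]
      have hcons' : cup (p + 1) φ (d ψ) (x :: r) = cup p (fun l => φ (x :: l)) (d ψ) r := rfl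
      rw [d_cons, hcons, ih _ _ (by simpa using hl), hsucc, hcons', pow_succ]
      module

theorem cup_add (p : ℕ) (φ φ' : Cochain X L) (ψ : Cochain X ℤ) :
    cup p (φ + φ') ψ = cup p φ ψ + cup p φ' ψ := by
  funext l; simp [cup]

theorem cup_sub (p : ℕ) (φ φ' : Cochain X L) (ψ : Cochain X ℤ) :
    cup p (φ - φ') ψ = cup p φ ψ - cup p φ' ψ := by
  funext l; simp [cup, smul_sub]

theorem cup_smul (p : ℕ) (a : ℤ) (φ : Cochain X L) (ψ : Cochain X ℤ) :
    cup p (a • φ) ψ = a • cup p φ ψ := by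
  funext l; simp [cup, smul_comm a]

theorem add_cup (p : ℕ) (φ : Cochain X L) (ψ ψ' : Cochain X ℤ) :
    cup p φ (ψ + ψ') = cup p φ ψ + cup p φ ψ' := by
  funext l; simp [cup, add_smul]

theorem sub_cup (p : ℕ) (φ : Cochain X L) (ψ ψ' : Cochain X ℤ) :
    cup p φ (ψ - ψ') = cup p φ ψ - cup p φ ψ' := by
  funext l; simp [cup, sub_smul]

theorem smul_cup (p : ℕ) (a : ℤ) (φ : Cochain X L) (ψ : Cochain X ℤ) :
    cup p φ (a • ψ) = a • cup p φ ψ := by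
  funext l; simp [cup, mul_smul]

theorem pullback_cup (φ : X → Y) (p : ℕ) (f : Cochain Y L) (g : Cochain Y ℤ) :
    pullback φ (cup p f g) = cup p (pullback φ f) (pullback φ g) := by
  funext l
  simp [cup, pullback, List.map_take, List.map_drop]

theorem cup_assoc (p q : ℕ) (φ : Cochain X L) (ψ χ : Cochain X ℤ) :
    cup (p + q) (cup p φ ψ) χ = cup p φ (cup q ψ χ) := by
  funext l
  simp only [cup, smul_smul, smul_eq_mul, List.take_take, List.drop_take, List.drop_drop]
  congr 3
  · congr 1; omega
  · omega

end Cup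

section Local

variable {X Y L : Type*} [PseudoMetricSpace X] [PseudoMetricSpace Y] [AddCommGroup L]

/-- A cochain on `n` points is locally zero on `A` if it vanishes on small tuples in `A`. -/
def LocallyZero (A : Set X) (n : ℕ) (f : Cochain X L) : Prop :=
  ∃ ε > 0, ∀ l : List X, l.length = n → (∀ x ∈ l, x ∈ A) →
    (∀ x ∈ l, ∀ y ∈ l, dist x y < ε) → f l = 0

/-- Alexander–Spanier cocycles on `n` points of `A`. -/
def IsCocycle (A : Set X) (n : ℕ) (f : Cochain X L) : Prop := LocallyZero A (n + 1) (d f)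

/-- Alexander–Spanier coboundaries (of the unaugmented complex) on `n` points of `A`. -/
def IsCoboundary (A : Set X) (n : ℕ) (f : Cochain X L) : Prop :=
  ∃ η, η [] = 0 ∧ LocallyZero A n (f - d η)

variable {A B : Set X} {n : ℕ} {f g : Cochain X L}

theorem LocallyZero.of_eq (h : ∀ l : List X, l.length = n → (∀ x ∈ l, x ∈ A) → f l = 0) :
    LocallyZero A n f :=
  ⟨1, one_pos, fun l hlen hmem _ => h l hlen hmem⟩

theorem LocallyZero.zero : LocallyZero A n (0 : Cochain X L) := LocallyZero.of_eq fun _ _ _ => rfl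

theorem LocallyZero.add (hf : LocallyZero A n f) (hg : LocallyZero A n g) :
    LocallyZero A n (f + g) := by
  obtain ⟨ε, hε, h⟩ := hf
  obtain ⟨ε', hε', h'⟩ := hg
  refine ⟨min ε ε', lt_min hε hε', fun l hlen hmem hclose => ?_⟩
  have hfl := h l hlen hmem fun x hx y hy => (hclose x hx y hy).trans_le (min_le_left _ _)
  have hgl := h' l hlen hmem fun x hx y hy => (hclose x hx y hy).trans_le (min_le_right _ _)
  simp [hfl, hgl]

theorem LocallyZero.smul (a : ℤ) (hf : LocallyZero A n f) : LocallyZero A n (a • f) := by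
  obtain ⟨ε, hε, h⟩ := hf
  exact ⟨ε, hε, fun l hlen hmem hclose => by simp [h l hlen hmem hclose]⟩

theorem LocallyZero.neg (hf : LocallyZero A n f) :
    LocallyZero A n (-f) := by simpa using hf.smul (-1)

theorem LocallyZero.sub (hf : LocallyZero A n f) (hg : LocallyZero A n g) :
    LocallyZero A n (f - g) := by
  simpa [sub_eq_add_neg] using hf.add hg.neg

theorem LocallyZero.sum {ι : Type*} {s : Finset ι} {f : ι → Cochain X L}
    (h : ∀ i ∈ s, LocallyZero A n (f i)) :
    LocallyZero A n (∑ i ∈ s, f i) :=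
  Finset.sum_induction f (LocallyZero A n) (fun _ _ => LocallyZero.add) LocallyZero.zero h

theorem LocallyZero.mono (hf : LocallyZero B n f) (h : A ⊆ B) : LocallyZero A n f := by
  obtain ⟨ε, hε, h'⟩ := hf
  exact ⟨ε, hε, fun l hlen hmem hclose => h' l hlen (fun x hx => h (hmem x hx)) hclose⟩

theorem LocallyZero.congr (hf : LocallyZero A n f)
    (h : ∀ l : List X, l.length = n → (∀ x ∈ l, x ∈ A) → f l = g l) : LocallyZero A n g := by
  have := hf.sub (LocallyZero.of_eq (f := f - g) fun l hlen hmem => by simp [h l hlen hmem])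
  simpa using this

theorem LocallyZero.d (hf : LocallyZero A n f) : LocallyZero A (n + 1) (d f) := by
  obtain ⟨ε, hε, h⟩ := hf
  refine ⟨ε, hε, fun l hlen hmem hclose => d_eq_zero fun l' hsub hlen' => ?_⟩
  exact h l' (by omega) (fun x hx => hmem x (hsub.subset hx))
    fun x hx y hy => hclose x (hsub.subset hx) y (hsub.subset hy)

theorem LocallyZero.pullback {B : Set Y} {f : Cochain Y L} {φ : X → Y} (hf : LocallyZero B n f)
    (hφ : UniformContinuousOn φ A) (hm : Set.MapsTo φ A B) : LocallyZero A n (pullback φ f) := by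
  obtain ⟨ε, hε, h⟩ := hf
  obtain ⟨δ, hδ, h'⟩ := Metric.uniformContinuousOn_iff.1 hφ ε hε
  refine ⟨δ, hδ, fun l hlen hmem hclose => h _ (by simpa using hlen) ?_ ?_⟩
  · intro y hy
    obtain ⟨x, hx, rfl⟩ := List.mem_map.1 hy
    exact hm (hmem x hx)
  · intro y hy y' hy'
    obtain ⟨x, hx, rfl⟩ := List.mem_map.1 hy
    obtain ⟨x', hx', rfl⟩ := List.mem_map.1 hy'
    exact h' x (hmem x hx) x' (hmem x' hx') (hclose x hx x' hx')

theorem LocallyZero.cup_left {p : ℕ} {ψ : Cochain X ℤ} (hf : LocallyZero A (p + 1) f)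
    (hn : p + 1 ≤ n) :
    LocallyZero A n (cup p f ψ) := by
  obtain ⟨ε, hε, h⟩ := hf
  refine ⟨ε, hε, fun l hlen hmem hclose => ?_⟩
  have hs := List.take_subset (p + 1) l
  rw [cup, h _ (by rw [List.length_take]; omega) (fun x hx => hmem x (hs hx))
    (fun x hx y hy => hclose x (hs hx) y (hs hy)), smul_zero]

theorem LocallyZero.cup_right {p q : ℕ} {ψ : Cochain X ℤ} (hf : LocallyZero A q ψ) :
    LocallyZero A (p + q) (cup p f ψ) := by
  obtain ⟨ε, hε, h⟩ := hf
  refine ⟨ε, hε, fun l hlen hmem hclose => ?_⟩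
  have hs := List.drop_subset p l
  rw [cup, h _ (by rw [List.length_drop]; omega) (fun x hx => hmem x (hs hx))
    (fun x hx y hy => hclose x (hs hx) y (hs hy)), zero_smul]

theorem IsCocycle.add (hf : IsCocycle A n f) (hg : IsCocycle A n g) : IsCocycle A n (f + g) := by
  rw [IsCocycle, d_add]; exact LocallyZero.add hf hg

theorem IsCocycle.sub (hf : IsCocycle A n f) (hg : IsCocycle A n g) : IsCocycle A n (f - g) := by
  rw [IsCocycle, d_sub]; exact LocallyZero.sub hf hg

theorem IsCocycle.smul (a : ℤ) (hf : IsCocycle A n f) : IsCocycle A n (a • f) := by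
  rw [IsCocycle, d_zsmul]; exact LocallyZero.smul a hf

theorem IsCocycle.zero : IsCocycle A n (0 : Cochain X L) := by
  rw [IsCocycle, d_zero]; exact LocallyZero.zero

theorem IsCocycle.sum {ι : Type*} {s : Finset ι} {f : ι → Cochain X L}
    (h : ∀ i ∈ s, IsCocycle A n (f i)) :
    IsCocycle A n (∑ i ∈ s, f i) :=
  Finset.sum_induction f (IsCocycle A n) (fun _ _ => IsCocycle.add) IsCocycle.zero h

theorem IsCocycle.mono (hf : IsCocycle B n f) (h : A ⊆ B) : IsCocycle A n f := LocallyZero.mono hf h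

theorem IsCocycle.pullback {B : Set Y} {f : Cochain Y L} {φ : X → Y} (hf : IsCocycle B n f)
    (hφ : UniformContinuousOn φ A) (hm : Set.MapsTo φ A B) : IsCocycle A n (pullback φ f) := by
  rw [IsCocycle, d_pullback]; exact LocallyZero.pullback hf hφ hm

theorem LocallyZero.isCocycle (hf : LocallyZero A n f) : IsCocycle A n f := hf.d

theorem IsCocycle.d : IsCocycle A n (d f) := by rw [IsCocycle, d_d]; exact LocallyZero.zero

theorem LocallyZero.isCoboundary (hf : LocallyZero A n f) : IsCoboundary A n f :=
  ⟨0, rfl, by simpa using hf⟩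

theorem IsCoboundary.zero : IsCoboundary A n (0 : Cochain X L) := LocallyZero.zero.isCoboundary

theorem IsCoboundary.add (hf : IsCoboundary A n f) (hg : IsCoboundary A n g) :
    IsCoboundary A n (f + g) := by
  obtain ⟨η, hη, hfη⟩ := hf
  obtain ⟨η', hη', hgη'⟩ := hg
  refine ⟨η + η', by simp [hη, hη'], ?_⟩
  rw [d_add, add_sub_add_comm]
  exact hfη.add hgη'

theorem IsCoboundary.smul (a : ℤ) (hf : IsCoboundary A n f) : IsCoboundary A n (a • f) := by
  obtain ⟨η, hη, hfη⟩ := hf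
  refine ⟨a • η, by simp [hη], ?_⟩
  rw [d_zsmul, ← smul_sub]
  exact hfη.smul a

theorem IsCoboundary.neg (hf : IsCoboundary A n f) :
    IsCoboundary A n (-f) := by simpa using hf.smul (-1)

theorem IsCoboundary.sub (hf : IsCoboundary A n f) (hg : IsCoboundary A n g) :
    IsCoboundary A n (f - g) := by
  simpa [sub_eq_add_neg] using hf.add hg.neg

theorem IsCoboundary.sum {ι : Type*} {s : Finset ι} {f : ι → Cochain X L}
    (h : ∀ i ∈ s, IsCoboundary A n (f i)) :
    IsCoboundary A n (∑ i ∈ s, f i) :=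
  Finset.sum_induction f (IsCoboundary A n) (fun _ _ => IsCoboundary.add) IsCoboundary.zero h

theorem IsCoboundary.mono (hf : IsCoboundary B n f) (h : A ⊆ B) : IsCoboundary A n f := by
  obtain ⟨η, hη, hfη⟩ := hf
  exact ⟨η, hη, hfη.mono h⟩

theorem IsCoboundary.pullback {B : Set Y} {f : Cochain Y L} {φ : X → Y} (hf : IsCoboundary B n f)
    (hφ : UniformContinuousOn φ A) (hm : Set.MapsTo φ A B) : IsCoboundary A n (pullback φ f) := by
  obtain ⟨η, hη, hfη⟩ := hf
  refine ⟨Cochain.pullback φ η, hη, ?_⟩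
  rw [d_pullback, ← pullback_sub]
  exact hfη.pullback hφ hm

theorem IsCoboundary.isCocycle (hf : IsCoboundary A n f) : IsCocycle A n f := by
  obtain ⟨η, -, hfη⟩ := hf
  simpa using hfη.isCocycle.add (IsCocycle.d (A := A) (n := n) (f := η))

theorem IsCoboundary.of_two_le (hn : 2 ≤ n) (η : Cochain X L)
    (h : LocallyZero A n (f - Cochain.d η)) : IsCoboundary A n f := by
  classical
  refine ⟨fun l => if l = [] then 0 else η l, by simp, h.congr fun l hl _ => ?_⟩
  simp only [Pi.sub_apply]
  congr 1
  refine d_congr fun l' _ hlen => ?_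
  rw [if_neg]
  rintro rfl
  simp at hlen
  omega

theorem IsCocycle.cup {p q : ℕ} {ψ : Cochain X ℤ} (hf : IsCocycle A (p + 1) f)
    (hψ : IsCocycle A (q + 1) ψ) :
    IsCocycle A (p + q + 1) (cup p f ψ) := by
  have hleft : LocallyZero A (p + q + 2) (Cochain.cup (p + 1) (Cochain.d f) ψ) :=
    LocallyZero.cup_left hf (by omega)
  have hright : LocallyZero A (p + q + 2) (Cochain.cup p f (Cochain.d ψ)) :=
    LocallyZero.cup_right (q := q + 2) hψ
  exact (hleft.add (hright.smul ((-1) ^ p))).congr fun l hl _ => (d_cup p f ψ l (by omega)).symm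

theorem IsCoboundary.cup_left {p q : ℕ} {ψ : Cochain X ℤ} (hf : IsCoboundary A (p + 1) f)
    (hψ : IsCocycle A (q + 1) ψ) :
    IsCoboundary A (p + q + 1) (cup p f ψ) := by
  obtain ⟨η, hη, hfη⟩ := hf
  have hcup : LocallyZero A (p + q + 1) (Cochain.cup p (f - Cochain.d η) ψ) :=
    hfη.cup_left (by omega)
  rw [cup_sub] at hcup
  cases p with
  | zero =>
    refine (hcup.congr fun l hl _ => ?_).isCoboundary
    have : Cochain.cup 0 (Cochain.d η) ψ l = 0 := by
      match l, hl with
      | x :: r, _ => simp [Cochain.cup, d_cons, hη]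
    simp [this]
  | succ p =>
    have hdψ : LocallyZero A (p + (q + 2)) (Cochain.cup p η (Cochain.d ψ)) :=
      LocallyZero.cup_right hψ
    refine IsCoboundary.of_two_le (by omega) (Cochain.cup p η ψ) ?_
    rw [show p + (q + 2) = p + 1 + q + 1 by omega] at hdψ
    refine (hcup.sub (hdψ.smul ((-1) ^ p))).congr fun l hl _ => ?_
    simp only [Pi.sub_apply]
    rw [d_cup p η ψ l (by omega), sub_sub]
    rfl

theorem IsCoboundary.cup_right {p q : ℕ} {ψ : Cochain X ℤ} (hf : IsCocycle A (p + 1) f)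
    (hψ : IsCoboundary A (q + 1) ψ) :
    IsCoboundary A (p + q + 1) (cup p f ψ) := by
  obtain ⟨η, hη, hψη⟩ := hψ
  have hcup : LocallyZero A (p + (q + 1)) (Cochain.cup p f (ψ - Cochain.d η)) := hψη.cup_right
  rw [sub_cup] at hcup
  cases q with
  | zero =>
    refine (hcup.congr fun l hl _ => ?_).isCoboundary
    have : Cochain.cup p f (Cochain.d η) l = 0 := by
      have : ∃ x, l.drop p = [x] := List.length_eq_one_iff.1 (by simp [hl])
      obtain ⟨x, hx⟩ := this
      simp [Cochain.cup, hx, d_cons, hη]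
    simp [this]
  | succ q =>
    have hdf : LocallyZero A (p + (q + 1) + 1) (Cochain.cup (p + 1) (Cochain.d f) η) :=
      LocallyZero.cup_left hf (by omega)
    refine IsCoboundary.of_two_le (by omega) ((-1 : ℤ) ^ p • Cochain.cup p f η) ?_
    refine (hcup.sub (hdf.smul ((-1) ^ p))).congr fun l hl _ => ?_
    have hs : ((-1 : ℤ) ^ p) * (-1) ^ p = 1 := by rw [← mul_pow]; simp
    simp only [Pi.sub_apply, d_zsmul, Pi.smul_apply]
    rw [d_cup p f η l (by omega), smul_add, smul_smul, hs, one_smul]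
    abel

/-- Two sets cover `X` with a Lebesgue number. -/
def IsLebesgueCover (N S : Set X) : Prop :=
  ∃ ε > 0, ∀ l : List X, (∀ x ∈ l, ∀ y ∈ l, dist x y < ε) →
    (∀ x ∈ l, x ∈ N) ∨ ∀ x ∈ l, x ∈ S

theorem IsLebesgueCover.locallyZero {N S : Set X} (h : IsLebesgueCover N S) (hN : LocallyZero N n f)
    (hS : LocallyZero S n f) :
    LocallyZero Set.univ n f := by
  obtain ⟨ε, hε, h⟩ := h
  obtain ⟨ε₁, hε₁, h₁⟩ := hN
  obtain ⟨ε₂, hε₂, h₂⟩ := hS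
  refine ⟨min ε (min ε₁ ε₂), lt_min hε (lt_min hε₁ hε₂), fun l hl _ hclose => ?_⟩
  simp only [lt_min_iff] at hclose
  rcases h l fun x hx y hy => (hclose x hx y hy).1 with hl' | hl'
  · exact h₁ l hl hl' fun x hx y hy => (hclose x hx y hy).2.1
  · exact h₂ l hl hl' fun x hx y hy => (hclose x hx y hy).2.2

theorem IsLebesgueCover.isCoboundary {N S : Set X} (h : IsLebesgueCover N S) {u v : Cochain X L}
    (hN : LocallyZero N (n + 2) (f - Cochain.d u))
    (hS : LocallyZero S (n + 2) (f - Cochain.d v)) (huv : LocallyZero (N ∩ S) (n + 1) (u - v)) :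
    IsCoboundary Set.univ (n + 2) f := by
  classical
  refine IsCoboundary.of_two_le (by omega) (fun l => if ∀ x ∈ l, x ∈ N then u l else v l)
    (h.locallyZero ?_ ?_)
  · refine hN.congr fun l _ hmem => ?_
    simp only [Pi.sub_apply]
    congr 1
    refine d_congr fun l' hclose _ => ?_
    rw [if_pos fun x hx => hmem x (hclose.subset hx)]
  · have : LocallyZero S (n + 1) (v - fun l => if ∀ x ∈ l, x ∈ N then u l else v l) := by
      obtain ⟨ε, hε, h⟩ := huv
      refine ⟨ε, hε, fun l hlen hmem hclose => ?_⟩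
      simp only [Pi.sub_apply]
      split_ifs with hlN
      · have := h l hlen (fun x hx => ⟨hlN x hx, hmem x hx⟩) hclose
        rw [← neg_eq_zero]; simpa using this
      · simp
    have := hS.add this.d
    rw [d_sub] at this
    simpa using this

theorem IsCocycle.exists_isCoboundary_pullback_sub {B : Set Y} {f : Cochain Y L}
    (hf : IsCocycle B n f) :
    ∃ ε > 0, ∀ φ ψ : X → Y, UniformContinuousOn φ A → Set.MapsTo φ A B → Set.MapsTo ψ A B →
      (∀ x ∈ A, dist (ψ x) (φ x) < ε) →
        IsCoboundary A n (Cochain.pullback ψ f - Cochain.pullback φ f) := by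
  obtain ⟨ε, hε, h⟩ := hf
  refine ⟨ε / 3, by positivity, fun φ ψ huc hφ hψ hclose => ?_⟩
  obtain ⟨δ, hδ, hd⟩ := Metric.uniformContinuousOn_iff.1 huc (ε / 3) (by positivity)
  refine ⟨prism φ ψ f, rfl, δ, hδ, fun l hlen hmem hsmall => ?_⟩
  rw [← d_prism, add_sub_cancel_left]
  refine prism_eq_zero fun l' hlen' himage => h l' (by omega) (fun y hy => ?_) fun y hy y' hy' => ?_
  · obtain ⟨x, hx, rfl | rfl⟩ := himage y hy
    · exact hφ (hmem x hx)
    · exact hψ (hmem x hx)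
  · have hnear : ∀ y ∈ l', ∃ x ∈ l, dist y (φ x) < ε / 3 := by
      intro y hy
      obtain ⟨x, hx, rfl | rfl⟩ := himage y hy
      · exact ⟨x, hx, by simpa using hε⟩
      · exact ⟨x, hx, hclose x (hmem x hx)⟩
    obtain ⟨x, hx, hyx⟩ := hnear y hy
    obtain ⟨x', hx', hyx'⟩ := hnear y' hy'
    have hxx' := hd x (hmem x hx) x' (hmem x' hx') (hsmall x hx x' hx')
    calc dist y y' ≤ dist y (φ x) + dist (φ x) (φ x') + dist (φ x') y' := dist_triangle4 _ _ _ _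
      _ < ε / 3 + ε / 3 + ε / 3 := by rw [dist_comm _ y']; gcongr
      _ = ε := by ring

theorem isCoboundary_of_homotopy {B : Set Y} {f : Cochain Y L} (hA : IsCompact A)
    (hf : IsCocycle B n f) (H : ℝ → X → Y)
    (hH : ContinuousOn (Function.uncurry H) (Set.Icc 0 1 ×ˢ A))
    (hm : ∀ s ∈ Set.Icc (0 : ℝ) 1, Set.MapsTo (H s) A B) :
    IsCoboundary A n (pullback (H 1) f - pullback (H 0) f) := by
  have huc := (isCompact_Icc.prod hA).uniformContinuousOn_of_continuous hH
  obtain ⟨ε, hε, hstep⟩ := hf.exists_isCoboundary_pullback_sub (A := A)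
  obtain ⟨δ, hδ, hd⟩ := Metric.uniformContinuousOn_iff.1 huc ε hε
  have hHs : ∀ s ∈ Set.Icc (0 : ℝ) 1, UniformContinuousOn (H s) A := fun s hs =>
    hA.uniformContinuousOn_of_continuous
      (hH.comp (Continuous.prodMk_right s).continuousOn fun x hx => ⟨hs, hx⟩)
  obtain ⟨N, hN⟩ := exists_nat_gt (1 / δ)
  have hN0 : (0 : ℝ) < N := lt_trans (by positivity) hN
  have hpartition : ∀ k : ℕ, k ≤ N →
      IsCoboundary A n (pullback (H (k / N)) f - pullback (H 0) f) := by
    intro k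
    induction k with
    | zero => intro _; simpa using IsCoboundary.zero
    | succ k ih =>
      intro hk
      have hs : (k / N : ℝ) ∈ Set.Icc (0 : ℝ) 1 :=
        ⟨by positivity, by rw [div_le_one hN0]; exact_mod_cast Nat.le_of_succ_le hk⟩
      have ht : ((k + 1 : ℕ) / N : ℝ) ∈ Set.Icc (0 : ℝ) 1 :=
        ⟨by positivity, by rw [div_le_one hN0]; exact_mod_cast hk⟩
      have hst : dist ((k + 1 : ℕ) / N : ℝ) (k / N) < δ := by
        rw [Real.dist_eq, ← sub_div, Nat.cast_succ, add_sub_cancel_left, abs_of_pos (by positivity),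
          div_lt_comm₀ hN0 hδ]
        exact hN
      have hkk := hstep _ _ (hHs _ hs) (hm _ hs) (hm _ ht) fun x hx =>
        hd (_, x) ⟨ht, hx⟩ (_, x) ⟨hs, hx⟩ (by simpa [Prod.dist_eq, hδ] using hst)
      simpa using hkk.add (ih (by omega))
  simpa [div_self hN0.ne'] using hpartition N le_rfl

end Local

section Sphere

/-- The first basis vector of `ℝᵐ⁺¹`; the first coordinate is the height on the sphere. -/
def poleVec (m : ℕ) : EuclideanSpace ℝ (Fin (m + 1)) := EuclideanSpace.single 0 1

theorem poleVec_apply_zero (m : ℕ) : poleVec m 0 = 1 := by simp [poleVec]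

theorem norm_poleVec (m : ℕ) : ‖poleVec m‖ = 1 := by simp [poleVec]

/-- The radial projection to the sphere, with `poleVec` as the value at the origin. -/
def radialProj {m : ℕ} (v : EuclideanSpace ℝ (Fin (m + 1))) : Sph m :=
  if h : v = 0 then ⟨poleVec m, by simp [norm_poleVec]⟩
  else ⟨‖v‖⁻¹ • v, by
    rw [mem_sphere_zero_iff_norm, norm_smul, norm_inv, norm_norm, inv_mul_cancel₀ (by simpa)]⟩

theorem coe_radialProj {m : ℕ} {v : EuclideanSpace ℝ (Fin (m + 1))} (h : v ≠ 0) :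
    (radialProj v : EuclideanSpace ℝ (Fin (m + 1))) = ‖v‖⁻¹ • v := by
  rw [radialProj, dif_neg h]

theorem norm_sph {m : ℕ} (x : Sph m) : ‖(x : EuclideanSpace ℝ (Fin (m + 1)))‖ = 1 :=
  mem_sphere_zero_iff_norm.1 x.2

theorem sph_ne_zero {m : ℕ} (x : Sph m) : (x : EuclideanSpace ℝ (Fin (m + 1))) ≠ 0 := by
  rw [← norm_pos_iff, norm_sph]; exact one_pos

theorem radialProj_of_mem {m : ℕ} (x : Sph m) :
    radialProj (x : EuclideanSpace ℝ (Fin (m + 1))) = x :=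
  Subtype.ext (by rw [coe_radialProj (sph_ne_zero x), norm_sph, inv_one, one_smul])

theorem continuousOn_radialProj (m : ℕ) :
    ContinuousOn (radialProj : EuclideanSpace ℝ (Fin (m + 1)) → Sph m) {v | v ≠ 0} := by
  rw [Topology.IsInducing.subtypeVal.continuousOn_iff]
  have : ContinuousOn (fun v : EuclideanSpace ℝ (Fin (m + 1)) => ‖v‖⁻¹ • v) {v | v ≠ 0} :=
    (continuous_norm.continuousOn.inv₀ fun v hv => norm_ne_zero_iff.2 hv).smul continuousOn_id
  exact this.congr fun v hv => coe_radialProj hv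

/-- The orthogonal projection `ℝᵐ⁺² → ℝᵐ⁺¹` which forgets the height. -/
def equatorialPart {m : ℕ} (v : EuclideanSpace ℝ (Fin (m + 1 + 1))) :
    EuclideanSpace ℝ (Fin (m + 1)) :=
  WithLp.toLp 2 fun i => v i.succ

/-- The inclusion `ℝᵐ⁺¹ → ℝᵐ⁺²` as the vectors of height zero. -/
def consZero {m : ℕ} (v : EuclideanSpace ℝ (Fin (m + 1))) : EuclideanSpace ℝ (Fin (m + 1 + 1)) :=
  WithLp.toLp 2 (Fin.cons 0 fun i => v i)

theorem continuous_equatorialPart (m : ℕ) : Continuous (equatorialPart (m := m)) := by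
  unfold equatorialPart; fun_prop

theorem continuous_consZero (m : ℕ) : Continuous (consZero (m := m)) := by
  unfold consZero
  refine (PiLp.continuous_toLp 2 _).comp (continuous_pi fun i => ?_)
  refine Fin.cases ?_ (fun i => ?_) i
  · simpa using continuous_const
  · simp only [Fin.cons_succ]; fun_prop

theorem equatorialPart_consZero {m : ℕ} (v : EuclideanSpace ℝ (Fin (m + 1))) :
    equatorialPart (consZero v) = v := by
  ext i; simp [equatorialPart, consZero]

theorem consZero_zero {m : ℕ} (v : EuclideanSpace ℝ (Fin (m + 1))) : consZero v 0 = 0 := by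
  simp [consZero]

theorem norm_sq_eq {m : ℕ} (v : EuclideanSpace ℝ (Fin (m + 1 + 1))) :
    ‖v‖ ^ 2 = v 0 ^ 2 + ‖equatorialPart v‖ ^ 2 := by
  simp [EuclideanSpace.norm_sq_eq, Fin.sum_univ_succ, equatorialPart]

theorem norm_consZero {m : ℕ} (v : EuclideanSpace ℝ (Fin (m + 1))) : ‖consZero v‖ = ‖v‖ := by
  have := norm_sq_eq (consZero v)
  rw [consZero_zero, equatorialPart_consZero] at this
  exact (sq_eq_sq₀ (norm_nonneg _) (norm_nonneg _)).1 (by simpa using this)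

theorem consZero_smul {m : ℕ} (a : ℝ) (v : EuclideanSpace ℝ (Fin (m + 1))) :
    consZero (a • v) = a • consZero v := by
  ext i
  refine Fin.cases ?_ (fun i => ?_) i <;> simp [consZero]

/-- The inclusion of the equator. -/
def equatorIncl {m : ℕ} (y : Sph m) : Sph (m + 1) := ⟨consZero y, by simp [norm_consZero]⟩

/-- The retraction of the sphere without its two poles onto its equator. -/
def equatorRetract {m : ℕ} (x : Sph (m + 1)) : Sph m := radialProj (equatorialPart x)

theorem equatorRetract_equatorIncl {m : ℕ} (y : Sph m) : equatorRetract (equatorIncl y) = y := by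
  simp only [equatorRetract, equatorIncl, equatorialPart_consZero, radialProj_of_mem]

/-- The poles of the sphere, for `σ = 1` and `σ = -1`. -/
def pole (m : ℕ) (σ : ℝ) : Sph m := radialProj (σ • poleVec m)

/-- The northern (`σ = 1`) and southern (`σ = -1`) cap, each extending beyond the equator. -/
def cap (m : ℕ) (σ : ℝ) : Set (Sph m) := {x | -(1 / 2) ≤ σ * x.1 0}

/-- The band around the equator in which the two caps overlap. -/
def band (m : ℕ) : Set (Sph m) := cap m 1 ∩ cap m (-1)

theorem isClosed_cap (m : ℕ) (σ : ℝ) : IsClosed (cap m σ) :=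
  isClosed_le continuous_const (by fun_prop)

theorem isClosed_band (m : ℕ) : IsClosed (band m) := (isClosed_cap m 1).inter (isClosed_cap m (-1))

theorem mem_band_iff {m : ℕ} {x : Sph m} : x ∈ band m ↔ |x.1 0| ≤ 1 / 2 := by
  simp only [band, cap, Set.mem_inter_iff, Set.mem_ofPred_eq, abs_le, one_mul, neg_one_mul,
    neg_le_neg_iff]

theorem equatorIncl_mem_band {m : ℕ} (y : Sph m) : equatorIncl y ∈ band (m + 1) := by
  simp [mem_band_iff, equatorIncl, consZero_zero]

theorem abs_sub_height_le_dist {m : ℕ} (x y : Sph m) : |x.1 0 - y.1 0| ≤ dist x y := by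
  rw [Subtype.dist_eq, dist_eq_norm]
  simpa using PiLp.norm_apply_le (x.1 - y.1) 0

theorem pole_apply_zero {k : ℕ} {σ : ℝ} (hσ : |σ| = 1) : (pole k σ).1 0 = σ := by
  have hnorm : ‖σ • poleVec k‖ = 1 := by rw [norm_smul, norm_poleVec, mul_one, Real.norm_eq_abs, hσ]
  rw [pole, coe_radialProj (by rw [← norm_pos_iff, hnorm]; exact one_pos), hnorm]
  simp [poleVec_apply_zero]

theorem pole_mem_cap {k : ℕ} {σ : ℝ} (hσ : |σ| = 1) : pole k σ ∈ cap k σ := by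
  rw [cap, Set.mem_ofPred_eq, pole_apply_zero hσ, ← abs_mul_abs_self, hσ]
  norm_num

theorem three_quarters_le_norm_equatorialPart_sq {m : ℕ} {x : Sph (m + 1)}
    (hx : x ∈ band (m + 1)) : 3 / 4 ≤ ‖equatorialPart x.1‖ ^ 2 := by
  have hpyth := norm_sq_eq x.1
  have hheight := sq_le_sq₀ (abs_nonneg _) (by norm_num) |>.2 (mem_band_iff.1 hx)
  rw [norm_sph] at hpyth
  rw [sq_abs] at hheight
  linarith

theorem equatorialPart_ne_zero {m : ℕ} {x : Sph (m + 1)} (hx : x ∈ band (m + 1)) :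
    equatorialPart x.1 ≠ 0 := by
  intro h
  have := three_quarters_le_norm_equatorialPart_sq hx
  rw [h, norm_zero] at this
  norm_num at this

theorem radialProj_height_mul_norm {k : ℕ} {v : EuclideanSpace ℝ (Fin (k + 1))} (hv : v ≠ 0) :
    (radialProj v).1 0 * ‖v‖ = v 0 := by
  rw [coe_radialProj hv]
  have : ‖v‖ ≠ 0 := norm_ne_zero_iff.2 hv
  simp only [PiLp.smul_apply, smul_eq_mul]
  field_simp

theorem radialProj_mem_cap {k : ℕ} {σ : ℝ} {v : EuclideanSpace ℝ (Fin (k + 1))} (hv : v ≠ 0)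
    (h : -(‖v‖ / 2) ≤ σ * v 0) : radialProj v ∈ cap k σ := by
  rw [← radialProj_height_mul_norm hv] at h
  have hpos := norm_pos_iff.2 hv
  rw [cap, Set.mem_ofPred_eq]
  by_contra! hlow
  nlinarith

theorem segment_to_pole {k : ℕ} {σ : ℝ} (hσ : |σ| = 1) {s : ℝ} (hs : s ∈ Set.Icc (0 : ℝ) 1)
    {x : Sph k} (hx : x ∈ cap k σ) :
    (1 - s) • x.1 + s • σ • poleVec k ≠ 0 ∧
      radialProj ((1 - s) • x.1 + s • σ • poleVec k) ∈ cap k σ := by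
  obtain ⟨hs0, hs1⟩ := hs
  rw [cap, Set.mem_ofPred_eq] at hx
  set v := (1 - s) • x.1 + s • σ • poleVec k with hv
  have hheight : σ * v 0 = (1 - s) * (σ * x.1 0) + s := by
    have hσσ : σ * σ = 1 := by rw [← abs_mul_abs_self, hσ, one_mul]
    simp only [hv, PiLp.add_apply, PiLp.smul_apply, smul_eq_mul, poleVec_apply_zero]
    linear_combination s * hσσ
  have hnorm : (1 - s) - s ≤ ‖v‖ := by
    have h := norm_sub_le v (s • σ • poleVec k)
    rw [hv, add_sub_cancel_right, norm_smul, norm_smul, norm_smul, norm_sph, norm_poleVec,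
      Real.norm_of_nonneg hs0, Real.norm_of_nonneg (sub_nonneg.2 hs1), Real.norm_eq_abs, hσ] at h
    linarith
  have hlow : (1 - s) * -(1 / 2) + s ≤ σ * v 0 := by
    rw [hheight]
    gcongr
  have hne : v ≠ 0 := by
    intro h
    rw [h, norm_zero] at hnorm
    simp only [h, PiLp.zero_apply, mul_zero] at hlow
    linarith
  exact ⟨hne, radialProj_mem_cap hne (by linarith)⟩

theorem equatorialPart_segment {m : ℕ} (s : ℝ) (v : EuclideanSpace ℝ (Fin (m + 1 + 1))) :
    equatorialPart ((1 - s) • v + s • consZero (equatorialPart v)) = equatorialPart v := by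
  ext i
  simp only [equatorialPart, consZero, PiLp.add_apply, PiLp.smul_apply, smul_eq_mul, Fin.cons_succ]
  ring

theorem segment_to_equator {m : ℕ} {s : ℝ} (hs : s ∈ Set.Icc (0 : ℝ) 1) {x : Sph (m + 1)}
    (hx : x ∈ band (m + 1)) :
    (1 - s) • x.1 + s • consZero (equatorialPart x.1) ≠ 0 ∧
      radialProj ((1 - s) • x.1 + s • consZero (equatorialPart x.1)) ∈ band (m + 1) := by
  set v := (1 - s) • x.1 + s • consZero (equatorialPart x.1) with hv
  have hpart : equatorialPart v = equatorialPart x.1 := equatorialPart_segment s x.1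
  have hne : v ≠ 0 := by
    intro h
    refine equatorialPart_ne_zero hx ?_
    rw [← hpart, h]
    ext
    simp [equatorialPart]
  have hheight : |v 0| ≤ 1 / 2 := by
    have : v 0 = (1 - s) * x.1 0 := by simp [hv, consZero_zero]
    rw [this, abs_mul, abs_of_nonneg (sub_nonneg.2 hs.2)]
    nlinarith [mem_band_iff.1 hx, abs_nonneg (x.1 0), hs.1, hs.2]
  have hhalf : |v 0| ≤ ‖v‖ / 2 := by
    have hpyth := norm_sq_eq v
    rw [hpart, ← sq_abs (v 0)] at hpyth
    have := three_quarters_le_norm_equatorialPart_sq hx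
    nlinarith [abs_nonneg (v 0), norm_nonneg v]
  obtain ⟨hlow, hup⟩ := abs_le.1 hhalf
  exact ⟨hne, radialProj_mem_cap hne (by linarith), radialProj_mem_cap hne (by linarith)⟩

theorem isCoboundary_segment {Z Y L : Type*} [PseudoMetricSpace Z] [PseudoMetricSpace Y]
    [AddCommGroup L] {k n : ℕ} {A : Set Z} (hA : IsCompact A) {B : Set (Y × Sph k)}
    {f : Cochain (Y × Sph k) L} (hf : IsCocycle B n f) (α : Z → Y)
    (a b : Z → EuclideanSpace ℝ (Fin (k + 1)))
    (hα : ContinuousOn α A) (ha : ContinuousOn a A) (hb : ContinuousOn b A)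
    (hne : ∀ s ∈ Set.Icc (0 : ℝ) 1, ∀ z ∈ A, (1 - s) • a z + s • b z ≠ 0)
    (hmem : ∀ s ∈ Set.Icc (0 : ℝ) 1, ∀ z ∈ A, (α z, radialProj ((1 - s) • a z + s • b z)) ∈ B) :
    IsCoboundary A n (pullback (fun z => (α z, radialProj (b z))) f -
      pullback (fun z => (α z, radialProj (a z))) f) := by
  have hhomotopy := isCoboundary_of_homotopy hA hf (fun s z =>
    (α z, radialProj ((1 - s) • a z + s • b z))) ?_ hmem
  · simpa using hhomotopy
  · have hsnd : Set.MapsTo Prod.snd (Set.Icc (0 : ℝ) 1 ×ˢ A) A := fun z hz => hz.2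
    refine (hα.comp continuousOn_snd hsnd).prodMk
      ((continuousOn_radialProj k).comp ?_ fun z hz => hne z.1 hz.1 z.2 hz.2)
    exact ((continuousOn_const.sub continuousOn_fst).smul (ha.comp continuousOn_snd hsnd)).add
      (continuousOn_fst.smul (hb.comp continuousOn_snd hsnd))

variable {Y L : Type*} [PseudoMetricSpace Y] [CompactSpace Y] [AddCommGroup L]

theorem isCompact_preimage_snd {k : ℕ} {A : Set (Sph k)} (hA : IsClosed A) :
    IsCompact (Prod.snd ⁻¹' A : Set (Y × Sph k)) :=
  (hA.preimage continuous_snd).isCompact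

theorem isCoboundary_cap {k n : ℕ} {σ : ℝ} (hσ : |σ| = 1) {f : Cochain (Y × Sph k) L}
    (hf : IsCocycle (Prod.snd ⁻¹' cap k σ) n f) :
    IsCoboundary (Prod.snd ⁻¹' cap k σ) n (f - pullback (fun p => (p.1, pole k σ)) f) := by
  have h := (isCoboundary_segment (isCompact_preimage_snd (isClosed_cap k σ)) hf Prod.fst
    (fun p => p.2.1) (fun _ => σ • poleVec k) (by fun_prop) (by fun_prop) (by fun_prop)
    (fun s hs z hz => (segment_to_pole hσ hs hz).1)
    fun s hs z hz => (segment_to_pole hσ hs hz).2).neg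
  rw [neg_sub] at h
  simpa only [pole, radialProj_of_mem, Prod.mk.eta, pullback_id] using h

theorem isCoboundary_pole_sub_pole {k n : ℕ} {f : Cochain (Y × Sph (k + 1)) L}
    (hf : IsCocycle Set.univ n f) :
    IsCoboundary Set.univ n (pullback (fun y : Y => (y, pole (k + 1) (-1))) f -
      pullback (fun y : Y => (y, pole (k + 1) 1)) f) := by
  have hequator : ∀ σ : ℝ, σ ≠ 0 →
      IsCoboundary Set.univ n
        (pullback (fun y : Y => (y, radialProj (EuclideanSpace.single 1 1))) f -
          pullback (fun y : Y => (y, pole (k + 1) σ)) f) := by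
    intro σ hσ
    refine isCoboundary_segment isCompact_univ hf (fun y => y) (fun _ => σ • poleVec (k + 1))
      (fun _ => EuclideanSpace.single 1 1) (by fun_prop) (by fun_prop) (by fun_prop) ?_
      (fun _ _ _ _ => Set.mem_univ _)
    intro s _ _ _ h
    have hs : s = 0 := by simpa [poleVec] using congrArg (· 1) h
    have hsσ : s = 1 ∨ σ = 0 := by simpa [poleVec, hs] using congrArg (· 0) h
    exact hsσ.elim (fun hs1 => zero_ne_one (hs.symm.trans hs1)) hσ
  simpa using (hequator 1 one_ne_zero).sub (hequator (-1) (by norm_num))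

theorem radialProj_consZero_equatorialPart {m : ℕ} {x : Sph (m + 1)} (hx : x ∈ band (m + 1)) :
    radialProj (consZero (equatorialPart x.1)) = equatorIncl (equatorRetract x) := by
  have h := equatorialPart_ne_zero hx
  have h' : consZero (equatorialPart x.1) ≠ 0 := by
    rwa [← norm_ne_zero_iff, norm_consZero, norm_ne_zero_iff]
  refine Subtype.ext ?_
  have hretract : (equatorIncl (equatorRetract x)).1 =
      consZero (radialProj (equatorialPart x.1)).1 := rfl
  rw [hretract, coe_radialProj h, coe_radialProj h', norm_consZero, consZero_smul]

theorem isCoboundary_band {k n : ℕ} {f : Cochain (Y × Sph (k + 1)) L}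
    (hf : IsCocycle (Prod.snd ⁻¹' band (k + 1)) n f) :
    IsCoboundary (Prod.snd ⁻¹' band (k + 1)) n
      (f - pullback (fun p => (p.1, equatorIncl (equatorRetract p.2))) f) := by
  have h := (isCoboundary_segment (isCompact_preimage_snd (isClosed_band (k + 1))) hf Prod.fst
    (fun p : Y × Sph (k + 1) => p.2.1) (fun p => consZero (equatorialPart p.2.1)) (by fun_prop)
    (by fun_prop)
    ((continuous_consZero k).comp ((continuous_equatorialPart k).comp
      (continuous_subtype_val.comp continuous_snd))).continuousOn
    (fun s hs z hz => (segment_to_equator hs (x := z.2) hz).1)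
    fun s hs z hz => (segment_to_equator hs (x := z.2) hz).2).neg
  rw [neg_sub] at h
  obtain ⟨η, hη, hfη⟩ := h
  refine ⟨η, hη, hfη.congr fun l _ hl => ?_⟩
  have hmap : (l.map fun p => (p.1, radialProj (consZero (equatorialPart p.2.1)))) =
      l.map fun p => (p.1, equatorIncl (equatorRetract p.2)) :=
    List.map_congr_left fun p hp => by rw [radialProj_consZero_equatorialPart (hl p hp)]
  simp [pullback, radialProj_of_mem, hmap]

end Sphere

section Kunneth

/-- Extension of a cochain on `A` by zero. -/
def extendZero {X L : Type*} [AddCommGroup L] (A : Set X) (f : Cochain X L) : Cochain X L := by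
  classical exact fun l => if ∀ x ∈ l, x ∈ A then f l else 0

theorem extendZero_of {X L : Type*} [AddCommGroup L] {A : Set X} {f : Cochain X L} {l : List X}
    (h : ∀ x ∈ l, x ∈ A) : extendZero A f l = f l := by
  classical exact if_pos h

theorem extendZero_of_not {X L : Type*} [AddCommGroup L] {A : Set X} {f : Cochain X L} {l : List X}
    (h : ¬ ∀ x ∈ l, x ∈ A) : extendZero A f l = 0 := by
  classical exact if_neg h

open Classical in
/-- The fundamental cocycle of the sphere, constructed by iterated Mayer–Vietoris. -/
def sphereCocycle : (m : ℕ) → Cochain (Sph m) ℤ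
  | 0, l => if ∃ x ∈ l.head?, 0 < x.1 0 then 1 else 0
  | m + 1, l => extendZero (cap (m + 1) 1) (d (extendZero (band (m + 1))
    (pullback equatorRetract (sphereCocycle m)))) l

/-- The cochain on the band defining `sphereCocycle (m + 1)`. -/
def bandCocycle (m : ℕ) : Cochain (Sph (m + 1)) ℤ :=
  extendZero (band (m + 1)) (pullback equatorRetract (sphereCocycle m))

theorem sphereCocycle_succ (m : ℕ) : sphereCocycle (m + 1) = extendZero (cap (m + 1) 1)
    (d (bandCocycle m)) := rfl

theorem uniformContinuousOn_equatorRetract (m : ℕ) :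
    UniformContinuousOn (equatorRetract (m := m)) (band (m + 1)) := by
  refine (isClosed_band (m + 1)).isCompact.uniformContinuousOn_of_continuous ?_
  exact (continuousOn_radialProj m).comp ((continuous_equatorialPart m).comp
    continuous_subtype_val).continuousOn
    fun x hx => equatorialPart_ne_zero hx

theorem IsLebesgueCover.preimage_snd {X Y : Type*} [PseudoMetricSpace X] [PseudoMetricSpace Y]
    {N S : Set X}
    (h : IsLebesgueCover N S) : IsLebesgueCover (X := Y × X) (Prod.snd ⁻¹' N) (Prod.snd ⁻¹' S) := by
  obtain ⟨ε, hε, h⟩ := h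
  refine ⟨ε, hε, fun l hl => ?_⟩
  have := h (l.map Prod.snd) (by
    intro x hx y hy
    obtain ⟨x', hx', rfl⟩ := List.mem_map.1 hx
    obtain ⟨y', hy', rfl⟩ := List.mem_map.1 hy
    exact (le_max_right _ _).trans_lt (hl x' hx' y' hy'))
  rcases this with h | h
  · exact Or.inl fun x hx => h _ (List.mem_map_of_mem hx)
  · exact Or.inr fun x hx => h _ (List.mem_map_of_mem hx)

theorem eq_pole_or_eq_pole (x : Sph 0) : x = pole 0 1 ∨ x = pole 0 (-1) := by
  have h : x.1 0 = 1 ∨ x.1 0 = -1 := by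
    have h := norm_sph x
    rw [EuclideanSpace.norm_eq, Real.sqrt_eq_one, Fin.sum_univ_succ] at h
    simpa using h
  rcases h with h | h
  · refine Or.inl (Subtype.ext ?_)
    ext i
    obtain rfl : i = 0 := Fin.ext (by omega)
    rw [pole_apply_zero (by norm_num)]
    exact h
  · refine Or.inr (Subtype.ext ?_)
    ext i
    obtain rfl : i = 0 := Fin.ext (by omega)
    rw [pole_apply_zero (by norm_num)]
    exact h

theorem sphereCocycle_zero_pole (σ : ℝ) (hσ : |σ| = 1) :
    sphereCocycle 0 [pole 0 σ] = if 0 < σ then 1 else 0 := by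
  simp [sphereCocycle, pole_apply_zero hσ]

theorem eq_of_dist_lt_one {x y : Sph 0} (h : dist x y < 1) : x = y := by
  have hheight := (abs_sub_height_le_dist x y).trans_lt h
  have hnorth := pole_apply_zero (k := 0) (σ := 1) (by norm_num)
  have hsouth := pole_apply_zero (k := 0) (σ := -1) (by norm_num)
  rcases eq_pole_or_eq_pole x with rfl | rfl <;> rcases eq_pole_or_eq_pole y with rfl | rfl
  · rfl
  · rw [hnorth, hsouth] at hheight
    norm_num at hheight
  · rw [hnorth, hsouth] at hheight
    norm_num at hheight
  · rfl

theorem locallyZero_sphereCocycle {m : ℕ} (h : IsCocycle Set.univ (m + 1) (sphereCocycle m)) :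
    LocallyZero (cap (m + 1) (-1)) (m + 2) (sphereCocycle (m + 1)) := by
  obtain ⟨ε, hε, hband⟩ :=
    h.pullback (uniformContinuousOn_equatorRetract m) (Set.mapsTo_univ _ _)
  refine ⟨ε, hε, fun l hl hsouth hclose => ?_⟩
  rw [sphereCocycle_succ]
  by_cases hnorth : ∀ x ∈ l, x ∈ cap (m + 1) 1
  · rw [extendZero_of hnorth, ← hband l hl (fun x hx => ⟨hnorth x hx, hsouth x hx⟩) hclose]
    refine d_congr fun l' hsub _ => extendZero_of fun x hx => ?_
    exact ⟨hnorth x (hsub.subset hx), hsouth x (hsub.subset hx)⟩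
  · exact extendZero_of_not hnorth

theorem isLebesgueCover_cap (m : ℕ) : IsLebesgueCover (cap m 1) (cap m (-1)) := by
  refine ⟨1 / 2, by norm_num, fun l hl => ?_⟩
  by_cases h : ∀ x ∈ l, x ∈ cap m 1
  · exact Or.inl h
  right
  push Not at h
  obtain ⟨x, hx, hx'⟩ := h
  intro y hy
  have hheight := abs_le.1 ((abs_sub_height_le_dist y x).trans_lt (hl y hy x hx)).le
  simp only [cap, Set.mem_ofPred_eq] at hx' ⊢
  linarith

theorem isCocycle_sphereCocycle (m : ℕ) : IsCocycle Set.univ (m + 1) (sphereCocycle m) := by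
  induction m with
  | zero =>
    refine ⟨1, one_pos, fun l hl _ h => ?_⟩
    match l, hl with
    | [x, y], _ =>
      have := eq_of_dist_lt_one (h x (by simp) y (by simp))
      subst this
      simp [d_cons, sphereCocycle]
  | succ m ih =>
    refine (isLebesgueCover_cap (m + 1)).locallyZero ?_ (locallyZero_sphereCocycle ih).isCocycle
    refine LocallyZero.of_eq fun l _ hl => ?_
    have : d (sphereCocycle (m + 1)) l = d (d (bandCocycle m)) l :=
      d_congr fun l' hsub _ => extendZero_of fun x hx => hl x (hsub.subset hx)
    rw [this, d_d]
    rfl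

theorem pullback_equatorIncl_bandCocycle (m : ℕ) :
    pullback equatorIncl (bandCocycle m) = sphereCocycle m := by
  funext l
  have h : ∀ x ∈ l.map equatorIncl, x ∈ band (m + 1) := by
    intro x hx
    obtain ⟨y, -, rfl⟩ := List.mem_map.1 hx
    exact equatorIncl_mem_band y
  simp only [pullback, bandCocycle]
  rw [extendZero_of h]
  simp [pullback, List.map_map, Function.comp_def, equatorRetract_equatorIncl]

theorem cup_bandCocycle_eq {Y L : Type*} [AddCommGroup L] {m p : ℕ} (b : Cochain Y L)
    {l : List (Y × Sph (m + 1))} (hl : ∀ x ∈ l, x.2 ∈ band (m + 1)) :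
    cup p (pullback Prod.fst b) (pullback Prod.snd (bandCocycle m)) l =
      cup p (pullback Prod.fst b)
        (pullback (fun x => equatorRetract x.2) (sphereCocycle m)) l := by
  have hdrop : ∀ x ∈ (l.drop p).map Prod.snd, x ∈ band (m + 1) := by
    intro x hx
    obtain ⟨y, hy, rfl⟩ := List.mem_map.1 hx
    exact hl y (List.drop_subset p l hy)
  simp only [cup, pullback, bandCocycle]
  rw [extendZero_of hdrop]
  simp only [pullback, List.map_map, Function.comp_def]

section Product

variable {Y Z : Type*} [PseudoMetricSpace Y] [PseudoMetricSpace Z]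

theorem uniformContinuousOn_prodMk_const (z : Z) (A : Set Y) :
    UniformContinuousOn (fun y : Y => (y, z)) A :=
  (uniformContinuous_id.prodMk uniformContinuous_const).uniformContinuousOn

theorem uniformContinuousOn_fst (A : Set (Y × Z)) :
    UniformContinuousOn (Prod.fst : Y × Z → Y) A :=
  uniformContinuous_fst.uniformContinuousOn

theorem uniformContinuousOn_snd (A : Set (Y × Z)) :
    UniformContinuousOn (Prod.snd : Y × Z → Z) A :=
  uniformContinuous_snd.uniformContinuousOn

end Product

variable {Y L : Type*} [PseudoMetricSpace Y] [AddCommGroup L]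

theorem neg_one_pow_mul_self (p : ℕ) : (-1 : ℤ) ^ p * (-1) ^ p = 1 := by
  rw [← mul_pow]; simp

theorem locallyZero_cup_north {m p : ℕ} {b : Cochain Y L} (hb : IsCocycle Set.univ (p + 1) b) :
    LocallyZero (Prod.snd ⁻¹' cap (m + 1) 1) (p + m + 2)
      (cup p (pullback Prod.fst b) (pullback Prod.snd (sphereCocycle (m + 1)))
      - d ((-1 : ℤ) ^ p • cup p (pullback Prod.fst b) (pullback Prod.snd (bandCocycle m)))) := by
  have hdb : LocallyZero (Prod.snd ⁻¹' cap (m + 1) 1) (p + m + 2)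
      (cup (p + 1) (d (pullback Prod.fst b)) (pullback Prod.snd (bandCocycle m))) :=
    LocallyZero.cup_left (hb.pullback (uniformContinuousOn_fst _) (Set.mapsTo_univ _ _)) (by omega)
  refine (hdb.smul (-(-1) ^ p)).congr fun l hl hmem => ?_
  have hnorth : cup p (pullback Prod.fst b) (pullback Prod.snd (sphereCocycle (m + 1))) l =
      cup p (pullback Prod.fst b) (d (pullback Prod.snd (bandCocycle m))) l := by
    simp only [cup]
    congr 1
    rw [d_pullback, pullback, pullback, sphereCocycle_succ]
    refine extendZero_of fun x hx => ?_
    obtain ⟨y, hy, rfl⟩ := List.mem_map.1 hx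
    exact hmem y (List.drop_subset p l hy)
  simp only [Pi.sub_apply, d_zsmul, Pi.smul_apply]
  rw [d_cup p _ _ l (by omega), hnorth, smul_add, smul_smul, neg_one_pow_mul_self]
  module

theorem locallyZero_cup_south (m p : ℕ) (b : Cochain Y L) :
    LocallyZero (Prod.snd ⁻¹' cap (m + 1) (-1)) (p + m + 2)
      (cup p (pullback Prod.fst b) (pullback Prod.snd (sphereCocycle (m + 1)))) :=
  LocallyZero.cup_right (q := m + 2) ((locallyZero_sphereCocycle
    (isCocycle_sphereCocycle m)).pullback (uniformContinuousOn_snd _) fun _ hx => hx)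

theorem isCoboundary_left_of_kunneth {m p : ℕ} {a b : Cochain Y L}
    (h : IsCoboundary Set.univ (p + m + 1)
      (pullback Prod.fst a + cup p (pullback Prod.fst b) (pullback Prod.snd (sphereCocycle m)))) :
    IsCoboundary Set.univ (p + m + 1) a := by
  have hsouth := h.pullback (uniformContinuousOn_prodMk_const (pole m (-1)) Set.univ)
    (Set.mapsTo_univ _ _)
  rw [pullback_add, pullback_cup, pullback_pullback, pullback_pullback, pullback_pullback,
    pullback_id, pullback_id] at hsouth
  have hcup : LocallyZero Set.univ (p + (m + 1))
      (cup p b (pullback (fun _ : Y => pole m (-1)) (sphereCocycle m))) := by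
    refine LocallyZero.cup_right ?_
    cases m with
    | zero =>
      refine LocallyZero.of_eq fun l hl _ => ?_
      match l, hl with
      | [y], _ =>
        simp only [pullback, List.map_cons, List.map_nil]
        rw [sphereCocycle_zero_pole _ (by norm_num), if_neg (by norm_num)]
    | succ m =>
      exact (locallyZero_sphereCocycle (isCocycle_sphereCocycle
        m)).pullback uniformContinuous_const.uniformContinuousOn
        fun _ _ => pole_mem_cap (by norm_num)
  simpa using hsouth.sub hcup.isCoboundary

theorem isCoboundary_right_of_kunneth_zero {p : ℕ} {a b : Cochain Y L}
    (h : IsCoboundary Set.univ (p + 1)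
      (pullback Prod.fst a + cup p (pullback Prod.fst b) (pullback Prod.snd (sphereCocycle 0)))) :
    IsCoboundary Set.univ (p + 1) b := by
  have hnorth := h.pullback (uniformContinuousOn_prodMk_const (pole 0 1) Set.univ)
    (Set.mapsTo_univ _ _)
  rw [pullback_add, pullback_cup, pullback_pullback, pullback_pullback, pullback_pullback,
    pullback_id, pullback_id] at hnorth
  have hcup := hnorth.sub (isCoboundary_left_of_kunneth h)
  rw [add_sub_cancel_left] at hcup
  obtain ⟨η, hη, hcup⟩ := hcup
  refine ⟨η, hη, hcup.congr fun l hl _ => ?_⟩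
  simp only [Pi.sub_apply]
  congr 1
  obtain ⟨x, hx⟩ : ∃ x, l.drop p = [x] := List.length_eq_one_iff.1 (by simp [hl])
  simp only [cup, hx, pullback, List.map_cons, List.map_nil]
  rw [sphereCocycle_zero_pole _ (by norm_num), if_pos (by norm_num), one_smul,
    List.take_of_length_le hl.le]

theorem exists_kunneth_zero {p : ℕ} {f : Cochain (Y × Sph 0) L}
    (hf : IsCocycle Set.univ (p + 1) f) :
    ∃ a b : Cochain Y L, IsCocycle Set.univ (p + 1) a ∧ IsCocycle Set.univ (p + 1) b ∧
      IsCoboundary Set.univ (p + 1) (f - pullback Prod.fst a -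
        cup p (pullback Prod.fst b) (pullback Prod.snd (sphereCocycle 0))) := by
  have hpole : ∀ σ : ℝ, IsCocycle Set.univ (p + 1)
      (pullback (fun y : Y => (y, pole 0 σ)) f) :=
    fun σ => hf.pullback (uniformContinuousOn_prodMk_const _ _) (Set.mapsTo_univ _ _)
  refine ⟨_, _, hpole (-1), (hpole 1).sub (hpole (-1)),
    LocallyZero.isCoboundary ⟨1, one_pos, fun l hl _ hclose => ?_⟩⟩
  obtain ⟨x, hx⟩ : ∃ x, l.drop p = [x] := List.length_eq_one_iff.1 (by simp [hl])
  have hxl : x ∈ l := List.drop_subset p l (by simp [hx])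
  have hl' : l = l.map fun q => (q.1, x.2) := by
    conv_lhs => rw [← List.map_id l]
    refine List.map_congr_left fun q hq => Prod.ext rfl ?_
    exact eq_of_dist_lt_one ((le_max_right _ _).trans_lt (hclose q hq x hxl))
  have ht : l.take (p + 1) = l := List.take_of_length_le hl.le
  simp only [Pi.sub_apply, cup, hx, pullback, List.map_cons, List.map_nil, ht, List.map_map]
  conv in f l => rw [hl']
  rcases eq_pole_or_eq_pole x.2 with hx2 | hx2
  · rw [hx2, sphereCocycle_zero_pole _ (by norm_num), if_pos (by norm_num)]
    simp [Function.comp_def]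
  · rw [hx2, sphereCocycle_zero_pole _ (by norm_num), if_neg (by norm_num)]
    simp [Function.comp_def]

variable [CompactSpace Y]

theorem uniformContinuousOn_prodMap_equatorIncl (m : ℕ) :
    UniformContinuousOn (fun p : Y × Sph m => (p.1, equatorIncl p.2)) Set.univ := by
  have : Continuous (fun p : Y × Sph m => (p.1, equatorIncl p.2)) := by
    refine continuous_fst.prodMk (Continuous.subtype_mk ?_ _)
    exact (continuous_consZero m).comp (continuous_subtype_val.comp continuous_snd)
  exact (CompactSpace.uniformContinuous_of_continuous this).uniformContinuousOn

theorem uniformContinuousOn_prodMap_equatorRetract (m : ℕ) :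
    UniformContinuousOn (fun p : Y × Sph (m + 1) => (p.1, equatorRetract p.2))
      (Prod.snd ⁻¹' band (m + 1)) := by
  refine (isCompact_preimage_snd (isClosed_band (m + 1))).uniformContinuousOn_of_continuous ?_
  exact continuousOn_fst.prodMk ((uniformContinuousOn_equatorRetract m).continuousOn.comp
    continuousOn_snd fun p hp => hp)

theorem exists_isCoboundary_cup_equator {m p : ℕ} {b : Cochain Y L}
    (hb : IsCocycle Set.univ (p + 1) b)
    (h : IsCoboundary Set.univ (p + m + 2)
      (cup p (pullback Prod.fst b) (pullback Prod.snd (sphereCocycle (m + 1))))) :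
    ∃ a : Cochain Y L, IsCoboundary Set.univ (p + m + 1)
      (pullback Prod.fst a +
        cup p (pullback Prod.fst b) (pullback Prod.snd (sphereCocycle m))) := by
  obtain ⟨η, -, hη⟩ := h
  set S : Set (Y × Sph (m + 1)) := Prod.snd ⁻¹' cap (m + 1) (-1)
  set N : Set (Y × Sph (m + 1)) := Prod.snd ⁻¹' cap (m + 1) 1
  set w := (-1 : ℤ) ^ p • cup p (pullback Prod.fst b) (pullback Prod.snd (bandCocycle m)) - η
    with hw
  have hηS : IsCocycle S (p + m + 1) η := by
    have := (locallyZero_cup_south m p b).sub (hη.mono (Set.subset_univ S))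
    rwa [sub_sub_cancel] at this
  have hwN : IsCocycle N (p + m + 1) w := by
    have := (hη.mono (Set.subset_univ N)).sub (locallyZero_cup_north hb)
    rw [IsCocycle, hw, d_sub]
    rwa [sub_sub_sub_cancel_left] at this
  have hwpole := (isCoboundary_cap (by norm_num) hwN).mono (A := N ∩ S) Set.inter_subset_left
  have hηpole := (isCoboundary_cap (by norm_num) hηS).mono (A := N ∩ S) Set.inter_subset_right
  have hequator := ((hwpole.add hηpole).pullback (uniformContinuousOn_prodMap_equatorIncl m)
    (B := N ∩ S) fun x _ => equatorIncl_mem_band x.2).smul ((-1) ^ p)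
  have hsum : pullback (fun p : Y × Sph m => (p.1, equatorIncl p.2)) (w + η) =
      (-1 : ℤ) ^ p • cup p (pullback Prod.fst b) (pullback Prod.snd (sphereCocycle m)) := by
    rw [hw, sub_add_cancel, pullback_smul, pullback_cup, pullback_pullback, pullback_pullback,
      ← pullback_equatorIncl_bandCocycle m, pullback_pullback]
  rw [sub_add_sub_comm, pullback_sub, hsum, smul_sub, smul_smul, neg_one_pow_mul_self, one_smul,
    pullback_add] at hequator
  refine ⟨-((-1 : ℤ) ^ p • (pullback (fun y => (y, pole (m + 1) 1)) w +
    pullback (fun y => (y, pole (m + 1) (-1))) η)), ?_⟩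
  rw [pullback_neg, pullback_smul, pullback_add, neg_add_eq_sub]
  simpa only [pullback_pullback] using hequator

theorem isCoboundary_right_of_kunneth (m p : ℕ) {a b : Cochain Y L}
    (hb : IsCocycle Set.univ (p + 1) b)
    (h : IsCoboundary Set.univ (p + m + 1)
      (pullback Prod.fst a + cup p (pullback Prod.fst b) (pullback Prod.snd (sphereCocycle m)))) :
    IsCoboundary Set.univ (p + 1) b := by
  induction m generalizing a b with
  | zero => exact isCoboundary_right_of_kunneth_zero h
  | succ m ih =>
    have hcup := h.sub ((isCoboundary_left_of_kunneth h).pullback (uniformContinuousOn_fst _)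
      (Set.mapsTo_univ _ _))
    rw [add_sub_cancel_left] at hcup
    obtain ⟨a', ha'⟩ := exists_isCoboundary_cup_equator hb hcup
    exact ih hb ha'

theorem exists_isCoboundary_cap {m n : ℕ} {f : Cochain (Y × Sph (m + 1)) L}
    (hf : IsCocycle Set.univ n f) :
    ∃ a : Cochain Y L, IsCocycle Set.univ n a ∧
      IsCoboundary (Prod.snd ⁻¹' cap (m + 1) 1) n (f - pullback Prod.fst a) ∧
      IsCoboundary (Prod.snd ⁻¹' cap (m + 1) (-1)) n (f - pullback Prod.fst a) := by
  refine ⟨_, hf.pullback (uniformContinuousOn_prodMk_const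
    (pole (m + 1) 1) Set.univ) (Set.mapsTo_univ _ _),
    ?_, ?_⟩
  · rw [pullback_pullback]
    exact isCoboundary_cap (by norm_num) (hf.mono (Set.subset_univ _))
  · have hsouth := isCoboundary_cap (σ := -1) (by norm_num) (hf.mono (Set.subset_univ _))
    have hpoles := (isCoboundary_pole_sub_pole hf).pullback
      (uniformContinuousOn_fst (Prod.snd ⁻¹' cap (m + 1) (-1)))
      (Set.mapsTo_univ _ _)
    rw [pullback_sub, pullback_pullback, pullback_pullback] at hpoles
    rw [pullback_pullback]
    simpa using hsouth.add hpoles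

theorem exists_isCocycle_band {m n : ℕ} {f : Cochain (Y × Sph (m + 1)) L}
    (hf : IsCocycle Set.univ (n + 2) f) :
    ∃ (a : Cochain Y L) (u v : Cochain (Y × Sph (m + 1)) L) (w : Cochain (Y × Sph m) L),
      IsCocycle Set.univ (n + 2) a ∧
      LocallyZero (Prod.snd ⁻¹' cap (m + 1) 1) (n + 2) (f - pullback Prod.fst a - d u) ∧
      LocallyZero (Prod.snd ⁻¹' cap (m + 1) (-1)) (n + 2) (f - pullback Prod.fst a - d v) ∧
      IsCocycle Set.univ (n + 1) w ∧
      IsCoboundary (Prod.snd ⁻¹' band (m + 1)) (n + 1)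
        (u - v - pullback (fun p => (p.1, equatorRetract p.2)) w) := by
  obtain ⟨a, ha, ⟨u, -, hu⟩, v, -, hv⟩ := exists_isCoboundary_cap hf
  have huv : IsCocycle (Prod.snd ⁻¹' band (m + 1)) (n + 1) (u - v) := by
    have := (hv.mono (A := Prod.snd ⁻¹' band (m + 1))
      (Set.preimage_mono Set.inter_subset_right)).sub
      (hu.mono (Set.preimage_mono Set.inter_subset_left))
    rwa [sub_sub_sub_cancel_left, ← d_sub] at this
  refine ⟨a, u, v, _, ha, hu, hv, huv.pullback
    (uniformContinuousOn_prodMap_equatorIncl m) fun x _ =>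
    equatorIncl_mem_band x.2, ?_⟩
  rw [pullback_pullback]
  exact isCoboundary_band huv

theorem exists_kunneth_of_lt {m q : ℕ} (hq : q < m) {f : Cochain (Y × Sph m) L}
    (hf : IsCocycle Set.univ (q + 1) f) :
    ∃ a : Cochain Y L, IsCocycle Set.univ (q + 1) a ∧
      IsCoboundary Set.univ (q + 1) (f - pullback Prod.fst a) := by
  induction m generalizing q with
  | zero => omega
  | succ m ih =>
    cases q with
    | zero =>
      obtain ⟨a, ha, ⟨u, hu0, hu⟩, v, hv0, hv⟩ := exists_isCoboundary_cap hf
      have hdrop : ∀ (A : Set (Y × Sph (m + 1))) (u : Cochain (Y × Sph (m + 1)) L), u [] = 0 →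
          LocallyZero A 1 (f - pullback Prod.fst a - d u) →
            LocallyZero A 1 (f - pullback Prod.fst a) := by
        intro A u hu0 hu
        refine hu.congr fun l hl _ => ?_
        match l, hl with
        | [x], _ => simp [d_cons, hu0]
      exact ⟨a, ha, ((isLebesgueCover_cap (m + 1)).preimage_snd.locallyZero (hdrop _ u hu0 hu)
        (hdrop _ v hv0 hv)).isCoboundary⟩
    | succ q =>
      obtain ⟨a, u, v, w, ha, hu, hv, hw, huv⟩ := exists_isCocycle_band hf
      obtain ⟨a₁, ha₁, hw'⟩ := ih (by omega) hw
      have hglue := huv.add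
        (hw'.pullback (uniformContinuousOn_prodMap_equatorRetract m) (Set.mapsTo_univ _ _))
      rw [pullback_sub, pullback_pullback, sub_add_sub_cancel] at hglue
      obtain ⟨η, -, hglue⟩ := hglue
      refine ⟨a, ha, (isLebesgueCover_cap (m + 1)).preimage_snd.isCoboundary
        (u := u - pullback Prod.fst a₁ - d η) (v := v) ?_ hv ?_⟩
      · have := hu.add (ha₁.pullback (uniformContinuousOn_fst _) (Set.mapsTo_univ _ _))
        rw [d_sub, d_sub, d_d]
        convert this using 1
        abel
      · rw [show u - pullback Prod.fst a₁ - d η - v = u - v - pullback Prod.fst a₁ - d η by abel]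
        exact hglue

theorem exists_kunneth (m p : ℕ) {f : Cochain (Y × Sph m) L}
    (hf : IsCocycle Set.univ (p + m + 1) f) :
    ∃ a b : Cochain Y L, IsCocycle Set.univ (p + m + 1) a ∧ IsCocycle Set.univ (p + 1) b ∧
      IsCoboundary Set.univ (p + m + 1) (f - pullback Prod.fst a -
        cup p (pullback Prod.fst b) (pullback Prod.snd (sphereCocycle m))) := by
  induction m with
  | zero => exact exists_kunneth_zero hf
  | succ m ih =>
    obtain ⟨a, u, v, w, ha, hu, hv, hw, huv⟩ := exists_isCocycle_band (n := p + m) hf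
    obtain ⟨a₁, b₁, ha₁, hb₁, hw'⟩ := ih hw
    refine ⟨a, (-1 : ℤ) ^ p • b₁, ha, hb₁.smul _, ?_⟩
    have hglue := huv.add
      (hw'.pullback (uniformContinuousOn_prodMap_equatorRetract m) (Set.mapsTo_univ _ _))
    rw [pullback_sub, pullback_sub, pullback_pullback, pullback_cup, pullback_pullback,
      pullback_pullback] at hglue
    obtain ⟨η, -, hglue⟩ := hglue
    rw [pullback_smul, cup_smul]
    refine (isLebesgueCover_cap (m + 1)).preimage_snd.isCoboundary (n := p + m)
      (u := u - pullback Prod.fst a₁ - cup p (pullback Prod.fst b₁)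
        (pullback Prod.snd (bandCocycle m)) - d η) (v := v) ?_ ?_ ?_
    · have := (hu.add (ha₁.pullback (uniformContinuousOn_fst _) (Set.mapsTo_univ _ _))).sub
        ((locallyZero_cup_north hb₁).smul ((-1) ^ p))
      rw [d_zsmul, smul_sub, smul_smul, neg_one_pow_mul_self, one_smul] at this
      rw [d_sub, d_sub, d_sub, d_d]
      convert this using 1
      abel
    · have := hv.sub ((locallyZero_cup_south m p b₁).smul ((-1) ^ p))
      convert this using 1
      abel
    · refine hglue.congr fun l _ hl => ?_
      simp only [Pi.sub_apply, Pi.add_apply, cup_bandCocycle_eq b₁ hl]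
      abel

end Kunneth

section CompactPullback

variable {X Y L : Type*} [PseudoMetricSpace X] [CompactSpace X] [PseudoMetricSpace Y]
  [AddCommGroup L] {n : ℕ} {f : Cochain Y L} {φ : X → Y}

theorem LocallyZero.pullback_of_continuous (hf : LocallyZero Set.univ n f) (hφ : Continuous φ) :
    LocallyZero Set.univ n (Cochain.pullback φ f) :=
  hf.pullback (CompactSpace.uniformContinuous_of_continuous hφ).uniformContinuousOn
    (Set.mapsTo_univ _ _)

theorem IsCocycle.pullback_of_continuous (hf : IsCocycle Set.univ n f) (hφ : Continuous φ) :
    IsCocycle Set.univ n (Cochain.pullback φ f) :=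
  hf.pullback (CompactSpace.uniformContinuous_of_continuous hφ).uniformContinuousOn
    (Set.mapsTo_univ _ _)

theorem IsCoboundary.pullback_of_continuous (hf : IsCoboundary Set.univ n f) (hφ : Continuous φ) :
    IsCoboundary Set.univ n (Cochain.pullback φ f) :=
  hf.pullback (CompactSpace.uniformContinuous_of_continuous hφ).uniformContinuousOn
    (Set.mapsTo_univ _ _)

end CompactPullback

section Torus

/-- The space `(S^m)^t` of the theorem, with the product topology and the sup metric. -/
abbrev SphereProd (m t : ℕ) : Type := Fin t → Sph m

/-- The pullback of the fundamental cocycle of `S^m` along the `i`-th projection. -/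
def coordCocycle {m t : ℕ} (i : Fin t) : Cochain (SphereProd m t) ℤ :=
  pullback (fun x => x i) (sphereCocycle m)

theorem isCocycle_coordCocycle {m t : ℕ} (i : Fin t) :
    IsCocycle Set.univ (m + 1) (coordCocycle (m := m) i) :=
  (isCocycle_sphereCocycle m).pullback_of_continuous (continuous_apply i)

variable {m t : ℕ} {L : Type*}

/-- The homeomorphism `(S^m)^(t+1) ≅ (S^m)^t × S^m` splitting off factor `0`, along which the
Künneth decomposition is transported. -/
def splitHead (x : SphereProd m (t + 1)) : SphereProd m t × Sph m := (Fin.tail x, x 0)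

/-- The inverse of `splitHead`. -/
def consHead (p : SphereProd m t × Sph m) : SphereProd m (t + 1) := Fin.cons p.2 p.1

theorem continuous_tail : Continuous (Fin.tail : SphereProd m (t + 1) → SphereProd m t) :=
  continuous_pi fun i => continuous_apply i.succ

theorem continuous_splitHead : Continuous (splitHead (m := m) (t := t)) :=
  continuous_tail.prodMk (continuous_apply 0)

theorem continuous_consHead : Continuous (consHead (m := m) (t := t)) := by
  refine continuous_pi fun i => ?_
  refine Fin.cases ?_ (fun i => ?_) i
  · exact continuous_snd
  · exact (continuous_apply i).comp continuous_fst

theorem consHead_splitHead (x : SphereProd m (t + 1)) : consHead (splitHead x) = x :=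
  Fin.cons_self_tail x

theorem pullback_splitHead_consHead (f : Cochain (SphereProd m (t + 1)) L) :
    pullback splitHead (pullback consHead f) = f := by
  rw [pullback_pullback]
  simp only [consHead_splitHead, pullback_id]

theorem pullback_consHead_tail (a : Cochain (SphereProd m t) L) :
    pullback consHead (pullback (Fin.tail : SphereProd m (t + 1) → SphereProd m t) a) =
      pullback Prod.fst a := by
  rw [pullback_pullback]
  rfl

theorem pullback_consHead_coordCocycle :
    pullback consHead (coordCocycle (m := m) (0 : Fin (t + 1))) =
      pullback Prod.snd (sphereCocycle m) := by
  rw [coordCocycle, pullback_pullback]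
  rfl

variable [AddCommGroup L]

theorem isCoboundary_of_consHead {n : ℕ} {f : Cochain (SphereProd m (t + 1)) L}
    (h : IsCoboundary Set.univ n (pullback consHead f)) :
    IsCoboundary Set.univ n f := by
  rw [← pullback_splitHead_consHead f]
  exact h.pullback_of_continuous continuous_splitHead

theorem exists_sphereProd_kunneth {p : ℕ} {f : Cochain (SphereProd m (t + 1)) L}
    (hf : IsCocycle Set.univ (p + m + 1) f) :
    ∃ a b : Cochain (SphereProd m t) L, IsCocycle Set.univ (p + m + 1) a ∧
      IsCocycle Set.univ (p + 1) b ∧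
      IsCoboundary Set.univ (p + m + 1) (f - pullback Fin.tail a -
        cup p (pullback Fin.tail b) (coordCocycle 0)) := by
  obtain ⟨a, b, ha, hb, h⟩ := exists_kunneth m p (hf.pullback_of_continuous continuous_consHead)
  refine ⟨a, b, ha, hb, isCoboundary_of_consHead ?_⟩
  rwa [pullback_sub, pullback_sub, pullback_cup, pullback_consHead_tail, pullback_consHead_tail,
    pullback_consHead_coordCocycle]

theorem exists_isCoboundary_sub_tail_of_lt {q : ℕ} (hq : q < m)
    {f : Cochain (SphereProd m (t + 1)) L} (hf : IsCocycle Set.univ (q + 1) f) :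
    ∃ a : Cochain (SphereProd m t) L, IsCocycle Set.univ (q + 1) a ∧
      IsCoboundary Set.univ (q + 1) (f - pullback Fin.tail a) := by
  obtain ⟨a, ha, h⟩ := exists_kunneth_of_lt hq (hf.pullback_of_continuous continuous_consHead)
  refine ⟨a, ha, isCoboundary_of_consHead ?_⟩
  rwa [pullback_sub, pullback_consHead_tail]

theorem isCoboundary_of_sphereProd_kunneth {p : ℕ} {a b : Cochain (SphereProd m t) L}
    (hb : IsCocycle Set.univ (p + 1) b)
    (h : IsCoboundary Set.univ (p + m + 1)
      (pullback (Fin.tail : SphereProd m (t + 1) → SphereProd m t) a +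
        cup p (pullback Fin.tail b) (coordCocycle 0))) :
    IsCoboundary Set.univ (p + m + 1) a ∧ IsCoboundary Set.univ (p + 1) b := by
  have h' := h.pullback_of_continuous continuous_consHead
  rw [pullback_add, pullback_cup, pullback_consHead_tail, pullback_consHead_tail,
    pullback_consHead_coordCocycle] at h'
  exact ⟨isCoboundary_left_of_kunneth h', isCoboundary_right_of_kunneth m p hb h'⟩

theorem isCoboundary_of_subsingleton {X : Type*} [PseudoMetricSpace X] [Subsingleton X] (x : X)
    {n : ℕ} {f : Cochain X L} (hf : IsCocycle Set.univ (n + 2) f) :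
    IsCoboundary Set.univ (n + 2) f := by
  obtain ⟨ε, hε, h⟩ := hf
  refine IsCoboundary.of_two_le (by omega) (fun l => f (x :: l))
    (LocallyZero.of_eq fun l hl _ => ?_)
  rw [Pi.sub_apply, d_cone f x l, sub_self]
  refine h _ (by simp [hl]) (by simp) fun y _ z _ => ?_
  rw [Subsingleton.elim y z, dist_self]
  exact hε

theorem locallyZero_of_isCoboundary_one {X : Type*} [PseudoMetricSpace X] {A : Set X}
    {f : Cochain X L} (h : IsCoboundary A 1 f) : LocallyZero A 1 f := by
  obtain ⟨η, hη, h⟩ := h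
  refine h.congr fun l hl _ => ?_
  match l, hl with
  | [x], _ => simp [d_cons, hη]

theorem exists_locallyZero_sub_const (hm : 0 < m) {f : Cochain (SphereProd m t) L}
    (hf : IsCocycle Set.univ 1 f) :
    ∃ c : L, LocallyZero Set.univ 1 (f - fun _ => c) := by
  induction t with
  | zero =>
    refine ⟨f [Fin.elim0], LocallyZero.of_eq fun l hl _ => ?_⟩
    match l, hl with
    | [x], _ => rw [Subsingleton.elim x Fin.elim0]; simp
  | succ t ih =>
    obtain ⟨a, ha, h⟩ := exists_isCoboundary_sub_tail_of_lt (q := 0) hm hf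
    obtain ⟨c, hc⟩ := ih ha
    refine ⟨c, locallyZero_of_isCoboundary_one ?_⟩
    have hfc := h.add (hc.isCoboundary.pullback_of_continuous continuous_tail)
    rwa [pullback_sub, sub_add_sub_cancel] at hfc

theorem isCoboundary_of_lt {q : ℕ} (hq0 : 0 < q) (hq : q < m) {f : Cochain (SphereProd m t) L}
    (hf : IsCocycle Set.univ (q + 1) f) : IsCoboundary Set.univ (q + 1) f := by
  obtain ⟨q, rfl⟩ := Nat.exists_eq_add_of_le' hq0
  induction t with
  | zero => exact isCoboundary_of_subsingleton Fin.elim0 hf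
  | succ t ih =>
    obtain ⟨a, ha, h⟩ := exists_isCoboundary_sub_tail_of_lt hq hf
    simpa using h.add ((ih ha).pullback_of_continuous continuous_tail)

theorem isCoboundary_cup_tail {a : Cochain (SphereProd m t) L} {p : ℕ}
    (ha : IsCoboundary Set.univ (p + 1) a) :
    IsCoboundary Set.univ (p + m + 1)
      (cup p (pullback (Fin.tail : SphereProd m (t + 1) → SphereProd m t) a) (coordCocycle 0)) :=
  IsCoboundary.cup_left (ha.pullback_of_continuous continuous_tail) (isCocycle_coordCocycle 0)

theorem isCoboundary_of_mul_lt {q : ℕ} (hq : m * t < q) {f : Cochain (SphereProd m t) L}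
    (hf : IsCocycle Set.univ (q + 1) f) : IsCoboundary Set.univ (q + 1) f := by
  induction t generalizing q with
  | zero =>
    obtain ⟨q, rfl⟩ := Nat.exists_eq_add_of_le' (show 0 < q by omega)
    exact isCoboundary_of_subsingleton Fin.elim0 hf
  | succ t ih =>
    rw [Nat.mul_succ] at hq
    obtain ⟨p, rfl⟩ := Nat.exists_eq_add_of_le' (show m ≤ q by omega)
    obtain ⟨a, b, ha, hb, h⟩ := exists_sphereProd_kunneth hf
    simpa using (h.add (isCoboundary_cup_tail (ih (by omega) hb))).add
      ((ih (by omega) ha).pullback_of_continuous continuous_tail)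

/-- The cup product of a list of cochains of degree `m`, in reverse order. -/
def cupList (m : ℕ) {X : Type*} : Cochain (Cochain X ℤ) (Cochain X ℤ)
  | [] => fun _ => 1
  | y :: ys => cup (m * ys.length) (cupList m ys) y

theorem pullback_cupList {X Y : Type*} (φ : X → Y) (ys : List (Cochain Y ℤ)) :
    pullback φ (cupList m ys) = cupList m (ys.map (pullback φ)) := by
  induction ys with
  | nil => rfl
  | cons y ys ih => simp only [cupList, pullback_cup, ih, List.map_cons, List.length_map]

theorem isCocycle_const {X : Type*} [PseudoMetricSpace X] (A : Set X) (c : L) :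
    IsCocycle A 1 (fun _ : List X => c) := by
  refine LocallyZero.of_eq fun l hl _ => ?_
  match l, hl with
  | [x, y], _ => simp [d_cons]

theorem isCocycle_cupList {X : Type*} [PseudoMetricSpace X] {A : Set X} {ys : List (Cochain X ℤ)}
    (h : ∀ y ∈ ys, IsCocycle A (m + 1) y) : IsCocycle A (m * ys.length + 1) (cupList m ys) := by
  induction ys with
  | nil => exact isCocycle_const A 1
  | cons y ys ih =>
    rw [List.length_cons, Nat.mul_succ]
    exact (ih fun z hz => h z (List.mem_cons_of_mem _ hz)).cup (h y (by simp))

theorem isCocycle_cupList_ofFn {X : Type*} [PseudoMetricSpace X] {A : Set X} {n : ℕ}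
    {y : Fin n → Cochain X ℤ} (hy : ∀ i, IsCocycle A (m + 1) (y i)) :
    IsCocycle A (m * n + 1) (cupList m (List.ofFn y)) := by
  have h := isCocycle_cupList (ys := List.ofFn y) (List.forall_mem_ofFn_iff.2 hy)
  rwa [List.length_ofFn] at h

/-- The cup product of all coordinate cocycles, a generator of `H^{mt}((S^m)^t; ℤ)`. -/
def topCocycle (m t : ℕ) : Cochain (SphereProd m t) ℤ := cupList m (List.ofFn coordCocycle)

theorem pullback_tail_coordCocycle (i : Fin t) :
    pullback (Fin.tail : SphereProd m (t + 1) → SphereProd m t) (coordCocycle i) =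
      coordCocycle i.succ := by
  rw [coordCocycle, pullback_pullback]
  rfl

theorem topCocycle_succ (m t : ℕ) : topCocycle m (t + 1) = cup (m * t)
    (pullback Fin.tail (topCocycle m t)) (coordCocycle 0) := by
  have h : (pullback Fin.tail) ∘ (coordCocycle (m := m) (t := t)) = fun i => coordCocycle i.succ :=
    funext pullback_tail_coordCocycle
  rw [topCocycle, List.ofFn_succ, cupList, List.length_ofFn, topCocycle, pullback_cupList,
    List.map_ofFn, h]

theorem isCocycle_topCocycle (m t : ℕ) : IsCocycle Set.univ (m * t + 1) (topCocycle m t) :=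
  isCocycle_cupList_ofFn isCocycle_coordCocycle

theorem exists_isCoboundary_sub_smul_topCocycle (hm : 0 < m) {f : Cochain (SphereProd m t) ℤ}
    (hf : IsCocycle Set.univ (m * t + 1) f) :
    ∃ c : ℤ, IsCoboundary Set.univ (m * t + 1) (f - c • topCocycle m t) := by
  induction t with
  | zero =>
    refine ⟨f [Fin.elim0], LocallyZero.isCoboundary <| LocallyZero.of_eq fun l hl _ => ?_⟩
    match l, hl with
    | [x], _ => rw [Subsingleton.elim x Fin.elim0]; simp [topCocycle, cupList]
  | succ t ih =>
    rw [Nat.mul_succ] at hf ⊢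
    obtain ⟨a, b, ha, hb, h⟩ := exists_sphereProd_kunneth hf
    obtain ⟨c, hc⟩ := ih hb
    refine ⟨c, ?_⟩
    have hsum := (h.add (isCoboundary_cup_tail hc)).add
      ((isCoboundary_of_mul_lt (by omega) ha).pullback_of_continuous continuous_tail)
    rw [pullback_sub, cup_sub, pullback_smul, cup_smul, ← topCocycle_succ] at hsum
    convert hsum using 1
    abel

theorem nonempty_sphereProd (m t : ℕ) : Nonempty (SphereProd m t) :=
  ⟨fun _ => pole m 1⟩

theorem eq_zero_of_locallyZero_const {X : Type*} [PseudoMetricSpace X] {n : ℕ} {c : L} (x : X)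
    (h : LocallyZero Set.univ n (fun _ : List X => c)) : c = 0 := by
  obtain ⟨ε, hε, h⟩ := h
  refine h (List.replicate n x) (by simp) (by simp) fun y hy z hz => ?_
  rw [List.eq_of_mem_replicate hy, List.eq_of_mem_replicate hz, dist_self]
  exact hε

theorem eq_zero_of_isCoboundary_smul_topCocycle {c : ℤ}
    (h : IsCoboundary Set.univ (m * t + 1) (c • topCocycle m t)) : c = 0 := by
  induction t with
  | zero =>
    exact eq_zero_of_locallyZero_const Fin.elim0
      ((locallyZero_of_isCoboundary_one h).congr (by simp [topCocycle, cupList]))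
  | succ t ih =>
    refine ih (isCoboundary_of_sphereProd_kunneth (a := 0) ((isCocycle_topCocycle m t).smul c) ?_).2
    rwa [pullback_zero, zero_add, pullback_smul, cup_smul, ← topCocycle_succ, ← Nat.mul_succ]

theorem cup_zero_const {X : Type*} (c : ℤ) (ψ : Cochain X ℤ) :
    cup 0 (fun _ => c) ψ = c • ψ := by
  funext l
  simp [cup, mul_comm]

theorem sum_smul_coordCocycle_succ (c : Fin (t + 1) → ℤ) :
    ∑ i, c i • coordCocycle (m := m) i =
      pullback Fin.tail (∑ i : Fin t, c i.succ • coordCocycle i) +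
        cup 0 (pullback Fin.tail fun _ : List (SphereProd m t) => c 0) (coordCocycle 0) := by
  have hconst : cup 0 (pullback (Fin.tail : SphereProd m (t + 1) → SphereProd m t) fun _ => c 0)
      (coordCocycle 0) = c 0 • coordCocycle 0 := cup_zero_const _ _
  rw [hconst, Fin.sum_univ_succ, pullback_sum,
    add_comm (c 0 • _)]
  simp only [pullback_smul, pullback_tail_coordCocycle]

theorem exists_isCoboundary_sub_sum_coordCocycle (hm : 0 < m) {f : Cochain (SphereProd m t) ℤ}
    (hf : IsCocycle Set.univ (m + 1) f) :
    ∃ c : Fin t → ℤ, IsCoboundary Set.univ (m + 1) (f - ∑ i, c i • coordCocycle i) := by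
  induction t with
  | zero => exact ⟨0, by simpa using isCoboundary_of_mul_lt (by omega) hf⟩
  | succ t ih =>
    obtain ⟨a, b, ha, hb, h⟩ := exists_sphereProd_kunneth (p := 0) (by simpa using hf)
    rw [zero_add] at ha h
    obtain ⟨c, hc⟩ := ih ha
    obtain ⟨c₀, hc₀⟩ := exists_locallyZero_sub_const hm hb
    refine ⟨Fin.cons c₀ c, ?_⟩
    have hsum := (h.add (by simpa using isCoboundary_cup_tail (p := 0) hc₀.isCoboundary)).add
      (hc.pullback_of_continuous continuous_tail)
    rw [pullback_sub, cup_sub, pullback_sub] at hsum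
    rw [sum_smul_coordCocycle_succ]
    simp only [Fin.cons_zero, Fin.cons_succ]
    convert hsum using 1
    abel

theorem eq_zero_of_isCoboundary_sum_coordCocycle {c : Fin t → ℤ}
    (h : IsCoboundary Set.univ (m + 1) (∑ i, c i • coordCocycle (m := m) i)) : c = 0 := by
  induction t with
  | zero => exact Subsingleton.elim _ _
  | succ t ih =>
    rw [sum_smul_coordCocycle_succ] at h
    obtain ⟨htail, hconst⟩ := isCoboundary_of_sphereProd_kunneth (p := 0)
      (isCocycle_const Set.univ (c 0)) (by simpa only [zero_add] using h)
    rw [zero_add] at htail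
    obtain ⟨x⟩ := nonempty_sphereProd m t
    funext i
    exact Fin.cases (eq_zero_of_locallyZero_const x (locallyZero_of_isCoboundary_one hconst))
      (congrFun (ih htail)) i

end Torus

section Parity

variable {m t : ℕ}

/-- Equality up to sign of the cohomology classes of two cochains (`n` counts vertices, so it is the
degree plus one). -/
def EqUpToSign {X : Type*} [PseudoMetricSpace X] (n : ℕ) (f g : Cochain X ℤ) : Prop :=
  ∃ s : ℤ, (s = 1 ∨ s = -1) ∧ IsCoboundary Set.univ n (f - s • g)

theorem EqUpToSign.refl {X : Type*} [PseudoMetricSpace X] {n : ℕ} (f : Cochain X ℤ) :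
    EqUpToSign n f f :=
  ⟨1, Or.inl rfl, by simpa using IsCoboundary.zero⟩

theorem EqUpToSign.trans {X : Type*} [PseudoMetricSpace X] {n : ℕ} {f g h : Cochain X ℤ}
    (hfg : EqUpToSign n f g) (hgh : EqUpToSign n g h) : EqUpToSign n f h := by
  obtain ⟨s, hs, hfg⟩ := hfg
  obtain ⟨s', hs', hgh⟩ := hgh
  refine ⟨s * s', by rcases hs with rfl | rfl <;> rcases hs' with rfl | rfl <;> simp, ?_⟩
  have hfh := hfg.add (hgh.smul s)
  rwa [smul_sub, smul_smul, sub_add_sub_cancel] at hfh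

theorem isCoboundary_cup_self (hm : 0 < m) (i : Fin t) :
    IsCoboundary Set.univ (m + m + 1) (cup m (coordCocycle (m := m) i) (coordCocycle i)) := by
  have hone : IsCoboundary Set.univ (m + m + 1)
      (cup m (coordCocycle (m := m) (0 : Fin 1)) (coordCocycle 0)) :=
    isCoboundary_of_mul_lt (by omega) ((isCocycle_coordCocycle 0).cup (isCocycle_coordCocycle 0))
  have hcont : Continuous fun (x : SphereProd m t) (_ : Fin 1) => x i :=
    continuous_pi fun _ => continuous_apply i
  have h := hone.pullback_of_continuous hcont
  rwa [pullback_cup, coordCocycle, pullback_pullback] at h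

theorem topCocycle_two : topCocycle m 2 = cup m (coordCocycle 1) (coordCocycle 0) := by
  have hone : cup (m * 0) (fun _ => (1 : ℤ)) (coordCocycle (m := m) (1 : Fin 2)) =
      coordCocycle 1 := by
    rw [Nat.mul_zero, cup_zero_const, one_smul]
  simp only [topCocycle, List.ofFn_succ, List.ofFn_zero, cupList, List.length_cons,
    List.length_nil, zero_add, mul_one]
  exact congrArg (fun f => cup m f (coordCocycle 0)) hone

/- Exchanging the two factors squares to the identity, so it acts on the top class by a sign. -/
theorem eqUpToSign_cup_comm_two (hm : 0 < m) :
    EqUpToSign (m + m + 1) (cup m (coordCocycle (m := m) (0 : Fin 2)) (coordCocycle 1))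
      (cup m (coordCocycle 1) (coordCocycle 0)) := by
  let τ : SphereProd m 2 → SphereProd m 2 := fun x k => x (1 - k)
  have hτ : Continuous τ := continuous_pi fun k => continuous_apply _
  have hτ₀ : pullback τ (coordCocycle 0) = coordCocycle 1 := by
    rw [coordCocycle, pullback_pullback]
    rfl
  have hτ₁ : pullback τ (coordCocycle 1) = coordCocycle 0 := by
    rw [coordCocycle, pullback_pullback]
    rfl
  obtain ⟨c, hc⟩ := exists_isCoboundary_sub_smul_topCocycle (t := 2) hm
    (f := cup m (coordCocycle 0) (coordCocycle 1))
    (by rw [mul_two]; exact (isCocycle_coordCocycle 0).cup (isCocycle_coordCocycle 1))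
  have hτc := hc.pullback_of_continuous hτ
  rw [pullback_sub, pullback_smul, topCocycle_two, pullback_cup, pullback_cup, hτ₀, hτ₁] at hτc
  rw [topCocycle_two] at hc
  have hcc := hτc.add (hc.smul c)
  rw [smul_sub, sub_add_sub_cancel, smul_smul, ← topCocycle_two] at hcc
  have hc_sq : 1 - c * c = 0 :=
    eq_zero_of_isCoboundary_smul_topCocycle (by rwa [sub_smul, one_smul])
  exact ⟨c, mul_self_eq_one_iff.1 (sub_eq_zero.1 hc_sq).symm, by rwa [mul_two] at hc⟩

theorem eqUpToSign_cup_comm (hm : 0 < m) (i j : Fin t) :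
    EqUpToSign (m + m + 1) (cup m (coordCocycle (m := m) i) (coordCocycle j))
      (cup m (coordCocycle j) (coordCocycle i)) := by
  obtain ⟨s, hs, h⟩ := eqUpToSign_cup_comm_two (m := m) hm
  have hcont : Continuous fun (x : SphereProd m t) (k : Fin 2) => if k = 0 then x i else x j :=
    continuous_pi fun k => by split_ifs <;> exact continuous_apply _
  have hij := h.pullback_of_continuous hcont
  rw [pullback_sub, pullback_smul, pullback_cup, pullback_cup] at hij
  simp only [coordCocycle, pullback_pullback] at hij
  exact ⟨s, hs, hij⟩

/-- The cup product of the coordinate cocycles named by a word, in reverse order. -/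
def cupWord (m : ℕ) {t : ℕ} (w : List (Fin t)) : Cochain (SphereProd m t) ℤ :=
  cupList m (w.map coordCocycle)

theorem cupWord_cons (i : Fin t) (w : List (Fin t)) :
    cupWord m (i :: w) = cup (m * w.length) (cupWord m w) (coordCocycle i) := by
  simp [cupWord, cupList]

theorem isCocycle_cupWord (w : List (Fin t)) :
    IsCocycle Set.univ (m * w.length + 1) (cupWord m w) := by
  have h := isCocycle_cupList (A := Set.univ) (ys := w.map (coordCocycle (m := m)))
    (List.forall_mem_map.2 fun i _ => isCocycle_coordCocycle i)
  rwa [List.length_map] at h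

theorem cupWord_cons_cons (i j : Fin t) (w : List (Fin t)) :
    cupWord m (i :: j :: w) = cup (m * w.length) (cupWord m w)
      (cup m (coordCocycle j) (coordCocycle i)) := by
  rw [cupWord_cons, cupWord_cons, List.length_cons, Nat.mul_succ, cup_assoc]

theorem eqUpToSign_cupWord_of_perm (hm : 0 < m) {w w' : List (Fin t)} (h : w.Perm w') :
    EqUpToSign (m * w.length + 1) (cupWord m w) (cupWord m w') := by
  induction h with
  | nil => exact EqUpToSign.refl _
  | @cons x l₁ l₂ h ih =>
    obtain ⟨s, hs, ih⟩ := ih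
    have hcup := ih.cup_left (isCocycle_coordCocycle x)
    rw [cup_sub, cup_smul, ← cupWord_cons, h.length_eq, ← cupWord_cons, ← Nat.mul_succ,
      ← h.length_eq] at hcup
    exact ⟨s, hs, hcup⟩
  | swap x y l =>
    obtain ⟨s, hs, h⟩ := eqUpToSign_cup_comm (m := m) hm x y
    have hcup := IsCoboundary.cup_right (isCocycle_cupWord (m := m) l) h
    rw [sub_cup, smul_cup, ← cupWord_cons_cons, ← cupWord_cons_cons] at hcup
    refine ⟨s, hs, ?_⟩
    convert hcup using 1
    simp only [List.length_cons]
    ring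
  | trans h₁₂ _ ih₁₂ ih₂₃ => exact ih₁₂.trans (by rwa [h₁₂.length_eq])

theorem isCoboundary_cupWord_of_not_nodup (hm : 0 < m) {w : List (Fin t)} (h : ¬ w.Nodup) :
    IsCoboundary Set.univ (m * w.length + 1) (cupWord m w) := by
  obtain ⟨x, hx⟩ := List.exists_duplicate_iff_not_nodup.2 h
  obtain ⟨l, hl⟩ := (List.duplicate_iff_sublist.1 hx).exists_perm_append
  obtain ⟨s, -, hs⟩ := eqUpToSign_cupWord_of_perm hm hl
  have hxx : IsCoboundary Set.univ (m * w.length + 1) (cupWord m (x :: x :: l)) := by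
    rw [cupWord_cons_cons]
    convert IsCoboundary.cup_right (isCocycle_cupWord (m := m) l) (isCoboundary_cup_self hm x)
      using 1
    rw [hl.length_eq]
    simp only [List.length_append, List.length_cons, List.length_nil]
    ring
  simpa using hs.add (hxx.smul s)

/-- The cocycle representing the class with coordinates `c` in `ℤ ^ t = H^m((S^m)^t; ℤ)`. -/
def linCocycle (m : ℕ) {t : ℕ} (c : Fin t → ℤ) : Cochain (SphereProd m t) ℤ :=
  ∑ i, c i • coordCocycle i

theorem linCocycle_add (c c' : Fin t → ℤ) :
    linCocycle m (c + c') = linCocycle m c + linCocycle m c' := by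
  simp [linCocycle, add_smul, Finset.sum_add_distrib]

theorem linCocycle_smul (a : ℤ) (c : Fin t → ℤ) : linCocycle m (a • c) = a • linCocycle m c := by
  simp [linCocycle, mul_smul, Finset.smul_sum]

theorem linCocycle_neg (c : Fin t → ℤ) : linCocycle m (-c) = -linCocycle m c := by
  simpa using linCocycle_smul (m := m) (-1) c

theorem linCocycle_sub (c c' : Fin t → ℤ) :
    linCocycle m (c - c') = linCocycle m c - linCocycle m c' := by
  rw [sub_eq_add_neg, sub_eq_add_neg, linCocycle_add, linCocycle_neg]

theorem linCocycle_single (i : Fin t) : linCocycle m (Pi.single i 1) = coordCocycle i := by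
  rw [linCocycle, Finset.sum_eq_single i]
  · simp
  · intro j _ h
    simp [h]
  · simp

theorem isCocycle_linCocycle (c : Fin t → ℤ) : IsCocycle Set.univ (m + 1) (linCocycle m c) :=
  IsCocycle.sum fun i _ => (isCocycle_coordCocycle i).smul _

variable {X : Type*}

theorem cupList_update_add {n : ℕ} (v : Fin n → Cochain X ℤ) (i : Fin n) (x y : Cochain X ℤ) :
    cupList m (List.ofFn (Function.update v i (x + y))) =
      cupList m (List.ofFn (Function.update v i x)) +
        cupList m (List.ofFn (Function.update v i y)) := by
  induction n with
  | zero => exact i.elim0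
  | succ n ih =>
    refine Fin.cases ?_ (fun i => ?_) i
    · simp [List.ofFn_succ, cupList, add_cup]
    · have htail := ih (Fin.tail v) i
      simp only [← Fin.tail_update_succ] at htail
      simp only [List.ofFn_succ, cupList, Function.update_of_ne (Fin.succ_ne_zero i).symm,
        List.length_ofFn]
      rw [← cup_add]
      exact congrArg (cup (m * n) · (v 0)) htail

theorem cupList_update_smul {n : ℕ} (v : Fin n → Cochain X ℤ) (i : Fin n) (a : ℤ)
    (x : Cochain X ℤ) :
    cupList m (List.ofFn (Function.update v i (a • x))) =
      a • cupList m (List.ofFn (Function.update v i x)) := by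
  induction n with
  | zero => exact i.elim0
  | succ n ih =>
    refine Fin.cases ?_ (fun i => ?_) i
    · simp [List.ofFn_succ, cupList, smul_cup, -zsmul_eq_mul]
    · have htail := ih (Fin.tail v) i
      simp only [← Fin.tail_update_succ] at htail
      simp only [List.ofFn_succ, cupList, Function.update_of_ne (Fin.succ_ne_zero i).symm,
        List.length_ofFn]
      rw [← cup_smul]
      exact congrArg (cup (m * n) · (v 0)) htail

/-- The coefficient of the top class in a cocycle of degree `m * t` (junk value `0` on cochains that
are not cocycles). -/
def topCoeff (hm : 0 < m) (f : Cochain (SphereProd m t) ℤ) : ℤ := by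
  classical exact
    if h : IsCocycle Set.univ (m * t + 1) f then
      (exists_isCoboundary_sub_smul_topCocycle hm h).choose
    else 0

theorem topCoeff_spec (hm : 0 < m) {f : Cochain (SphereProd m t) ℤ}
    (h : IsCocycle Set.univ (m * t + 1) f) :
    IsCoboundary Set.univ (m * t + 1) (f - topCoeff hm f • topCocycle m t) := by
  rw [topCoeff, dif_pos h]
  exact (exists_isCoboundary_sub_smul_topCocycle hm h).choose_spec

theorem topCoeff_eq (hm : 0 < m) {f : Cochain (SphereProd m t) ℤ} {c : ℤ}
    (h : IsCoboundary Set.univ (m * t + 1) (f - c • topCocycle m t)) : topCoeff hm f = c := by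
  have hf : IsCocycle Set.univ (m * t + 1) f := by
    simpa using h.isCocycle.add ((isCocycle_topCocycle m t).smul c)
  have hdiff := h.sub (topCoeff_spec hm hf)
  rw [sub_sub_sub_cancel_left, ← sub_smul] at hdiff
  exact sub_eq_zero.1 (eq_zero_of_isCoboundary_smul_topCocycle hdiff)

theorem isCocycle_cupList_linCocycle (v : Fin t → Fin t → ℤ) :
    IsCocycle Set.univ (m * t + 1) (cupList m (List.ofFn fun j => linCocycle m (v j))) :=
  isCocycle_cupList_ofFn fun j => isCocycle_linCocycle (v j)

theorem linCocycle_update (v : Fin t → Fin t → ℤ) (i : Fin t) (z : Fin t → ℤ) :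
    (fun j => linCocycle m (Function.update v i z j)) =
      Function.update (fun j => linCocycle m (v j)) i (linCocycle m z) :=
  funext fun j => Function.apply_update (fun _ => linCocycle m) v i z j

/-- The multilinear form on `ℤ ^ t = H ^ m` given by the coefficient of the top class in the cup
product of `t` classes. -/
def topForm (hm : 0 < m) : MultilinearMap ℤ (fun _ : Fin t => Fin t → ℤ) ℤ where
  toFun v := topCoeff hm (cupList m (List.ofFn fun j => linCocycle m (v j)))
  map_update_add' {inst} v i x y := by
    obtain rfl : inst = instDecidableEqFin t := Subsingleton.elim _ _
    refine topCoeff_eq hm ?_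
    convert (topCoeff_spec hm (isCocycle_cupList_linCocycle (m := m) (Function.update v i x))).add
      (topCoeff_spec hm (isCocycle_cupList_linCocycle (m := m) (Function.update v i y))) using 1
    rw [linCocycle_update, linCocycle_update, linCocycle_update, linCocycle_add,
      cupList_update_add, add_smul]
    abel
  map_update_smul' {inst} v i a x := by
    obtain rfl : inst = instDecidableEqFin t := Subsingleton.elim _ _
    refine topCoeff_eq hm ?_
    convert (topCoeff_spec hm
      (isCocycle_cupList_linCocycle (m := m) (Function.update v i x))).smul a using 1
    rw [linCocycle_update, linCocycle_update, linCocycle_smul, cupList_update_smul, smul_sub,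
      smul_smul]
    rfl

theorem topForm_single (hm : 0 < m) (f : Fin t → Fin t) :
    topForm hm (fun j => Pi.single (f j) (1 : ℤ)) = topCoeff hm (cupWord m (List.ofFn f)) := by
  change topCoeff hm _ = _
  simp only [linCocycle_single, cupWord, List.map_ofFn]
  rfl

theorem odd_topCoeff_cupWord_perm (hm : 0 < m) (σ : Equiv.Perm (Fin t)) :
    Odd (topCoeff hm (cupWord m (List.ofFn σ))) := by
  have hperm : (List.ofFn σ).Perm (List.ofFn id) := by
    rw [List.perm_ext_iff_of_nodup (List.nodup_ofFn.2 σ.injective)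
      (List.nodup_ofFn.2 Function.injective_id)]
    intro a
    simpa [List.mem_ofFn] using σ.surjective a
  have hid : cupWord m (List.ofFn (id : Fin t → Fin t)) = topCocycle m t := by
    simp [cupWord, topCocycle, List.map_ofFn]
  obtain ⟨s, hs, h⟩ := eqUpToSign_cupWord_of_perm (m := m) hm hperm
  rw [List.length_ofFn, hid] at h
  rw [topCoeff_eq hm h]
  rcases hs with rfl | rfl
  · exact odd_one
  · exact odd_one.neg

theorem topCoeff_cupWord_of_not_injective (hm : 0 < m) {v : Fin t → Fin t}
    (hv : ¬ Function.Injective v) : topCoeff hm (cupWord m (List.ofFn v)) = 0 := by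
  have h := isCoboundary_cupWord_of_not_nodup (m := m) hm (w := List.ofFn v)
    (by rwa [List.nodup_ofFn])
  rw [List.length_ofFn] at h
  exact topCoeff_eq hm (by simpa using h)

theorem det_single_perm {n : Type*} [Fintype n] [DecidableEq n] (σ : Equiv.Perm n) :
    (Matrix.of fun i => Pi.single (σ i) (1 : ℤ)).det = Equiv.Perm.sign σ := by
  rw [← Int.cast_id (n := (Equiv.Perm.sign σ : ℤ)), ← Matrix.det_permutation]
  congr 1
  ext i j
  simp [PEquiv.toMatrix_apply, Pi.single_apply, eq_comm]

/- Cup products of distinct coordinate classes are top classes up to sign only, whence the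
comparison modulo `2`. -/
theorem topForm_modEq_det (hm : 0 < m) (v : Fin t → Fin t → ℤ) :
    topForm hm v ≡ (Matrix.of v).det [ZMOD 2] := by
  let red : ℤ →ₗ[ℤ] ZMod 2 := (Int.castAddHom (ZMod 2)).toIntLinearMap
  suffices h : red.compMultilinearMap (topForm hm) =
      red.compMultilinearMap (Matrix.detRowAlternating (n := Fin t) (R := ℤ)).toMultilinearMap from
    (ZMod.intCast_eq_intCast_iff _ _ 2).1 (congrArg (· v) h)
  refine Module.Basis.ext_multilinear (fun _ => Pi.basisFun ℤ (Fin t)) fun v => ?_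
  simp only [Pi.basisFun_apply]
  refine (ZMod.intCast_eq_intCast_iff _ _ 2).2 ?_
  rw [topForm_single]
  by_cases hv : Function.Injective v
  · obtain ⟨σ, rfl⟩ : ∃ σ : Equiv.Perm (Fin t), ⇑σ = v :=
      ⟨Equiv.ofBijective v (Finite.injective_iff_bijective.1 hv), rfl⟩
    have hsign : Odd (Equiv.Perm.sign σ : ℤ) := by
      rcases Int.units_eq_one_or (Equiv.Perm.sign σ) with h | h <;> simp [h]
    rw [← det_single_perm] at hsign
    exact (Int.odd_iff.1 (odd_topCoeff_cupWord_perm hm σ)).trans (Int.odd_iff.1 hsign).symm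
  · rw [topCoeff_cupWord_of_not_injective hm hv, AlternatingMap.coe_multilinearMap,
      AlternatingMap.map_eq_zero_of_not_injective]
    exact fun h => hv fun a b hab => h (by simp [hab])

theorem odd_topForm_basis (hm : 0 < m) (b : Module.Basis (Fin t) ℤ (Fin t → ℤ)) :
    Odd (topForm hm b) := by
  have hdet : IsUnit (Matrix.of b).det := by
    have h := (Pi.basisFun ℤ (Fin t)).isUnit_det b
    rwa [Pi.basisFun_det] at h
  have hodd : Odd (Matrix.of b).det := by
    rcases Int.isUnit_iff.1 hdet with h | h <;> rw [h]
    · exact odd_one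
    · exact odd_one.neg
  rw [Int.odd_iff] at hodd ⊢
  exact Eq.trans (topForm_modEq_det hm b) hodd

theorem isCoboundary_cupList_sub {X : Type*} [PseudoMetricSpace X] {n : ℕ}
    {y z : Fin n → Cochain X ℤ} (hz : ∀ i, IsCocycle Set.univ (m + 1) (z i))
    (h : ∀ i, IsCoboundary Set.univ (m + 1) (y i - z i)) :
    IsCoboundary Set.univ (m * n + 1) (cupList m (List.ofFn y) - cupList m (List.ofFn z)) := by
  have hy : ∀ i, IsCocycle Set.univ (m + 1) (y i) :=
    fun i => by simpa using (h i).isCocycle.add (hz i)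
  induction n with
  | zero => simpa [cupList] using IsCoboundary.zero
  | succ n ih =>
    have hleft := (ih (fun i => hz i.succ) (fun i => h i.succ) fun i => hy i.succ).cup_left (hy 0)
    have hright := IsCoboundary.cup_right (isCocycle_cupList_ofFn fun i => hz i.succ) (h 0)
    have hsum := hleft.add hright
    rw [cup_sub, sub_cup, sub_add_sub_cancel, ← Nat.mul_succ] at hsum
    simpa only [List.ofFn_succ, cupList, List.length_ofFn] using hsum

theorem exists_odd_isCoboundary_cupList_sub (hm : 0 < m)
    (b : Module.Basis (Fin t) ℤ (Fin t → ℤ)) (a : Fin t → ℤ)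
    {y : Fin t → Cochain (SphereProd m t) ℤ}
    (h : ∀ i, IsCoboundary Set.univ (m + 1) (y i - linCocycle m (a i • b i))) :
    ∃ c : ℤ, Odd c ∧ IsCoboundary Set.univ (m * t + 1)
      (cupList m (List.ofFn y) - ((∏ i, a i) * c) • topCocycle m t) := by
  refine ⟨_, odd_topForm_basis hm b, ?_⟩
  have hform : topCoeff hm (cupList m (List.ofFn fun i => linCocycle m (a i • b i))) =
      (∏ i, a i) * topForm hm b :=
    (topForm hm).map_smul_univ a b
  have htop := topCoeff_spec hm (isCocycle_cupList_linCocycle (m := m) fun i => a i • b i)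
  rw [hform] at htop
  simpa using (isCoboundary_cupList_sub (fun i => isCocycle_linCocycle (a i • b i)) h).add htop

end Parity

section Coeff

variable {X L M : Type*} [PseudoMetricSpace X] [AddCommGroup L] [AddCommGroup M]
  {A : Set X} {n : ℕ}

theorem LocallyZero.map {f : Cochain X L} (hf : LocallyZero A n f) (φ : L →+ M) :
    LocallyZero A n (fun l => φ (f l)) := by
  obtain ⟨ε, hε, h⟩ := hf
  exact ⟨ε, hε, fun l hlen hmem hclose => (congrArg φ (h l hlen hmem hclose)).trans φ.map_zero⟩

theorem LocallyZero.of_injective {f : Cochain X L} (φ : L →+ M) (hφ : Function.Injective φ)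
    (hf : LocallyZero A n (fun l => φ (f l))) : LocallyZero A n f := by
  obtain ⟨ε, hε, h⟩ := hf
  exact ⟨ε, hε, fun l hlen hmem hclose => hφ ((h l hlen hmem hclose).trans φ.map_zero.symm)⟩

theorem LocallyZero.pi {ι : Type*} [Finite ι] {f : Cochain X (ι → L)}
    (hf : ∀ i, LocallyZero A n (fun l => f l i)) : LocallyZero A n f := by
  classical
  cases nonempty_fintype ι
  have hsum : LocallyZero A n (∑ i, fun l => AddMonoidHom.single (fun _ : ι => L) i (f l i)) :=
    LocallyZero.sum fun i _ => (hf i).map _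
  refine hsum.congr fun l _ _ => ?_
  rw [Finset.sum_apply]
  exact Finset.univ_sum_single _

theorem LocallyZero.of_cover {f : Cochain X L} {ι : Type*} [Finite ι] {U : ι → Set X} {ε : ℝ}
    (hε : 0 < ε) (hU : ∀ x, ∃ i, ∀ y, dist x y < ε → y ∈ U i) (hn : n ≠ 0)
    (hf : ∀ i, LocallyZero (U i) n f) : LocallyZero Set.univ n f := by
  classical
  have hrestrict : LocallyZero Set.univ n (fun l i => if ∀ x ∈ l, x ∈ U i then f l else 0) := by
    refine LocallyZero.pi fun i => ?_
    obtain ⟨δ, hδ, h⟩ := hf i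
    refine ⟨δ, hδ, fun l hlen _ hclose => ?_⟩
    simp only
    split_ifs with hl
    · exact h l hlen hl hclose
    · rfl
  obtain ⟨δ, hδ, h⟩ := hrestrict
  refine ⟨min δ ε, lt_min hδ hε, fun l hlen hmem hclose => ?_⟩
  obtain ⟨x, hx⟩ := List.exists_mem_of_length_pos (by omega : 0 < l.length)
  obtain ⟨i, hi⟩ := hU x
  have hzero := congrFun
    (h l hlen hmem fun x hx y hy => (hclose x hx y hy).trans_le (min_le_left _ _)) i
  simp only at hzero
  rwa [if_pos] at hzero
  exact fun y hy => hi y ((hclose x hx y hy).trans_le (min_le_right _ _))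

end Coeff

section SumZero

/-- The kernel of the sum map `(Γ → L) → L`, the coefficients used to shift the degree up by one. -/
def sumZero (Γ L : Type*) [Fintype Γ] [AddCommGroup L] : AddSubgroup (Γ → L) where
  carrier := {f | ∑ g, f g = 0}
  zero_mem' := by simp
  add_mem' {f g} hf hg := by
    simp only [Set.mem_ofPred_eq, Pi.add_apply, Finset.sum_add_distrib] at *
    rw [hf, hg, add_zero]
  neg_mem' {f} hf := by
    simp only [Set.mem_ofPred_eq, Pi.neg_apply, Finset.sum_neg_distrib] at *
    rw [hf, neg_zero]

variable {Γ X L : Type*} [Fintype Γ] [AddCommGroup L]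

theorem d_sumZero_apply (f : Cochain X (sumZero Γ L)) (l : List X) (g : Γ) :
    (d f l).1 g = d (fun l => (f l).1 g) l :=
  (d_hom ((Pi.evalAddMonoidHom _ g).comp (sumZero Γ L).subtype) f l).symm

theorem LocallyZero.sumZero_apply [PseudoMetricSpace X] {A : Set X} {n : ℕ}
    {f : Cochain X (sumZero Γ L)} (h : LocallyZero A n f) (g : Γ) :
    LocallyZero A n fun l => (f l).1 g :=
  h.map ((Pi.evalAddMonoidHom _ g).comp (sumZero Γ L).subtype)

theorem locallyZero_sumZero [PseudoMetricSpace X] {A : Set X} {n : ℕ}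
    {f : Cochain X (sumZero Γ L)} (h : ∀ g, LocallyZero A n fun l => (f l).1 g) :
    LocallyZero A n f :=
  LocallyZero.of_injective (sumZero Γ L).subtype Subtype.coe_injective (LocallyZero.pi h)

end SumZero

section GroupAction

variable {Γ X L : Type*} [Group Γ] [MulAction Γ X] [AddCommGroup L]

/-- The action of a group element on cochains, through the space and through an action `a` on the
coefficients. -/
def twistedAction (a : Γ →* AddMonoid.End L) (γ : Γ) (f : Cochain X L) : Cochain X L :=
  fun l => a γ (f (l.map (γ⁻¹ • ·)))

/-- Equivariance of a cochain for the actions of `Γ` on the space and, through `a`, on the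
coefficients. -/
def IsEquivariant (a : Γ →* AddMonoid.End L) (f : Cochain X L) : Prop :=
  ∀ (γ : Γ) l, f (l.map (γ • ·)) = a γ (f l)

variable (a : Γ →* AddMonoid.End L)

theorem twistedAction_sub (γ : Γ) (f g : Cochain X L) :
    twistedAction a γ (f - g) = twistedAction a γ f - twistedAction a γ g := by
  funext l
  simp [twistedAction]

theorem d_twistedAction (γ : Γ) (f : Cochain X L) :
    d (twistedAction a γ f) = twistedAction a γ (d f) := by
  funext l
  exact (d_hom (a γ) (pullback (γ⁻¹ • ·) f) l).trans
    (congrArg (a γ) (congrFun (d_pullback _ f) l))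

theorem LocallyZero.twistedAction [PseudoMetricSpace X] [UniformContinuousConstSMul Γ X] {n : ℕ}
    {f : Cochain X L} (hf : LocallyZero Set.univ n f) (γ : Γ) :
    LocallyZero Set.univ n (twistedAction a γ f) :=
  (hf.pullback (uniformContinuous_const_smul γ⁻¹).uniformContinuousOn (Set.mapsTo_univ _ _)).map
    (a γ)

theorem isEquivariant_sum_twistedAction [Fintype Γ] (f : Cochain X L) :
    IsEquivariant a (∑ g, twistedAction a g f) := by
  intro γ l
  simp only [Finset.sum_apply, map_sum]
  refine (Fintype.sum_equiv (Equiv.mulLeft γ) _ _ fun g => ?_).symm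
  simp only [twistedAction, Equiv.coe_mulLeft, map_mul, AddMonoid.End.coe_mul, List.map_map,
    Function.comp_apply]
  have hmap : l.map ((fun x => (γ * g)⁻¹ • x) ∘ fun x => γ • x) = l.map (g⁻¹ • ·) :=
    List.map_congr_left fun x _ => by simp [mul_smul]
  rw [hmap]

theorem exists_isEquivariant_primitive [Fintype Γ] [PseudoMetricSpace X]
    [UniformContinuousConstSMul Γ X] {n : ℕ} {z F : Cochain X L} (hF : IsCoboundary Set.univ n F)
    (hz : LocallyZero Set.univ n (z - ∑ γ, twistedAction a γ F)) :
    ∃ v : Cochain X L, IsEquivariant a v ∧ LocallyZero Set.univ n (z - d v) := by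
  obtain ⟨w, -, hw⟩ := hF
  refine ⟨_, isEquivariant_sum_twistedAction a w, ?_⟩
  have hsum := hz.add (LocallyZero.sum (s := Finset.univ) fun γ _ => hw.twistedAction a γ)
  simp only [twistedAction_sub, Finset.sum_sub_distrib, ← d_twistedAction] at hsum
  rwa [sub_add_sub_cancel, ← d_sum] at hsum

/-- The action `(γ f)(g) = γ (f (γ⁻¹ g))` on the functions with sum zero. -/
def sumZeroAction [Fintype Γ] : Γ →* AddMonoid.End (sumZero Γ L) where
  toFun γ :=
    { toFun := fun f => ⟨fun g => a γ (f.1 (γ⁻¹ * g)), by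
        have hsum : ∑ g, f.1 (γ⁻¹ * g) = 0 := (Equiv.sum_comp (Equiv.mulLeft γ⁻¹) f.1).trans f.2
        exact (map_sum (a γ) _ _).symm.trans ((congrArg (a γ) hsum).trans (map_zero (a γ)))⟩
      map_zero' := Subtype.ext (funext fun _ => map_zero (a γ))
      map_add' := fun f f' => Subtype.ext (funext fun _ => map_add (a γ) _ _) }
  map_one' := by
    refine AddMonoidHom.ext fun f => Subtype.ext (funext fun g => ?_)
    change a 1 (f.1 (1⁻¹ * g)) = f.1 g
    simp
  map_mul' γ γ' := by
    refine AddMonoidHom.ext fun f => Subtype.ext (funext fun g => ?_)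
    change a (γ * γ') (f.1 ((γ * γ')⁻¹ * g)) = a γ (a γ' (f.1 (γ'⁻¹ * (γ⁻¹ * g))))
    rw [map_mul, mul_inv_rev, mul_assoc]
    rfl

theorem sumZeroAction_apply [Fintype Γ] (γ : Γ) (f : sumZero Γ L) (g : Γ) :
    (sumZeroAction a γ f).1 g = a γ (f.1 (γ⁻¹ * g)) := rfl

end GroupAction

section FiberIndicator

variable {Γ X : Type*}

open Classical in
/-- The `0`-cochain that is the indicator function of the fibre of `r` over `g`. -/
def fiberIndicator (r : X → Γ) (g : Γ) : Cochain X ℤ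
  | [x] => if r x = g then 1 else 0
  | _ => 0

theorem sum_fiberIndicator_singleton [Fintype Γ] (r : X → Γ) (x : X) :
    ∑ g, fiberIndicator r g [x] = 1 := by
  classical
  exact (Finset.sum_congr rfl fun g _ => if_congr Iff.rfl rfl rfl).trans
    ((Finset.sum_ite_eq Finset.univ (r x) fun _ => (1 : ℤ)).trans (if_pos (Finset.mem_univ _)))

theorem sum_d_fiberIndicator [Fintype Γ] (r : X → Γ) (l : List X) :
    ∑ g, d (fiberIndicator r g) l = 0 := by
  have hsum : ∀ l : List X, (∑ g, fiberIndicator r g) l = if l.length = 1 then 1 else 0 := by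
    intro l
    rw [Finset.sum_apply]
    match l with
    | [] => simp [fiberIndicator]
    | [x] => simpa using sum_fiberIndicator_singleton r x
    | x :: y :: l => simp [fiberIndicator]
  rw [← Finset.sum_apply, ← d_sum]
  match l with
  | [] => rfl
  | [x] => simp [d_cons, hsum]
  | [x, y] => simp [d_cons, hsum]
  | x :: y :: z :: l =>
    refine d_eq_zero fun l' _ hlen => (hsum l').trans (if_neg ?_)
    simp only [List.length_cons] at hlen
    omega

theorem locallyZero_d_fiberIndicator [PseudoMetricSpace X] {r : X → Γ} {U : Set X} {ε : ℝ}
    (hε : 0 < ε) (hr : ∀ x ∈ U, ∀ y ∈ U, dist x y < ε → r x = r y) (g : Γ) :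
    LocallyZero U 2 (d (fiberIndicator r g)) := by
  refine ⟨ε, hε, fun l hlen hmem hclose => ?_⟩
  match l, hlen with
  | [x, y], _ =>
    have hxy : r x = r y :=
      hr x (hmem x (by simp)) y (hmem y (by simp)) (hclose x (by simp) y (by simp))
    have heq : fiberIndicator r g [x] = fiberIndicator r g [y] := by
      classical simp only [fiberIndicator, hxy]
    simp [d_cons, heq]

end FiberIndicator

section ConnectingCochain

variable {Γ X L : Type*} [Fintype Γ] [AddCommGroup L] {r : X → Γ} {j : ℕ} {z : Cochain X L}

/-- The connecting cochain of `z` for `0 → sumZero Γ L → (Γ → L) → L → 0`, computed from the lift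
`g ↦ z ∪ 1_{r = g}` of `z`. -/
def connectingCochain (r : X → Γ) (j : ℕ) (z : Cochain X L) : Cochain X (sumZero Γ L) := fun l =>
  ⟨fun g => cup j z (d (fiberIndicator r g)) l, by
    change ∑ g, cup j z (d (fiberIndicator r g)) l = 0
    simp only [cup]
    rw [← Finset.sum_smul, sum_d_fiberIndicator, zero_smul]⟩

theorem connectingCochain_apply (l : List X) (g : Γ) :
    (connectingCochain r j z l).1 g = cup j z (d (fiberIndicator r g)) l := rfl

/-- The lift `g ↦ z ∪ 1_{r = g}` of `z` corrected by a primitive `v` of its connecting cochain. -/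
def correctedLift (r : X → Γ) (j : ℕ) (z : Cochain X L) (v : Cochain X (sumZero Γ L)) (g : Γ) :
    Cochain X L :=
  cup j z (fiberIndicator r g) - (-1 : ℤ) ^ j • fun l => (v l).1 g

theorem sum_correctedLift {v : Cochain X (sumZero Γ L)} {l : List X} (hl : l.length = j + 1) :
    ∑ γ, correctedLift r j z v γ l = z l := by
  obtain ⟨x, hx⟩ : ∃ x, l.drop j = [x] := List.length_eq_one_iff.1 (by simp [hl])
  have hv : ∑ γ, (v l).1 γ = 0 := (v l).2
  simp only [correctedLift, Pi.sub_apply, Pi.smul_apply, cup, Finset.sum_sub_distrib]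
  rw [← Finset.sum_smul, ← Finset.smul_sum, hv, hx, sum_fiberIndicator_singleton,
    List.take_of_length_le (by omega), one_smul, smul_zero, sub_zero]

variable [PseudoMetricSpace X] {A : Set X}

theorem isCocycle_connectingCochain (hz : IsCocycle A (j + 1) z) :
    IsCocycle A (j + 2) (connectingCochain r j z) := by
  refine locallyZero_sumZero fun g => ?_
  have hcup : IsCocycle A (j + 2) (cup j z (d (fiberIndicator r g))) := hz.cup (q := 1) IsCocycle.d
  exact LocallyZero.congr hcup fun l _ _ => (d_sumZero_apply (connectingCochain r j z) l g).symm

theorem LocallyZero.connectingCochain (hz : LocallyZero A (j + 1) z) :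
    LocallyZero A (j + 2) (connectingCochain r j z) :=
  locallyZero_sumZero fun _ => hz.cup_left (by omega)

theorem locallyZero_connectingCochain {ε : ℝ} (hε : 0 < ε)
    (hr : ∀ x ∈ A, ∀ y ∈ A, dist x y < ε → r x = r y) :
    LocallyZero A (j + 2) (connectingCochain r j z) :=
  locallyZero_sumZero fun g => (locallyZero_d_fiberIndicator hε hr g).cup_right

theorem isCocycle_correctedLift (hz : IsCocycle A (j + 1) z)
    {v : Cochain X (sumZero Γ L)} (h : LocallyZero A (j + 2) (connectingCochain r j z - d v))
    (g : Γ) : IsCocycle A (j + 1) (correctedLift r j z v g) := by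
  have hcup : LocallyZero A (j + 2) (cup (j + 1) (d z) (fiberIndicator r g)) :=
    LocallyZero.cup_left hz (by omega)
  refine (hcup.add ((h.sumZero_apply g).smul ((-1) ^ j))).congr fun l hl _ => ?_
  simp only [correctedLift, d_sub, d_zsmul, Pi.sub_apply, Pi.add_apply, Pi.smul_apply,
    AddSubgroup.coe_sub]
  rw [d_cup j _ _ l (by omega), connectingCochain_apply, d_sumZero_apply, smul_sub]
  abel

end ConnectingCochain

section EquivariantLift

variable {Γ X : Type*} [Group Γ] [MulAction Γ X]

theorem pullback_fiberIndicator {r : X → Γ} (hr : ∀ (γ : Γ) x, r (γ • x) = γ * r x) (γ g : Γ) :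
    pullback (γ • ·) (fiberIndicator r g) = fiberIndicator r (γ⁻¹ * g) := by
  funext l
  match l with
  | [] => rfl
  | [x] =>
    classical
    have h : r (γ • x) = g ↔ r x = γ⁻¹ * g := by rw [hr, eq_inv_mul_iff_mul_eq]
    simp only [pullback, List.map_cons, List.map_nil, fiberIndicator, h]
  | x :: y :: l => rfl

variable {L : Type*} [AddCommGroup L] {a : Γ →* AddMonoid.End L} {r : X → Γ} {j : ℕ}
  {z : Cochain X L}

theorem cup_fiberIndicator_map_smul (hr : ∀ (γ : Γ) x, r (γ • x) = γ * r x)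
    (hz : IsEquivariant a z) (γ g : Γ) (l : List X) :
    cup j z (fiberIndicator r g) (l.map (γ • ·)) =
      a γ (cup j z (fiberIndicator r (γ⁻¹ * g)) l) := by
  simp only [cup]
  rw [← List.map_drop, ← List.map_take, hz, map_zsmul, ← pullback_fiberIndicator hr]
  rfl

theorem cup_d_fiberIndicator_map_smul (hr : ∀ (γ : Γ) x, r (γ • x) = γ * r x)
    (hz : IsEquivariant a z) (γ g : Γ) (l : List X) :
    cup j z (d (fiberIndicator r g)) (l.map (γ • ·)) =
      a γ (cup j z (d (fiberIndicator r (γ⁻¹ * g))) l) := by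
  simp only [cup]
  rw [← List.map_drop, ← List.map_take, hz, map_zsmul, ← pullback_fiberIndicator hr, d_pullback]
  rfl

variable [Fintype Γ]

theorem isEquivariant_connectingCochain (hr : ∀ (γ : Γ) x, r (γ • x) = γ * r x)
    (hz : IsEquivariant a z) : IsEquivariant (sumZeroAction a) (connectingCochain r j z) :=
  fun γ l => Subtype.ext (funext fun g => cup_d_fiberIndicator_map_smul hr hz γ g l)

theorem twistedAction_correctedLift (hr : ∀ (γ : Γ) x, r (γ • x) = γ * r x)
    (hz : IsEquivariant a z) {v : Cochain X (sumZero Γ L)} (hv : IsEquivariant (sumZeroAction a) v)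
    (γ : Γ) : twistedAction a γ (correctedLift r j z v 1) = correctedLift r j z v γ := by
  have hcancel : ∀ x, a γ (a γ⁻¹ x) = x := fun x => by
    have h := DFunLike.congr_fun (map_mul a γ γ⁻¹) x
    rw [mul_inv_cancel, map_one] at h
    exact h.symm
  funext l
  have hvγ : (v (l.map (γ⁻¹ • ·))).1 1 = a γ⁻¹ ((v l).1 γ) := by
    rw [hv, sumZeroAction_apply, inv_inv, mul_one]
  simp only [twistedAction, correctedLift, Pi.sub_apply, Pi.smul_apply]
  rw [hvγ, cup_fiberIndicator_map_smul hr hz, map_sub, map_zsmul, hcancel, hcancel, inv_inv,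
    mul_one]

end EquivariantLift

section Trace

/-- A family of sets with a common Lebesgue number, over each of which an equivariant map to `Γ`
is locally constant: local trivializations of the covering `X → X / Γ`. -/
structure TrivializingCover (Γ X ι : Type*) [Group Γ] [PseudoMetricSpace X] [MulAction Γ X] where
  piece : ι → Set X
  toGroup : ι → X → Γ
  radius : ℝ
  radius_pos : 0 < radius
  exists_forall_mem_piece : ∀ x, ∃ i, ∀ y, dist x y < radius → y ∈ piece i
  toGroup_smul : ∀ i (γ : Γ) x, toGroup i (γ • x) = γ * toGroup i x
  toGroup_eq : ∀ i, ∀ x ∈ piece i, ∀ y ∈ piece i, dist x y < radius → toGroup i x = toGroup i y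

universe u

variable {Γ : Type u} {X : Type*} [Group Γ] [PseudoMetricSpace X] [MulAction Γ X]

/- Induction on the number of pieces where the cocycle need not vanish: passing to the connecting
cochain raises the degree and makes it vanish on one more piece. -/
theorem TrivializingCover.exists_sum_twistedAction [Fintype Γ] [UniformContinuousConstSMul Γ X]
    {n : ℕ} (hX : ∀ (L : Type u) [AddCommGroup L] (q : ℕ), n < q → ∀ f : Cochain X L,
      IsCocycle Set.univ (q + 1) f → IsCoboundary Set.univ (q + 1) f)
    {ι : Type*} [Finite ι] (C : TrivializingCover Γ X ι) (S : Finset ι)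
    {L : Type u} [AddCommGroup L] (a : Γ →* AddMonoid.End L) {j : ℕ} (hj : n ≤ j)
    {z : Cochain X L} (hz : IsEquivariant a z) (hzc : IsCocycle Set.univ (j + 1) z)
    (hzS : ∀ i ∉ S, LocallyZero (C.piece i) (j + 1) z) :
    ∃ F : Cochain X L, IsCocycle Set.univ (j + 1) F ∧
      LocallyZero Set.univ (j + 1) (z - ∑ γ, twistedAction a γ F) := by
  classical
  induction S using Finset.induction_on generalizing L j with
  | empty =>
    refine ⟨0, IsCocycle.zero, ?_⟩
    have hz0 : LocallyZero Set.univ (j + 1) z :=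
      LocallyZero.of_cover C.radius_pos C.exists_forall_mem_piece (by omega)
        fun i => hzS i (Finset.notMem_empty i)
    refine hz0.congr fun l _ _ => ?_
    simp [twistedAction]
  | insert i S _ ih =>
    have hr := C.toGroup_smul i
    have hvanish : ∀ k ∉ S, LocallyZero (C.piece k) (j + 2)
        (connectingCochain (C.toGroup i) j z) := by
      intro k hk
      by_cases hki : k = i
      · subst hki
        exact locallyZero_connectingCochain C.radius_pos (C.toGroup_eq k)
      · exact (hzS k (by simp [hk, hki])).connectingCochain
    obtain ⟨F', hF', hzF'⟩ := ih (sumZeroAction a) (by omega)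
      (isEquivariant_connectingCochain hr hz) (isCocycle_connectingCochain hzc) hvanish
    obtain ⟨v, hv, hzv⟩ := exists_isEquivariant_primitive _ (hX _ (j + 1) (by omega) F' hF') hzF'
    refine ⟨_, isCocycle_correctedLift hzc hzv 1, LocallyZero.of_eq fun l hl _ => ?_⟩
    simp only [twistedAction_correctedLift hr hz hv, Pi.sub_apply, Finset.sum_apply]
    rw [sum_correctedLift hl, sub_self]

end Trace

section Cover

variable {Γ X : Type*} [Group Γ] [MulAction Γ X]

theorem exists_equivariant_toGroup (hfree : ∀ (γ : Γ) (x : X), γ • x = x → γ = 1) :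
    ∃ s : X → Γ, ∀ (γ : Γ) x, s (γ • x) = γ * s x := by
  let base (x : X) : X := (Quotient.mk (MulAction.orbitRel Γ X) x).out
  have hbase : ∀ x, ∃ γ : Γ, γ • base x = x := fun x =>
    (MulAction.orbitRel Γ X).symm (Quotient.mk_out (s := MulAction.orbitRel Γ X) x)
  choose s hs using hbase
  refine ⟨s, fun γ x => ?_⟩
  have hsame : base (γ • x) = base x :=
    congrArg Quotient.out (Quotient.sound (s := MulAction.orbitRel Γ X) ⟨γ, rfl⟩)
  have hfix : ((γ * s x)⁻¹ * s (γ • x)) • base x = base x := by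
    rw [mul_smul, ← hsame, hs, hsame, inv_smul_eq_iff, mul_smul, hs]
  exact (inv_mul_eq_one.1 (hfree _ _ hfix)).symm

theorem exists_pos_forall_dist_smul_lt [Finite Γ] [PseudoMetricSpace X] [CompactSpace X]
    [ContinuousConstSMul Γ X] {η : ℝ} (hη : 0 < η) :
    ∃ ε > 0, ∀ (γ : Γ) (x y : X), dist x y < ε → dist (γ • x) (γ • y) < η := by
  have hunif : UniformEquicontinuous fun (γ : Γ) (x : X) => γ • x :=
    uniformEquicontinuous_finite.2 fun γ =>
      CompactSpace.uniformContinuous_of_continuous (continuous_const_smul γ)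
  obtain ⟨ε, hε, h⟩ := Metric.uniformEquicontinuous_iff.1 hunif η hη
  exact ⟨ε, hε, fun γ x y hxy => h x y hxy γ⟩

theorem exists_pos_forall_dist_smul_self [Finite Γ] [MetricSpace X] [CompactSpace X]
    [ContinuousConstSMul Γ X] (hfree : ∀ (γ : Γ) (x : X), γ • x = x → γ = 1) :
    ∃ δ > 0, ∀ (γ : Γ) (x : X), dist (γ • x) x < δ → γ = 1 := by
  have hsep : ∀ γ : Γ, ∃ δ > 0, ∀ x : X, dist (γ • x) x < δ → γ = 1 := by
    intro γ
    by_cases hγ : γ = 1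
    · exact ⟨1, one_pos, fun _ _ => hγ⟩
    rcases isEmpty_or_nonempty X with hX | hX
    · exact ⟨1, one_pos, fun x => hX.elim x⟩
    obtain ⟨x, -, hx⟩ := isCompact_univ.exists_isMinOn (Set.univ_nonempty (α := X))
      ((continuous_const_smul γ).dist continuous_id).continuousOn
    exact ⟨dist (γ • x) x, dist_pos.2 fun h => hγ (hfree γ x h),
      fun y hy => absurd hy (not_lt.2 (hx (Set.mem_univ y)))⟩
  choose δ hδ h using hsep
  cases nonempty_fintype Γ
  exact ⟨Finset.univ.inf' ⟨1, Finset.mem_univ _⟩ δ, (Finset.lt_inf'_iff _).2 fun γ _ => hδ γ,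
    fun γ x hx => h γ x (hx.trans_le (Finset.inf'_le _ (Finset.mem_univ γ)))⟩

section Separated

variable [PseudoMetricSpace X] {δ : ℝ} (hδ : ∀ (γ : Γ) (x : X), dist (γ • x) x < δ → γ = 1)

include hδ

theorem eq_of_dist_inv_smul_lt {x y : X} {γ γ' : Γ} (h : dist (γ⁻¹ • x) y < δ / 2)
    (h' : dist (γ'⁻¹ • x) y < δ / 2) : γ = γ' := by
  have hdist : dist ((γ'⁻¹ * γ) • γ⁻¹ • x) (γ⁻¹ • x) < δ := by
    rw [mul_smul, smul_inv_smul]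
    linarith [dist_triangle_right (γ'⁻¹ • x) (γ⁻¹ • x) y]
  exact (inv_mul_eq_one.1 (hδ _ _ hdist)).symm

theorem exists_equivariant_toGroup_near (hfree : ∀ (γ : Γ) (x : X), γ • x = x → γ = 1) (c : X) :
    ∃ r : X → Γ, (∀ (γ : Γ) x, r (γ • x) = γ * r x) ∧
      ∀ (γ : Γ) x, dist (γ⁻¹ • x) c < δ / 2 → r x = γ := by
  classical
  obtain ⟨s, hs⟩ := exists_equivariant_toGroup hfree
  let near (x : X) : Prop := ∃ γ : Γ, dist (γ⁻¹ • x) c < δ / 2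
  let r (x : X) : Γ := if h : near x then h.choose else s x
  have hr : ∀ (γ : Γ) x, dist (γ⁻¹ • x) c < δ / 2 → r x = γ := by
    intro γ x hγ
    have hx : near x := ⟨γ, hγ⟩
    simp only [r, dif_pos hx]
    exact eq_of_dist_inv_smul_lt hδ hx.choose_spec hγ
  refine ⟨r, fun γ x => ?_, hr⟩
  by_cases hx : near x
  · obtain ⟨g, hg⟩ := hx
    rw [hr g x hg]
    exact hr _ _ (by rwa [mul_inv_rev, mul_smul, inv_smul_smul])
  · have hγx : ¬ near (γ • x) := by
      rintro ⟨g, hg⟩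
      exact hx ⟨γ⁻¹ * g, by rwa [mul_inv_rev, inv_inv, mul_smul]⟩
    simp only [r, dif_neg hx, dif_neg hγx, hs]

end Separated

variable [Finite Γ] [MetricSpace X] [CompactSpace X] [ContinuousConstSMul Γ X]

theorem exists_trivializingCover (hfree : ∀ (γ : Γ) (x : X), γ • x = x → γ = 1) :
    ∃ T : Finset X, Nonempty (TrivializingCover Γ X T) := by
  obtain ⟨δ, hδ, hsep⟩ := exists_pos_forall_dist_smul_self hfree
  obtain ⟨ε, hε, hsmul⟩ := exists_pos_forall_dist_smul_lt (Γ := Γ) (X := X) (η := δ / 4)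
    (by positivity)
  obtain ⟨T, hT⟩ := isCompact_univ.elim_nhds_subcover (fun x : X => Metric.ball x (δ / 8))
    fun x _ => Metric.ball_mem_nhds x (by positivity)
  choose r hr hnear using fun c : X => exists_equivariant_toGroup_near hsep hfree c
  exact ⟨T, ⟨{
    piece := fun c => {x | ∃ γ : Γ, dist (γ⁻¹ • x) c < δ / 4}
    toGroup := fun c => r c
    radius := min ε (δ / 8)
    radius_pos := lt_min hε (by positivity)
    exists_forall_mem_piece := fun x => by
      obtain ⟨c, hcT, hxc⟩ := Set.mem_iUnion₂.1 (hT.2 (Set.mem_univ x))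
      refine ⟨⟨c, hcT⟩, fun y hy => ⟨1, ?_⟩⟩
      rw [inv_one, one_smul]
      linarith [dist_triangle_left y c x, Metric.mem_ball.1 hxc, min_le_right ε (δ / 8)]
    toGroup_smul := fun c => hr c
    toGroup_eq := by
      rintro c x ⟨γ, hγ⟩ y - hxy
      have hxy' := hsmul γ⁻¹ x y (hxy.trans_le (min_le_left _ _))
      rw [hnear c γ x (by linarith), hnear c γ y]
      linarith [dist_triangle_left (γ⁻¹ • y) c.1 (γ⁻¹ • x)] }⟩⟩

end Cover

theorem exists_sum_pullback_inv_smul {Γ X : Type*} [Group Γ] [Fintype Γ] [MetricSpace X]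
    [CompactSpace X] [MulAction Γ X] [ContinuousConstSMul Γ X]
    (hfree : ∀ (γ : Γ) (x : X), γ • x = x → γ = 1) {n : ℕ}
    (hX : ∀ (L : Type) [AddCommGroup L] (q : ℕ), n < q → ∀ f : Cochain X L,
      IsCocycle Set.univ (q + 1) f → IsCoboundary Set.univ (q + 1) f)
    {z : Cochain X ℤ} (hz : ∀ γ : Γ, pullback (γ • ·) z = z)
    (hzc : IsCocycle Set.univ (n + 1) z) :
    ∃ F : Cochain X ℤ, IsCocycle Set.univ (n + 1) F ∧
      LocallyZero Set.univ (n + 1) (z - ∑ γ : Γ, pullback (γ⁻¹ • ·) F) := by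
  let e : Shrink.{0} Γ ≃* Γ := Shrink.mulEquiv
  let : MulAction (Shrink.{0} Γ) X := MulAction.compHom X e.toMonoidHom
  have : ContinuousConstSMul (Shrink.{0} Γ) X := ⟨fun γ => continuous_const_smul (e γ)⟩
  have : UniformContinuousConstSMul (Shrink.{0} Γ) X :=
    ⟨fun γ => CompactSpace.uniformContinuous_of_continuous (continuous_const_smul γ)⟩
  have : Fintype (Shrink.{0} Γ) := Fintype.ofEquiv Γ e.symm
  obtain ⟨T, ⟨C⟩⟩ := exists_trivializingCover (Γ := Shrink.{0} Γ) (X := X) fun γ x h =>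
    e.map_eq_one_iff.1 (hfree (e γ) x h)
  obtain ⟨F, hF, hzF⟩ := C.exists_sum_twistedAction hX Finset.univ 1 le_rfl
    (fun γ l => congrFun (hz (e γ)) l) hzc (by simp)
  have htwist (γ : Shrink.{0} Γ) : twistedAction 1 γ F = pullback ((e γ)⁻¹ • ·) F := by
    rw [← map_inv]
    rfl
  refine ⟨F, hF, ?_⟩
  rw [Finset.sum_congr rfl fun γ _ => htwist γ] at hzF
  rwa [← e.toEquiv.sum_comp]

section Smith

theorem exists_smith {t : ℕ} (I : AddSubgroup (Fin t → ℤ)) (hI : I.index ≠ 0) :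
    ∃ (b : Module.Basis (Fin t) ℤ (Fin t → ℤ)) (a : Fin t → ℤ),
      (∀ i, a i • b i ∈ I) ∧ (∏ i, a i).natAbs = I.index := by
  classical
  obtain ⟨n, snf⟩ := (AddSubgroup.toIntSubmodule I).smithNormalForm (Pi.basisFun ℤ (Fin t))
  have hI' : (AddSubgroup.toIntSubmodule I).toAddSubgroup.index ≠ 0 := hI
  have hn := snf.toAddSubgroup_index_ne_zero_iff.1 hI'
  rw [Fintype.card_fin] at hn
  subst hn
  have hf : Function.Bijective snf.f := Finite.injective_iff_bijective.1 snf.f.injective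
  refine ⟨snf.bM.reindex (Equiv.ofBijective snf.f hf).symm, snf.a, fun i => ?_, ?_⟩
  · have h : snf.a i • snf.bM (snf.f i) ∈ I := snf.snf i ▸ (snf.bN i).2
    simpa using h
  · have h : I.index = _ := snf.toAddSubgroup_index_eq_ite
    rw [h, if_pos (by simp)]
    simp only [Ideal.span_singleton_toAddSubgroup_eq_zmultiples, Int.index_zmultiples]
    exact map_prod Int.natAbsHom _ _

end Smith

section TraceIndex

variable {m t : ℕ} {Γ : Type*} [Group Γ] [MulAction Γ (SphereProd m t)]

variable (m t Γ) in
/-- The classes in `H^m((S^m)^t; ℤ) = ℤ ^ t` represented by `Γ`-invariant cochains. -/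
def invariantLattice : AddSubgroup (Fin t → ℤ) where
  carrier := {c | ∃ f : Cochain (SphereProd m t) ℤ, (∀ γ : Γ, pullback (γ • ·) f = f) ∧
    IsCoboundary Set.univ (m + 1) (f - linCocycle m c)}
  zero_mem' := ⟨0, fun _ => rfl, by
    have hzero : linCocycle m (0 : Fin t → ℤ) = 0 := by simp [linCocycle]
    rw [hzero, sub_zero]
    exact IsCoboundary.zero⟩
  add_mem' := by
    rintro c c' ⟨f, hf, h⟩ ⟨f', hf', h'⟩
    refine ⟨f + f', fun γ => by rw [pullback_add, hf, hf'], ?_⟩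
    rw [linCocycle_add, add_sub_add_comm]
    exact h.add h'
  neg_mem' := by
    rintro c ⟨f, hf, h⟩
    refine ⟨-f, fun γ => by rw [pullback_neg, hf], ?_⟩
    rw [linCocycle_neg, ← neg_sub']
    exact h.neg

theorem mem_invariantLattice {c : Fin t → ℤ} :
    c ∈ invariantLattice m t Γ ↔ ∃ f : Cochain (SphereProd m t) ℤ,
      (∀ γ : Γ, pullback (γ • ·) f = f) ∧ IsCoboundary Set.univ (m + 1) (f - linCocycle m c) :=
  Iff.rfl

variable [ContinuousConstSMul Γ (SphereProd m t)]

theorem isCoboundary_pullback_smul_sub {γ : Γ} {f : Cochain (SphereProd m t) ℤ}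
    (htriv : ∀ i, IsCoboundary Set.univ (m + 1)
      (pullback (γ • ·) (coordCocycle (m := m) (t := t) i) - coordCocycle i))
    {e : ℤ} (hf : IsCoboundary Set.univ (m * t + 1) (f - e • topCocycle m t)) :
    IsCoboundary Set.univ (m * t + 1) (pullback (γ • ·) f - e • topCocycle m t) := by
  have htop : IsCoboundary Set.univ (m * t + 1)
      (pullback (γ • ·) (topCocycle m t) - topCocycle m t) := by
    rw [topCocycle, pullback_cupList, List.map_ofFn]
    exact isCoboundary_cupList_sub isCocycle_coordCocycle htriv
  have hsum := (hf.pullback_of_continuous (continuous_const_smul γ)).add (htop.smul e)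
  rwa [pullback_sub, pullback_smul, smul_sub, sub_add_sub_cancel] at hsum

/- An invariant cocycle of top degree is a norm, so its class is divisible by the order of `Γ`. -/
theorem card_dvd_of_invariant [Finite Γ] (hm : 0 < m)
    (hfree : ∀ (γ : Γ) (x : SphereProd m t), γ • x = x → γ = 1)
    (htriv : ∀ (γ : Γ) i, IsCoboundary Set.univ (m + 1)
      (pullback (γ • ·) (coordCocycle (m := m) (t := t) i) - coordCocycle i))
    {z : Cochain (SphereProd m t) ℤ} (hinv : ∀ γ : Γ, pullback (γ • ·) z = z) {k : ℤ}
    (hz : IsCoboundary Set.univ (m * t + 1) (z - k • topCocycle m t)) :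
    (Nat.card Γ : ℤ) ∣ k := by
  have := Fintype.ofFinite Γ
  have hzc : IsCocycle Set.univ (m * t + 1) z := by
    simpa using hz.isCocycle.add ((isCocycle_topCocycle m t).smul k)
  obtain ⟨F, hF, hzF⟩ := exists_sum_pullback_inv_smul hfree
    (fun L _ q hq f hf => isCoboundary_of_mul_lt hq hf) hinv hzc
  obtain ⟨e, he⟩ := exists_isCoboundary_sub_smul_topCocycle hm hF
  have hnorm : IsCoboundary Set.univ (m * t + 1)
      (∑ γ : Γ, (pullback (γ⁻¹ • ·) F - e • topCocycle m t)) :=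
    IsCoboundary.sum fun γ _ => isCoboundary_pullback_smul_sub (htriv γ⁻¹) he
  rw [Finset.sum_sub_distrib, Finset.sum_const, Finset.card_univ, ← Nat.card_eq_fintype_card]
    at hnorm
  have hdiff : (Nat.card Γ : ℤ) * e - k = 0 := by
    refine eq_zero_of_isCoboundary_smul_topCocycle (m := m) (t := t) ?_
    convert (hz.sub hzF.isCoboundary).sub hnorm using 1
    rw [sub_smul, mul_smul, Nat.cast_smul_eq_nsmul]
    abel
  exact ⟨e, (sub_eq_zero.1 hdiff).symm⟩

theorem card_dvd_index_invariantLattice [Finite Γ] (hm : 0 < m)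
    (hfree : ∀ (γ : Γ) (x : SphereProd m t), γ • x = x → γ = 1)
    (htriv : ∀ (γ : Γ) i, IsCoboundary Set.univ (m + 1)
      (pullback (γ • ·) (coordCocycle (m := m) (t := t) i) - coordCocycle i))
    {s : ℕ} (hs : Nat.card Γ = 2 ^ s) (hI : (invariantLattice m t Γ).index ≠ 0) :
    Nat.card Γ ∣ (invariantLattice m t Γ).index := by
  obtain ⟨b, a, hab, ha⟩ := exists_smith _ hI
  choose y hy hyb using fun i => mem_invariantLattice.1 (hab i)
  obtain ⟨c, hc, hz⟩ := exists_odd_isCoboundary_cupList_sub hm b a hyb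
  have hinv : ∀ γ : Γ,
      pullback (γ • ·) (cupList m (List.ofFn y)) = cupList m (List.ofFn y) := by
    intro γ
    rw [pullback_cupList, List.map_ofFn]
    exact congrArg (fun y => cupList m (List.ofFn y)) (funext fun i => hy i γ)
  have hcoprime : IsCoprime (Nat.card Γ : ℤ) c := by
    obtain ⟨k, hk⟩ := hc
    rw [hs, Nat.cast_pow, hk]
    exact IsCoprime.pow_left ⟨-k, 1, by push_cast; ring⟩
  rw [← ha, ← Int.natCast_dvd]
  exact hcoprime.dvd_of_dvd_mul_right (card_dvd_of_invariant hm hfree htriv hinv hz)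

end TraceIndex

section Truncation

variable {X Y L : Type*}

theorem pullback_pullback_comm {φ : X → Y} {ψ : X → X} {ψ' : Y → Y} (h : ∀ x, φ (ψ x) = ψ' (φ x))
    (f : Cochain Y L) : pullback ψ (pullback φ f) = pullback φ (pullback ψ' f) := by
  simp only [pullback_pullback, h]

theorem pullback_smul_pullback_smul {Γ : Type*} [Group Γ] [MulAction Γ X] (γ γ' : Γ)
    (f : Cochain X L) :
    pullback (γ' • ·) (pullback (γ • ·) f) = pullback ((γ * γ') • ·) f := by
  simp only [pullback_pullback, mul_smul]

variable [AddCommGroup L]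

/-- The part of a cochain on tuples of a given length. -/
def trunc (n : ℕ) (f : Cochain X L) : Cochain X L := fun l => if l.length = n then f l else 0

/-- A cochain concentrated on tuples of a given length. -/
def SupportedIn (n : ℕ) (f : Cochain X L) : Prop := ∀ l : List X, l.length ≠ n → f l = 0

theorem supportedIn_trunc (n : ℕ) (f : Cochain X L) : SupportedIn n (trunc n f) :=
  fun _ h => if_neg h

theorem trunc_of_supportedIn {n : ℕ} {f : Cochain X L} (h : SupportedIn n f) : trunc n f = f := by
  funext l
  simp only [trunc]
  split_ifs with hl
  · rfl
  · exact (h l hl).symm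

theorem trunc_sub (n : ℕ) (f g : Cochain X L) : trunc n (f - g) = trunc n f - trunc n g := by
  funext l
  simp only [trunc, Pi.sub_apply]
  split_ifs <;> simp

theorem d_trunc (n : ℕ) (f : Cochain X L) : d (trunc n f) = trunc (n + 1) (d f) := by
  funext l
  simp only [trunc]
  split_ifs with hl
  · exact d_congr fun l' _ h => if_pos (by omega)
  · exact d_eq_zero fun l' _ h => if_neg (by omega)

theorem pullback_trunc (φ : X → Y) (n : ℕ) (f : Cochain Y L) :
    pullback φ (trunc n f) = trunc n (pullback φ f) := by
  funext l
  simp [pullback, trunc]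

theorem SupportedIn.pullback {n : ℕ} {f : Cochain Y L} (h : SupportedIn n f) (φ : X → Y) :
    SupportedIn n (pullback φ f) :=
  fun l hl => h _ (by simpa using hl)

theorem SupportedIn.d {n : ℕ} {f : Cochain X L} (h : SupportedIn n f) :
    SupportedIn (n + 1) (d f) := by
  rw [← trunc_of_supportedIn h, d_trunc]
  exact supportedIn_trunc _ _

theorem SupportedIn.smul {n : ℕ} {f : Cochain X L} (h : SupportedIn n f) (a : ℤ) :
    SupportedIn n (a • f) :=
  fun l hl => by simp [h l hl]

theorem SupportedIn.sub {n : ℕ} {f g : Cochain X L} (h : SupportedIn n f) (h' : SupportedIn n g) :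
    SupportedIn n (f - g) :=
  fun l hl => by simp [h l hl, h' l hl]

theorem locallyZero_trunc {X : Type*} [PseudoMetricSpace X] {A : Set X} {n : ℕ} {f : Cochain X L}
    (h : LocallyZero A n f) : LocallyZero A n (trunc n f) :=
  h.congr fun _ hl _ => (if_pos hl).symm

theorem exists_primitive [Nonempty X] {f : Cochain X L} (h : Cochain.d f = 0) :
    ∃ y, Cochain.d y = f := by
  obtain ⟨x⟩ := ‹Nonempty X›
  exact ⟨fun l => f (x :: l), funext fun l => d_cone f x l (congrFun h _)⟩

end Truncation

section Fold

variable {Λ X : Type*} [Group Λ] [MulAction Λ X] {H : Subgroup Λ} {c : Λ}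

open Classical in
/-- The map of `X` onto the points whose label `σ x` lies in `H`, moving the other points by `c`. -/
def fold (H : Subgroup Λ) (c : Λ) (σ : X → Λ) (x : X) : X := if σ x ∈ H then x else c • x

theorem fold_smul_self (hH : H.index = 2) (hc : c ∉ H) (hcc : c * c = 1) {σ : X → Λ}
    (hσ : ∀ (γ : Λ) x, σ (γ • x) = γ * σ x) (x : X) : fold H c σ (c • x) = fold H c σ x := by
  have hswap : σ (c • x) ∈ H ↔ σ x ∉ H := by
    rw [hσ, Subgroup.mul_mem_iff_of_index_two hH, iff_false_left hc]
  by_cases h : σ x ∈ H <;> simp [fold, hswap, h, smul_smul, hcc]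

theorem fold_smul_of_mem {σ : X → Λ} (hσ : ∀ (γ : Λ) x, σ (γ • x) = γ * σ x) {h : Λ} (hh : h ∈ H)
    (hcomm : Commute c h) (x : X) : fold H c σ (h • x) = h • fold H c σ x := by
  have hmem : σ (h • x) ∈ H ↔ σ x ∈ H := by rw [hσ, H.mul_mem_cancel_left hh]
  by_cases hx : σ x ∈ H
  · simp only [fold, hmem, hx, if_true]
  · simp only [fold, hmem, hx, if_false, ← mul_smul, hcomm.eq]

theorem pullback_smul_eq_of_index_two {L : Type*} (hH : H.index = 2) (hc : c ∉ H)
    {f : Cochain X L} (hfH : ∀ h ∈ H, pullback (h • ·) f = f) (hfc : pullback (c • ·) f = f)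
    (γ : Λ) : pullback (γ • ·) f = f := by
  by_cases hγ : γ ∈ H
  · exact hfH γ hγ
  · have hmem : c⁻¹ * γ ∈ H := by simp [Subgroup.mul_mem_iff_of_index_two hH, hc, hγ]
    have h := hfH _ hmem
    nth_rw 1 [← hfc] at h
    rwa [pullback_smul_pullback_smul, mul_inv_cancel_left] at h

/- With `s` the folding map and `η` the prism between `s` and the identity,
`s^* y + η + c^* η` is invariant with coboundary `2 s^* z + (z - s^* z) + (z - s^* z)`. -/
theorem exists_invariant_primitive_two_smul_of_subgroup {L : Type*} [AddCommGroup L]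
    (hH : H.index = 2) (hc : c ∉ H) (hcc : c * c = 1) (hcomm : ∀ h ∈ H, Commute c h)
    (hfree : ∀ (γ : Λ) (x : X), γ • x = x → γ = 1) {z : Cochain X L}
    (hinv : ∀ γ : Λ, pullback (γ • ·) z = z) (hz : d z = 0) {y : Cochain X L}
    (hy : ∀ h ∈ H, pullback (h • ·) y = y) (hdy : d y = (2 : ℤ) • z) :
    ∃ y', (∀ γ : Λ, pullback (γ • ·) y' = y') ∧ d y' = (2 : ℤ) • z := by
  obtain ⟨σ, hσ⟩ := exists_equivariant_toGroup hfree
  set s := fold H c σ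
  set η := prism s (fun x => x) z
  have hsH : ∀ h ∈ H, ∀ x, s (h • x) = h • s x := fun h hh =>
    fold_smul_of_mem hσ hh (hcomm h hh)
  have hsc : ∀ f : Cochain X L, pullback (c • ·) (pullback s f) = pullback s f := fun f => by
    simp only [pullback_pullback, s, fold_smul_self hH hc hcc hσ]
  have hdη : d η = z - pullback s z := by
    have hzero : prism s (fun x => x) (0 : Cochain X L) = 0 :=
      funext fun l => prism_eq_zero fun _ _ _ => rfl
    have h := d_prism s (fun x => x) z
    rwa [hz, hzero, add_zero, pullback_id] at h
  have hηH : ∀ h ∈ H, pullback (h • ·) η = η := fun h hh =>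
    (prism_pullback (g := id) (g' := id) (hsH h hh) (fun _ => rfl) z).trans
      (congrArg (prism s id) (hinv h))
  refine ⟨pullback s y + η + pullback (c • ·) η,
    pullback_smul_eq_of_index_two hH hc (fun h hh => ?_) ?_, ?_⟩
  · have hcη : pullback (h • ·) (pullback (c • ·) η) = pullback (c • ·) η := by
      rw [pullback_pullback_comm fun x => by rw [← mul_smul, (hcomm h hh).eq, mul_smul], hηH h hh]
    rw [pullback_add, pullback_add, hηH h hh, hcη, pullback_pullback_comm (hsH h hh), hy h hh]
  · simp only [pullback_add, hsc, pullback_smul_pullback_smul, hcc, one_smul, pullback_id]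
    abel
  · simp only [d_add, d_pullback, hdy, hdη, pullback_sub, pullback_smul, hinv, hsc]
    module

end Fold

section ElementaryAbelian

theorem exists_subgroup_index_two {Λ : Type*} [Group Λ] {n : ℕ} (hcard : Nat.card Λ = 2 ^ (n + 1)) :
    ∃ H : Subgroup Λ, Nat.card H = 2 ^ n ∧ H.index = 2 := by
  have : Finite Λ := Nat.finite_of_card_ne_zero (by rw [hcard]; positivity)
  have : Fact (Nat.Prime 2) := ⟨Nat.prime_two⟩
  obtain ⟨H, hH⟩ := Sylow.exists_subgroup_card_pow_prime 2 (hcard ▸ pow_dvd_pow 2 n.le_succ)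
  have h := H.card_mul_index
  rw [hH, hcard, pow_succ] at h
  exact ⟨H, hH, Nat.eq_of_mul_eq_mul_left (by positivity) h⟩

theorem exists_invariant_primitive_two_smul {Λ X : Type*} [Group Λ] [MulAction Λ X] [Nonempty X]
    {n : ℕ} (hcard : Nat.card Λ = 2 ^ n) (hsq : ∀ x : Λ, x * x = 1)
    (hfree : ∀ (γ : Λ) (x : X), γ • x = x → γ = 1) {L : Type*} [AddCommGroup L]
    {z : Cochain X L} (hinv : ∀ γ : Λ, pullback (γ • ·) z = z) (hz : d z = 0) :
    ∃ y, (∀ γ : Λ, pullback (γ • ·) y = y) ∧ d y = (2 : ℤ) • z := by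
  induction n generalizing Λ with
  | zero =>
    obtain ⟨y, rfl⟩ := exists_primitive hz
    have : Subsingleton Λ := (Nat.card_eq_one_iff_unique.1 (by simpa using hcard)).1
    refine ⟨(2 : ℤ) • y, fun γ => ?_, d_zsmul _ _⟩
    rw [Subsingleton.elim γ 1]
    simp only [one_smul, pullback_id]
  | succ n ih =>
    obtain ⟨H, hH, hindex⟩ := exists_subgroup_index_two hcard
    obtain ⟨c, hc⟩ : ∃ c, c ∉ H := by
      by_contra! h
      rw [(Subgroup.eq_top_iff' H).2 h, Subgroup.index_top] at hindex
      omega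
    obtain ⟨y, hy, hdy⟩ := ih hH (fun x => Subtype.ext (hsq x))
      (fun γ x h => Subtype.ext (hfree γ x h)) (fun γ => hinv γ)
    exact exists_invariant_primitive_two_smul_of_subgroup hindex hc (hsq c)
      (fun h _ => commute_of_mul_self_eq_one hsq c h) hfree hinv hz (fun h hh => hy ⟨h, hh⟩) hdy

/-- A factor which makes every invariant cocycle on `p`-tuples, for a free action of an elementary
abelian `2`-group, the coboundary of an invariant cochain. -/
def exponentLoss (p : ℕ) : ℤ := if 3 ≤ p then 2 else 1

variable {Λ X : Type*} [Group Λ] [MulAction Λ X] [Nonempty X] {z : Cochain X ℤ}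

/- The defect of invariance of `y ↦ z (x, y)` is a homomorphism from a torsion group to `ℤ`. -/
theorem exists_invariant_primitive_of_supportedIn_two (hsq : ∀ x : Λ, x * x = 1)
    (hinv : ∀ γ : Λ, pullback (γ • ·) z = z) (hs : SupportedIn 2 z) (hz : d z = 0) :
    ∃ y, (∀ γ : Λ, pullback (γ • ·) y = y) ∧ SupportedIn 1 y ∧ d y = z := by
  obtain ⟨x⟩ := ‹Nonempty X›
  refine ⟨trunc 1 fun l => z (x :: l), fun γ => ?_, supportedIn_trunc _ _, ?_⟩
  · rw [pullback_trunc]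
    funext l
    simp only [trunc]
    split_ifs with h
    · obtain ⟨y, rfl⟩ := List.length_eq_one_iff.1 h
      have hcone := congrFun hz [x, y, γ • y]
      have hback := congrFun hz [y, γ • y, y]
      have hconst := congrFun hz [y, y, y]
      have hswap := congrFun (hinv γ) [y, γ • y]
      simp only [d_cons, d_nil, Pi.zero_apply, pullback, List.map_cons, List.map_nil, ← mul_smul,
        hsq, one_smul] at hcone hback hconst hswap ⊢
      linarith
    · rfl
  · have h : d (fun l => z (x :: l)) = z := funext fun l => d_cone z x l (congrFun hz _)
    rw [d_trunc, h, trunc_of_supportedIn hs]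

theorem exists_invariant_primitive_exponentLoss_smul {n p : ℕ} (hcard : Nat.card Λ = 2 ^ n)
    (hsq : ∀ x : Λ, x * x = 1) (hfree : ∀ (γ : Λ) (x : X), γ • x = x → γ = 1)
    (hinv : ∀ γ : Λ, pullback (γ • ·) z = z) (hs : SupportedIn (p + 1) z) (hz : d z = 0) :
    ∃ y, (∀ γ : Λ, pullback (γ • ·) y = y) ∧ SupportedIn p y ∧ d y = exponentLoss (p + 1) • z := by
  have hcase : p = 0 ∨ p = 1 ∨ 2 ≤ p := by omega
  rcases hcase with rfl | rfl | hp
  · obtain ⟨y, rfl⟩ := exists_primitive hz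
    refine ⟨trunc 0 y, fun γ => ?_, supportedIn_trunc _ _, ?_⟩
    · rw [pullback_trunc]
      funext l
      simp only [trunc, List.length_eq_zero_iff]
      split_ifs with h
      · rw [h]
        rfl
      · rfl
    · rw [d_trunc, trunc_of_supportedIn hs]
      simp [exponentLoss]
  · simpa [exponentLoss] using exists_invariant_primitive_of_supportedIn_two hsq hinv hs hz
  · obtain ⟨y, hy, hdy⟩ := exists_invariant_primitive_two_smul hcard hsq hfree hinv hz
    refine ⟨trunc p y, fun γ => by rw [pullback_trunc, hy], supportedIn_trunc _ _, ?_⟩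
    rw [d_trunc, hdy, trunc_of_supportedIn (hs.smul 2), exponentLoss, if_pos (by omega)]

end ElementaryAbelian

section DoubleComplex

/-- The cochains on pairs of a list of points of `W` and a list of points of `X`: the double complex
of the product, curried so that the operations of `Cochain` apply to the first variable. -/
abbrev DoubleCochain (W X : Type*) := Cochain W (Cochain X ℤ)

variable {Γ W X : Type*}

/-- The differential of the double complex in the second variable. -/
def vertD (u : DoubleCochain W X) : DoubleCochain W X := fun w => d (u w)

theorem d_vertD (u : DoubleCochain W X) : d (vertD u) = vertD (d u) :=
  funext fun w => d_hom dHom u w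

theorem vertD_vertD (u : DoubleCochain W X) : vertD (vertD u) = 0 := funext fun w => d_d (u w)

theorem vertD_zero : vertD (0 : DoubleCochain W X) = 0 := funext fun _ => map_zero dHom

theorem vertD_add (u v : DoubleCochain W X) : vertD (u + v) = vertD u + vertD v :=
  funext fun _ => d_add _ _

theorem vertD_sub (u v : DoubleCochain W X) : vertD (u - v) = vertD u - vertD v :=
  funext fun _ => d_sub _ _

theorem vertD_smul (a : ℤ) (u : DoubleCochain W X) : vertD (a • u) = a • vertD u :=
  funext fun _ => d_zsmul _ _

theorem d_apply (u : DoubleCochain W X) (w : List W) (l : List X) :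
    d u w l = d (fun w => u w l) w :=
  (d_hom (Pi.evalAddMonoidHom (fun _ : List X => ℤ) l) u w).symm

theorem supportedIn_d_apply {p : ℕ} {u : DoubleCochain W X} (h : ∀ w, SupportedIn p (u w))
    (w : List W) : SupportedIn p (d u w) := by
  intro l hl
  rw [d_apply]
  exact d_eq_zero fun w _ _ => h w l hl

/-- The contraction of the double complex in the first variable defined by a map `e : X → W`. -/
def contraction (e : X → W) (u : DoubleCochain W X) : DoubleCochain W X := fun w l =>
  match l with
  | [] => 0
  | x :: l => u (e x :: w) (x :: l)

theorem supportedIn_contraction {p : ℕ} {u : DoubleCochain W X} (e : X → W)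
    (h : ∀ w, SupportedIn p (u w)) (w : List W) : SupportedIn p (contraction e u w) := by
  intro l hl
  match l with
  | [] => rfl
  | x :: l => exact h _ _ hl

theorem d_contraction {u : DoubleCochain W X} (e : X → W) (hu : d u = 0) (hnil : ∀ w, u w [] = 0) :
    d (contraction e u) = u := by
  funext w l
  rw [d_apply]
  match l with
  | [] =>
    rw [hnil]
    exact d_eq_zero fun _ _ _ => rfl
  | x :: l =>
    have h := congrFun (d_cone u (e x) w (congrFun hu _)) (x :: l)
    rw [d_apply] at h
    exact h

/-- The translate of a cochain of the double complex along a map in the second variable. -/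
def translate (τ : X → X) (u : DoubleCochain W X) : DoubleCochain W X := fun w => pullback τ (u w)

theorem d_translate (τ : X → X) (u : DoubleCochain W X) :
    d (translate τ u) = translate τ (d u) := by
  funext w l
  rw [d_apply]
  exact (d_apply u _ _).symm

theorem vertD_translate (τ : X → X) (u : DoubleCochain W X) :
    vertD (translate τ u) = translate τ (vertD u) :=
  funext fun _ => d_pullback τ _

section Column

variable {ψ : Cochain X ℤ}

open Classical in
/-- A cochain in the second variable, placed in the leftmost column. -/
def column (ψ : Cochain X ℤ) : DoubleCochain W X := fun w => if w = [] then ψ else 0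

theorem supportedIn_column {p : ℕ} (h : SupportedIn p ψ) (w : List W) :
    SupportedIn p (column ψ w) := by
  intro l hl
  simp only [column]
  split_ifs
  · exact h l hl
  · rfl

theorem vertD_column (h : d ψ = 0) : vertD (column ψ : DoubleCochain W X) = 0 := by
  funext w
  simp only [vertD, column]
  split_ifs
  · rw [h]
    rfl
  · exact map_zero dHom

theorem column_smul (a : ℤ) : (column (a • ψ) : DoubleCochain W X) = a • column ψ := by
  funext w
  simp only [column, Pi.smul_apply]
  split_ifs <;> simp

theorem column_translate_sub (τ : X → X) :
    (column (pullback τ ψ - ψ) : DoubleCochain W X) = translate τ (column ψ) - column ψ := by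
  funext w
  simp only [translate, column, Pi.sub_apply]
  split_ifs
  · rfl
  · exact (sub_self 0).symm

end Column

variable [Group Γ] [Group W] [MulAction Γ X]

/-- Invariance of a cochain of the double complex under the diagonal action of `Γ`, which acts on
`W` by translations through `π`. -/
def IsInvariant (π : Γ →* W) (u : DoubleCochain W X) : Prop :=
  ∀ (γ : Γ) w, pullback (γ • ·) (u (w.map (π γ * ·))) = u w

variable {π : Γ →* W} {u v : DoubleCochain W X}

theorem IsInvariant.d (hu : IsInvariant π u) : IsInvariant π (d u) := by
  intro γ w
  let φ : Cochain X ℤ →+ Cochain X ℤ :=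
    { toFun := pullback (γ • ·), map_zero' := rfl, map_add' := fun _ _ => rfl }
  calc φ (Cochain.d u (w.map (π γ * ·)))
      = φ (Cochain.d (Cochain.pullback (π γ * ·) u) w) := by rw [d_pullback]; rfl
    _ = Cochain.d (fun w => φ (u (w.map (π γ * ·)))) w := (d_hom φ _ w).symm
    _ = Cochain.d u w := congrArg (fun f => Cochain.d f w) (funext fun w => hu γ w)

theorem IsInvariant.vertD (hu : IsInvariant π u) : IsInvariant π (vertD u) :=
  fun γ w => (d_pullback _ _).symm.trans (congrArg Cochain.d (hu γ w))

theorem IsInvariant.smul (hu : IsInvariant π u) (a : ℤ) : IsInvariant π (a • u) :=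
  fun γ w => congrArg (a • ·) (hu γ w)

theorem IsInvariant.sub (hu : IsInvariant π u) (hv : IsInvariant π v) : IsInvariant π (u - v) :=
  fun γ w => congrArg₂ (· - ·) (hu γ w) (hv γ w)

theorem IsInvariant.pullback_of_mem_ker (hu : IsInvariant π u) {γ : Γ} (hγ : γ ∈ π.ker)
    (w : List W) : Cochain.pullback (γ • ·) (u w) = u w := by
  simpa only [MonoidHom.mem_ker.1 hγ, one_mul, List.map_id'] using hu γ w

section Extension

theorem exists_equivariant_lift (π : Γ →* W) :
    ∃ σ : W → Γ, ∀ (γ : Γ) w, π (σ (π γ * w)) = π γ * π (σ w) := by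
  obtain ⟨s, hs⟩ := exists_equivariant_toGroup (Γ := π.range) (X := W) fun γ x h =>
    Subtype.ext (mul_eq_right.1 h)
  choose σ hσ using fun w => (s w).2
  refine ⟨σ, fun γ w => ?_⟩
  rw [hσ, hσ]
  exact congrArg Subtype.val (hs ⟨π γ, γ, rfl⟩ w)

/-- The extension of a family of cochains from the lists starting in a fundamental domain of the
translations of `W`, along the equivariant lift `σ`. -/
def equivariantExtension (π : Γ →* W) (σ : W → Γ) (y : DoubleCochain W X) : DoubleCochain W X
  | [] => 0
  | w₀ :: w => pullback ((σ w₀)⁻¹ • ·) (y ((w₀ :: w).map (π (σ w₀)⁻¹ * ·)))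

theorem isInvariant_equivariantExtension {σ : W → Γ}
    (hσ : ∀ (γ : Γ) w, π (σ (π γ * w)) = π γ * π (σ w)) {y : DoubleCochain W X}
    (hy : ∀ w ≠ [], ∀ γ ∈ π.ker, pullback (γ • ·) (y w) = y w) :
    IsInvariant π (equivariantExtension π σ y) := by
  intro γ w
  match w with
  | [] => rfl
  | w₀ :: w =>
    set g := σ (π γ * w₀) with hg
    have hker : g⁻¹ * γ * σ w₀ ∈ π.ker := by
      rw [MonoidHom.mem_ker, map_mul, map_mul, map_inv, hg, hσ]
      group
    have htranslate : ((w₀ :: w).map (π γ * ·)).map (π g⁻¹ * ·) =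
        (w₀ :: w).map (π (σ w₀)⁻¹ * ·) := by
      rw [List.map_map]
      refine List.map_congr_left fun v _ => ?_
      simp only [Function.comp_apply, map_inv, hg, hσ]
      group
    calc pullback (γ • ·) (pullback (g⁻¹ • ·) (y (((w₀ :: w).map (π γ * ·)).map (π g⁻¹ * ·))))
        = pullback ((g⁻¹ * γ * σ w₀ * (σ w₀)⁻¹) • ·) (y ((w₀ :: w).map (π (σ w₀)⁻¹ * ·))) := by
          rw [htranslate, pullback_smul_pullback_smul, mul_inv_cancel_right]
      _ = pullback ((σ w₀)⁻¹ • ·) (y ((w₀ :: w).map (π (σ w₀)⁻¹ * ·))) := by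
          rw [← pullback_smul_pullback_smul, hy _ (by simp) _ hker]

theorem exists_isInvariant_of_forall_ker {P : Cochain X ℤ → Cochain X ℤ → Prop}
    (hP : ∀ (γ : Γ) f y, P f y → P (pullback (γ • ·) f) (pullback (γ • ·) y))
    {z : DoubleCochain W X} (hz : IsInvariant π z)
    (h : ∀ w ≠ [], ∃ y, (∀ γ ∈ π.ker, pullback (γ • ·) y = y) ∧ P (z w) y) :
    ∃ y, IsInvariant π y ∧ y [] = 0 ∧ ∀ w ≠ [], P (z w) (y w) := by
  obtain ⟨σ, hσ⟩ := exists_equivariant_lift π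
  choose! y hy hyP using h
  refine ⟨equivariantExtension π σ y, isInvariant_equivariantExtension hσ hy, rfl, fun w hw => ?_⟩
  match w with
  | [] => exact absurd rfl hw
  | w₀ :: w =>
    have hpull := hP (σ w₀)⁻¹ _ _ (hyP ((w₀ :: w).map (π (σ w₀)⁻¹ * ·)) (by simp))
    rwa [hz] at hpull

end Extension

section Contraction

theorem IsInvariant.contraction {e : X → W} (he : ∀ (γ : Γ) x, e (γ • x) = π γ * e x)
    (hu : IsInvariant π u) : IsInvariant π (contraction e u) := by
  intro γ w
  funext l
  match l with
  | [] => rfl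
  | x :: l =>
    have h := congrFun (hu γ (e x :: w)) (x :: l)
    simp only [Cochain.pullback, List.map_cons, Cochain.contraction, he] at h ⊢
    exact h

end Contraction

/-- A zigzag in the double complex, from a cochain down to a cochain `ω` of the bottom row, each
step of which divides by a vertical differential at the cost of the factor `exponentLoss`. -/
def IsZigzag (π : Γ →* W) : ℕ → DoubleCochain W X → Cochain W ℤ → Prop
  | 0, u, ω => ∀ w, u w [] = ω w
  | p + 1, u, ω => ∃ u', IsInvariant π u' ∧ (∀ w, SupportedIn p (u' w)) ∧
    exponentLoss (p + 1) • d u = vertD u' ∧ IsZigzag π p u' ω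

variable {p : ℕ} {ω θ : Cochain W ℤ}

theorem IsZigzag.smul (a : ℤ) (h : IsZigzag π p u ω) : IsZigzag π p (a • u) (a • ω) := by
  induction p generalizing u with
  | zero => exact fun w => congrArg (a • ·) (h w)
  | succ p ih =>
    obtain ⟨u', hinv, hs, hd, hzig⟩ := h
    exact ⟨a • u', hinv.smul a, fun w => (hs w).smul a,
      by rw [d_zsmul, vertD_smul, smul_comm, hd], ih hzig⟩

theorem IsZigzag.sub (h : IsZigzag π p u ω) (h' : IsZigzag π p v θ) :
    IsZigzag π p (u - v) (ω - θ) := by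
  induction p generalizing u v with
  | zero => exact fun w => congrArg₂ (· - ·) (h w) (h' w)
  | succ p ih =>
    obtain ⟨u', hinv, hs, hd, hzig⟩ := h
    obtain ⟨v', hinv', hs', hd', hzig'⟩ := h'
    exact ⟨u' - v', hinv.sub hinv', fun w => (hs w).sub (hs' w),
      by rw [d_sub, vertD_sub, smul_sub, hd, hd'], ih hzig hzig'⟩

section Translate

variable {τ : X → X} (hτ : ∀ γ : Γ, ∃ γ' : Γ, π γ = π γ' ∧ ∀ x, τ (γ • x) = γ' • τ x)

include hτ

theorem IsInvariant.translate (hu : IsInvariant π u) : IsInvariant π (translate τ u) := by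
  intro γ w
  obtain ⟨γ', hπ, hγ'⟩ := hτ γ
  simp only [Cochain.translate]
  rw [pullback_pullback_comm hγ', hπ, hu]

theorem IsZigzag.translate (h : IsZigzag π p u ω) : IsZigzag π p (translate τ u) ω := by
  induction p generalizing u with
  | zero => exact fun w => h _
  | succ p ih =>
    obtain ⟨u', hinv, hs, hd, hzig⟩ := h
    refine ⟨Cochain.translate τ u', hinv.translate hτ, fun w => (hs _).pullback τ, ?_, ih hzig⟩
    rw [d_translate, vertD_translate, ← hd]
    rfl

end Translate

section Descent

variable [Nonempty X] {n : ℕ}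

theorem exists_exponentLoss_smul_d_eq_vertD (hcard : Nat.card π.ker = 2 ^ n)
    (hsq : ∀ x ∈ π.ker, x * x = 1) (hfree : ∀ (γ : Γ) (x : X), γ • x = x → γ = 1)
    (hu : IsInvariant π u) (hs : ∀ w, SupportedIn (p + 1) (u w)) (hd : vertD (d u) = 0) :
    ∃ u', IsInvariant π u' ∧ (∀ w, SupportedIn p (u' w)) ∧
      exponentLoss (p + 1) • d u = vertD u' := by
  have hker : ∀ w, ∃ y, (∀ γ ∈ π.ker, pullback (γ • ·) y = y) ∧
      SupportedIn p y ∧ d y = exponentLoss (p + 1) • d u w := by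
    intro w
    obtain ⟨y, hinv, hy⟩ := exists_invariant_primitive_exponentLoss_smul (Λ := π.ker) hcard
      (fun x => Subtype.ext (hsq x x.2)) (fun γ x h => Subtype.ext (hfree γ x h))
      (fun γ => hu.d.pullback_of_mem_ker γ.2 w) (supportedIn_d_apply hs w) (congrFun hd w)
    exact ⟨y, fun γ hγ => hinv ⟨γ, hγ⟩, hy⟩
  obtain ⟨u', hu', hnil, h⟩ := exists_isInvariant_of_forall_ker
    (P := fun f y => SupportedIn p y ∧ d y = exponentLoss (p + 1) • f)
    (fun γ f y h => ⟨h.1.pullback _, by rw [d_pullback, h.2, pullback_smul]⟩) hu.d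
    fun w _ => hker w
  refine ⟨u', hu', fun w => ?_, funext fun w => ?_⟩
  · by_cases hw : w = []
    · rw [hw, hnil]
      exact fun _ _ => rfl
    · exact (h w hw).1
  · by_cases hw : w = []
    · rw [hw]
      simp only [vertD, hnil, Pi.smul_apply, d_nil, smul_zero]
      exact (map_zero dHom).symm
    · exact (h w hw).2.symm

theorem exists_isZigzag (hcard : Nat.card π.ker = 2 ^ n) (hsq : ∀ x ∈ π.ker, x * x = 1)
    (hfree : ∀ (γ : Γ) (x : X), γ • x = x → γ = 1) (hu : IsInvariant π u)
    (hs : ∀ w, SupportedIn p (u w)) (hd : vertD (d u) = 0) :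
    ∃ ω, IsZigzag π p u ω ∧ (∀ γ : Γ, pullback (π γ * ·) ω = ω) ∧ d ω = 0 := by
  induction p generalizing u with
  | zero =>
    refine ⟨fun w => u w [], fun _ => rfl, fun γ => funext fun w => congrFun (hu γ w) [], ?_⟩
    funext w
    obtain ⟨x⟩ := ‹Nonempty X›
    have h := congrFun (congrFun hd w) [x]
    simp only [vertD, d_cons, d_nil, Pi.zero_apply, sub_zero] at h
    rw [d_apply] at h
    exact h
  | succ p ih =>
    obtain ⟨u', hu', hs', hd'⟩ := exists_exponentLoss_smul_d_eq_vertD hcard hsq hfree hu hs hd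
    obtain ⟨ω, hzig, hω⟩ := ih hu' hs' (by rw [← d_vertD, ← hd', d_zsmul, d_d, smul_zero])
    exact ⟨ω, ⟨u', hu', hs', hd', hzig⟩, hω⟩

end Descent

theorem exists_eq_d_of_bottom_row {ω' : Cochain W ℤ} (hs : ∀ w, SupportedIn 0 (u w))
    (hu : ∀ w, u w [] = d ω' w) (hinv : ∀ γ : Γ, pullback (π γ * ·) ω' = ω') :
    ∃ b, IsInvariant π b ∧ u = d b := by
  refine ⟨fun w l => if l = [] then ω' w else 0, fun γ w => ?_, ?_⟩
  · funext l
    simp only [pullback, List.map_eq_nil_iff]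
    split_ifs
    · exact congrFun (hinv γ) w
    · rfl
  · funext w l
    rw [d_apply]
    by_cases hl : l = []
    · simp only [hl, if_true, hu]
    · simp only [if_neg hl, hs w l (by simpa using hl)]
      exact (d_eq_zero fun _ _ _ => rfl).symm

theorem IsZigzag.exists_prod_smul_eq {e : X → W} (he : ∀ (γ : Γ) x, e (γ • x) = π γ * e x)
    (hu : IsInvariant π u) (hs : ∀ w, SupportedIn p (u w)) {ω' : Cochain W ℤ}
    (h : IsZigzag π p u (Cochain.d ω')) (hinv : ∀ γ : Γ, pullback (π γ * ·) ω' = ω') :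
    ∃ b b', IsInvariant π b ∧ IsInvariant π b' ∧
      (∏ j ∈ Finset.range p, exponentLoss (j + 1)) • u = vertD b + Cochain.d b' := by
  induction p generalizing u with
  | zero =>
    obtain ⟨b, hb, rfl⟩ := exists_eq_d_of_bottom_row hs h hinv
    exact ⟨0, b, fun _ _ => rfl, hb, by rw [vertD_zero, zero_add]; exact one_smul ℤ _⟩
  | succ p ih =>
    obtain ⟨u', hu', hs', hd, hzig⟩ := h
    obtain ⟨b, b', -, hb', hbb⟩ := ih hu' hs' hzig
    rw [Finset.prod_range_succ]
    set c := ∏ j ∈ Finset.range p, exponentLoss (j + 1)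
    have hclosed : Cochain.d ((c * exponentLoss (p + 1)) • u - vertD b') = 0 := by
      have hvert : c • vertD u' = vertD (Cochain.d b') := by
        rw [← vertD_smul, hbb, vertD_add, vertD_vertD, zero_add]
      rw [d_sub, d_zsmul, mul_smul, hd, hvert, d_vertD, sub_self]
    refine ⟨b', contraction e ((c * exponentLoss (p + 1)) • u - vertD b'), hb',
      ((hu.smul _).sub hb'.vertD).contraction he, ?_⟩
    rw [d_contraction e hclosed, add_sub_cancel]
    intro w
    simp [vertD, hs w [] (by simp)]

theorem prod_exponentLoss (m : ℕ) : ∏ j ∈ Finset.range (m + 2), exponentLoss (j + 1) = 2 ^ m := by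
  induction m with
  | zero => simp [Finset.prod_range_succ, exponentLoss]
  | succ m ih =>
    rw [Finset.prod_range_succ, ih, pow_succ]
    congr 1

section Column

variable {ψ : Cochain X ℤ}

theorem isInvariant_column (hinv : ∀ γ : Γ, pullback (γ • ·) ψ = ψ) :
    IsInvariant π (column ψ) := by
  intro γ w
  simp only [column, List.map_eq_nil_iff]
  split_ifs
  · exact hinv γ
  · rfl

variable {m n k : ℕ}

theorem IsZigzag.exists_invariant_primitive_two_pow_smul
    (hfree : ∀ (γ : Γ) (x : X), γ • x = x → γ = 1) (hinv : ∀ γ : Γ, pullback (γ • ·) ψ = ψ)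
    (hs : SupportedIn (m + 2) ψ) {ω' : Cochain W ℤ}
    (h : IsZigzag π (m + 2) (column ψ) (Cochain.d ω'))
    (hω' : ∀ γ : Γ, pullback (π γ * ·) ω' = ω') :
    ∃ y, (∀ γ : Γ, pullback (γ • ·) y = y) ∧ Cochain.d y = (2 : ℤ) ^ m • ψ := by
  obtain ⟨s, hse⟩ := exists_equivariant_toGroup hfree
  obtain ⟨b, b', hb, -, hbb⟩ := h.exists_prod_smul_eq (e := fun x => π (s x))
    (fun γ x => by rw [hse, map_mul]) (isInvariant_column hinv) (supportedIn_column hs) hω'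
  refine ⟨b [], fun γ => hb γ [], ?_⟩
  have hnil := congrFun hbb []
  simp only [prod_exponentLoss, Pi.smul_apply, column, if_true, Pi.add_apply, d_nil, add_zero]
    at hnil
  exact hnil.symm

variable [Nonempty X] (hcard : Nat.card π.ker = 2 ^ n) (hsq : ∀ x ∈ π.ker, x * x = 1)
  (hfree : ∀ (γ : Γ) (x : X), γ • x = x → γ = 1) (hinv : ∀ γ : Γ, pullback (γ • ·) ψ = ψ)
  (hs : SupportedIn (m + 2) ψ) (hd : d ψ = 0)

include hcard hsq hfree hinv hs hd

theorem exists_isZigzag_column :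
    ∃ ω, IsZigzag π (m + 2) (column ψ) ω ∧ (∀ γ : Γ, pullback (π γ * ·) ω = ω) ∧ d ω = 0 :=
  exists_isZigzag hcard hsq hfree (isInvariant_column hinv) (supportedIn_column hs)
    (by rw [← d_vertD, vertD_column hd]; exact map_zero dHom)

theorem exists_invariant_primitive_two_pow_smul (hcard' : Nat.card π.range = 2 ^ k)
    (hsq' : ∀ x : W, x * x = 1) :
    ∃ y, (∀ γ : Γ, pullback (γ • ·) y = y) ∧ d y = (2 : ℤ) ^ (m + 1) • ψ := by
  obtain ⟨ω, hzig, hω, hdω⟩ := exists_isZigzag_column hcard hsq hfree hinv hs hd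
  obtain ⟨ω', hω', hdω'⟩ := exists_invariant_primitive_two_smul (Λ := π.range) hcard'
    (fun x => Subtype.ext (hsq' x)) (X := W) (fun γ x h => Subtype.ext (mul_eq_right.1 h))
    (by rintro ⟨_, γ, rfl⟩; exact hω γ) hdω
  have hzig2 : IsZigzag π (m + 2) (column ((2 : ℤ) • ψ)) (d ω') := by
    rw [column_smul, hdω']
    exact hzig.smul 2
  obtain ⟨y, hy, hdy⟩ := hzig2.exists_invariant_primitive_two_pow_smul hfree
    (fun γ => by rw [pullback_smul, hinv]) (hs.smul 2) fun γ => hω' ⟨π γ, γ, rfl⟩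
  exact ⟨y, hy, by rw [hdy, smul_smul, pow_succ]⟩

theorem exists_invariant_primitive_two_pow_smul_pullback_sub {τ : X → X}
    (hτ : ∀ γ : Γ, ∃ γ' : Γ, π γ = π γ' ∧ ∀ x, τ (γ • x) = γ' • τ x) :
    ∃ y, (∀ γ : Γ, pullback (γ • ·) y = y) ∧ d y = (2 : ℤ) ^ m • (pullback τ ψ - ψ) := by
  obtain ⟨ω, hzig, -, -⟩ := exists_isZigzag_column hcard hsq hfree hinv hs hd
  have hzero : IsZigzag π (m + 2) (column (pullback τ ψ - ψ)) (d (0 : Cochain W ℤ)) := by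
    rw [column_translate_sub, d_zero, ← sub_self ω]
    exact (hzig.translate hτ).sub hzig
  refine hzero.exists_invariant_primitive_two_pow_smul hfree (fun γ => ?_)
    ((hs.pullback τ).sub hs) fun γ => rfl
  obtain ⟨γ', -, hγ'⟩ := hτ γ
  rw [pullback_sub, hinv, pullback_pullback_comm hγ', hinv]

end Column

end DoubleComplex

section LocallyExact

variable {X L : Type*} [PseudoMetricSpace X] [AddCommGroup L] {n : ℕ} {f g : Cochain X L}

/-- Exactness in the complex of locally zero cochains on `X`. As the complex of all cochains is
acyclic, its cohomology is the Alexander–Spanier cohomology of `X`, shifted by one degree. -/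
def IsLocallyExact (n : ℕ) (f : Cochain X L) : Prop :=
  ∃ y, LocallyZero Set.univ n y ∧ SupportedIn n y ∧ d y = f

theorem IsLocallyExact.zero : IsLocallyExact n (0 : Cochain X L) :=
  ⟨0, LocallyZero.zero, fun _ _ => rfl, map_zero dHom⟩

theorem IsLocallyExact.sub (hf : IsLocallyExact n f) (hg : IsLocallyExact n g) :
    IsLocallyExact n (f - g) := by
  obtain ⟨y, hy, hys, rfl⟩ := hf
  obtain ⟨z, hz, hzs, rfl⟩ := hg
  exact ⟨y - z, hy.sub hz, hys.sub hzs, d_sub y z⟩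

theorem IsCoboundary.isLocallyExact_d_trunc (hf : IsCoboundary Set.univ n f) :
    IsLocallyExact n (d (trunc n f)) := by
  obtain ⟨η, -, hη⟩ := hf
  refine ⟨trunc n (f - d η), locallyZero_trunc hη, supportedIn_trunc _ _, ?_⟩
  rw [d_trunc, d_sub, d_d, sub_zero, ← d_trunc]

theorem LocallyZero.eq_zero_of_le_one (h : LocallyZero Set.univ n f) (hn : n ≤ 1)
    (hs : SupportedIn n f) : f = 0 := by
  obtain ⟨ε, hε, h⟩ := h
  funext l
  by_cases hl : l.length = n
  · refine h l hl (fun _ _ => Set.mem_univ _) fun x hx y hy => ?_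
    match l, hl, hx, hy with
    | [a], _, hx, hy =>
      rw [List.mem_singleton] at hx hy
      subst hx hy
      rwa [dist_self]
    | _ :: _ :: l, hl, _, _ =>
      simp only [List.length_cons] at hl
      omega
  · exact hs l hl

theorem isLocallyExact_of_le {m t p : ℕ} (hp : p ≤ m) {f : Cochain (SphereProd m t) L}
    (hs : SupportedIn (p + 1) f) (hf : LocallyZero Set.univ (p + 1) f) (hd : d f = 0) :
    IsLocallyExact p f := by
  have : Nonempty (SphereProd m t) := nonempty_sphereProd m t
  obtain ⟨η, rfl⟩ := exists_primitive hd
  match p with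
  | 0 =>
    rw [hf.eq_zero_of_le_one le_rfl hs]
    exact IsLocallyExact.zero
  | 1 =>
    obtain ⟨c, hc⟩ := exists_locallyZero_sub_const (m := m) (by omega) (f := η) hf
    refine ⟨trunc 1 (η - fun _ => c), locallyZero_trunc hc, supportedIn_trunc _ _, ?_⟩
    rw [d_trunc, d_sub]
    refine Eq.trans ?_ (trunc_of_supportedIn hs)
    funext l
    simp only [trunc]
    split_ifs with hl
    · match l, hl with
      | [a, b], _ => simp [d_cons, d_nil]
    · rfl
  | p + 2 =>
    have h := (isCoboundary_of_lt (q := p + 1) (by omega) (by omega) (f := η)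
      hf).isLocallyExact_d_trunc
    rwa [d_trunc, trunc_of_supportedIn hs] at h

end LocallyExact

section Row

variable {Γ X : Type*} [Group Γ] [PseudoMetricSpace X] [MulAction Γ X] {p : ℕ}
  {u v : DoubleCochain Γ X}

/-- The invariant cochains of the double complex whose second variable is a locally zero cochain on
`p`-tuples. -/
structure IsRow (p : ℕ) (u : DoubleCochain Γ X) : Prop where
  isInvariant : IsInvariant (MonoidHom.id Γ) u
  locallyZero : ∀ w, LocallyZero Set.univ p (u w)
  supportedIn : ∀ w, SupportedIn p (u w)

theorem IsRow.zero : IsRow p (0 : DoubleCochain Γ X) :=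
  ⟨fun _ _ => rfl, fun _ => LocallyZero.zero, fun _ _ _ => rfl⟩

theorem IsRow.sub (hu : IsRow p u) (hv : IsRow p v) : IsRow p (u - v) :=
  ⟨hu.isInvariant.sub hv.isInvariant, fun w => (hu.locallyZero w).sub (hv.locallyZero w),
    fun w => (hu.supportedIn w).sub (hv.supportedIn w)⟩

theorem IsRow.vertD (hu : IsRow p u) : IsRow (p + 1) (vertD u) :=
  ⟨hu.isInvariant.vertD, fun w => (hu.locallyZero w).d, fun w => (hu.supportedIn w).d⟩

theorem locallyZero_d_apply {W X : Type*} [PseudoMetricSpace X] {u : DoubleCochain W X}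
    (h : ∀ w, LocallyZero Set.univ p (u w)) (w : List W) : LocallyZero Set.univ p (d u w) := by
  induction w generalizing u with
  | nil =>
    rw [d_nil]
    exact LocallyZero.zero
  | cons x w ih =>
    rw [d_cons]
    exact (h w).sub (ih fun w' => h (x :: w'))

theorem locallyZero_contraction {W X : Type*} [PseudoMetricSpace X] [Finite W] (e : X → W)
    {u : DoubleCochain W X} (h : ∀ w, LocallyZero Set.univ p (u w)) (w : List W) :
    LocallyZero Set.univ p (contraction e u w) := by
  obtain ⟨ε, hε, hsmall⟩ : LocallyZero Set.univ p (fun l x => u (x :: w) l) :=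
    LocallyZero.pi fun x => h (x :: w)
  refine ⟨ε, hε, fun l hlen hmem hclose => ?_⟩
  match l with
  | [] => rfl
  | x :: l => exact congrFun (hsmall (x :: l) hlen hmem hclose) (e x)

theorem IsRow.exists_eq_d [Finite Γ] {e : X → Γ} (he : ∀ (γ : Γ) x, e (γ • x) = γ * e x)
    (hu : IsRow (p + 1) u) (hd : d u = 0) : ∃ v, IsRow (p + 1) v ∧ d v = u :=
  ⟨contraction e u,
    ⟨hu.isInvariant.contraction he, locallyZero_contraction e hu.locallyZero,
      supportedIn_contraction e hu.supportedIn⟩,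
    d_contraction e hd fun w => hu.supportedIn w [] (by simp)⟩

/-- The cochain of the double complex consisting of the translates of `ψ` by the elements of `Γ`. -/
def orbitCochain (Γ : Type*) [Group Γ] [MulAction Γ X] (ψ : Cochain X ℤ) : DoubleCochain Γ X
  | [γ] => pullback (γ⁻¹ • ·) ψ
  | _ => 0

variable {ψ : Cochain X ℤ}

theorem isLocallyExact_d_orbitCochain
    (htriv : ∀ γ : Γ, IsLocallyExact p (pullback (γ • ·) ψ - ψ)) (w : List Γ) :
    IsLocallyExact p (d (orbitCochain Γ ψ) w) := by
  match w with
  | [] =>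
    rw [d_nil]
    exact IsLocallyExact.zero
  | [γ] =>
    rw [d_cons, d_nil, sub_zero]
    exact IsLocallyExact.zero
  | [γ, γ'] =>
    have h := (htriv γ'⁻¹).sub (htriv γ⁻¹)
    rw [sub_sub_sub_cancel_right] at h
    simpa [d_cons, d_nil, orbitCochain] using h
  | γ :: γ' :: γ'' :: w =>
    have h : d (orbitCochain Γ ψ) (γ :: γ' :: γ'' :: w) = 0 := d_eq_zero fun w' hlen _ => by
      match w', hlen with
      | _ :: _ :: _, _ => rfl
    rw [h]
    exact IsLocallyExact.zero

variable [CompactSpace X] [ContinuousConstSMul Γ X]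

theorem exists_isRow_vertD_eq (hu : IsInvariant (MonoidHom.id Γ) u) (hnil : u [] = 0)
    (h : ∀ w, IsLocallyExact p (u w)) : ∃ v, IsRow p v ∧ vertD v = u := by
  obtain ⟨y, hy, hynil, hyu⟩ := exists_isInvariant_of_forall_ker
    (P := fun f y => LocallyZero Set.univ p y ∧ SupportedIn p y ∧ d y = f)
    (fun γ f y hy => ⟨hy.1.pullback_of_continuous (continuous_const_smul γ), hy.2.1.pullback _,
      by rw [d_pullback, hy.2.2]⟩) hu
    (fun w _ => by
      obtain ⟨y, hy⟩ := h w
      refine ⟨y, fun γ hγ => ?_, hy⟩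
      rw [MonoidHom.mem_ker, MonoidHom.id_apply] at hγ
      simp only [hγ, one_smul, pullback_id])
  have hyw : ∀ w, LocallyZero Set.univ p (y w) ∧ SupportedIn p (y w) ∧ d (y w) = u w := by
    intro w
    by_cases hw : w = []
    · rw [hw, hynil, hnil]
      exact ⟨LocallyZero.zero, fun _ _ => rfl, map_zero dHom⟩
    · exact hyu w hw
  exact ⟨y, ⟨hy, fun w => (hyw w).1, fun w => (hyw w).2.1⟩, funext fun w => (hyw w).2.2⟩

theorem isRow_orbitCochain (hs : SupportedIn p ψ) (hψ : LocallyZero Set.univ p ψ) :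
    IsRow p (orbitCochain Γ ψ) := by
  refine ⟨fun γ w => ?_, fun w => ?_, fun w => ?_⟩
  · match w with
    | [] => rfl
    | [γ'] =>
      simp only [orbitCochain, List.map_cons, List.map_nil, MonoidHom.id_apply,
        pullback_smul_pullback_smul, mul_inv_rev, inv_mul_cancel_right]
    | _ :: _ :: _ => rfl
  · match w with
    | [] => exact LocallyZero.zero
    | [γ] => exact hψ.pullback_of_continuous (continuous_const_smul γ⁻¹)
    | _ :: _ :: _ => exact LocallyZero.zero
  · match w with
    | [] => exact fun _ _ => rfl
    | [γ] => exact hs.pullback _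
    | _ :: _ :: _ => exact fun _ _ => rfl

end Row

section InvariantCocycle

variable {m t : ℕ} {Γ : Type*} [Group Γ] [Finite Γ] [MulAction Γ (SphereProd m t)]
  [ContinuousConstSMul Γ (SphereProd m t)]

theorem IsRow.exists_d_sub_vertD_eq_zero {e : SphereProd m t → Γ}
    (he : ∀ (γ : Γ) x, e (γ • x) = γ * e x) {p : ℕ} (hp : p ≤ m + 1)
    {a : DoubleCochain Γ (SphereProd m t)} (ha : IsRow (p + 1) a)
    (h : ∀ w, IsLocallyExact p (d a w)) : ∃ b, IsRow p b ∧ d (a - Cochain.vertD b) = 0 := by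
  induction p generalizing a with
  | zero =>
    have hzero : a = 0 := funext fun w =>
      (ha.locallyZero w).eq_zero_of_le_one le_rfl (ha.supportedIn w)
    refine ⟨0, IsRow.zero, ?_⟩
    rw [hzero, vertD_zero, sub_zero, d_zero]
  | succ p ih =>
    obtain ⟨f, hf, hfa⟩ := exists_isRow_vertD_eq ha.isInvariant.d (d_nil a) h
    have hdf : Cochain.vertD (d f) = 0 := by rw [← d_vertD, hfa, d_d]
    obtain ⟨b, hb, hbf⟩ := ih (by omega) hf fun w =>
      isLocallyExact_of_le (by omega) (supportedIn_d_apply hf.supportedIn w)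
        (locallyZero_d_apply hf.locallyZero w) (congrFun hdf w)
    obtain ⟨c, hc, hcf⟩ := (hf.sub hb.vertD).exists_eq_d he hbf
    refine ⟨c, hc, ?_⟩
    rw [d_sub, ← hfa, d_vertD, hcf, vertD_sub, vertD_vertD, sub_zero, sub_self]

variable (hfree : ∀ (γ : Γ) (x : SphereProd m t), γ • x = x → γ = 1)

include hfree

theorem exists_invariant_sub_d {ψ : Cochain (SphereProd m t) ℤ} (hs : SupportedIn (m + 2) ψ)
    (hψ : LocallyZero Set.univ (m + 2) ψ)
    (htriv : ∀ γ : Γ, IsLocallyExact (m + 1) (pullback (γ • ·) ψ - ψ)) :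
    ∃ b, LocallyZero Set.univ (m + 1) b ∧ SupportedIn (m + 1) b ∧
      ∀ γ : Γ, pullback (γ • ·) (ψ - d b) = ψ - d b := by
  obtain ⟨e, he⟩ := exists_equivariant_toGroup hfree
  have hrow : IsRow (m + 2) (orbitCochain Γ ψ) := isRow_orbitCochain hs hψ
  obtain ⟨b, hb, hψb⟩ := hrow.exists_d_sub_vertD_eq_zero he le_rfl
    (isLocallyExact_d_orbitCochain htriv)
  obtain ⟨c, hc, hcd⟩ := (hrow.sub hb.vertD).exists_eq_d he hψb
  have hnil : c [] = ψ - d (b [1]) := by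
    have h := congrFun hcd [1]
    rw [d_cons, d_nil, sub_zero] at h
    rw [h]
    simp [orbitCochain, vertD, pullback_id]
  refine ⟨b [1], hb.locallyZero _, hb.supportedIn _, fun γ => ?_⟩
  rw [← hnil]
  exact hc.isInvariant γ []

theorem exists_isCoboundary_sub_linCocycle_invariant_d {c : Fin t → ℤ}
    (htriv : ∀ γ : Γ, IsCoboundary Set.univ (m + 1)
      (pullback (γ • ·) (linCocycle m c) - linCocycle m c)) :
    ∃ f, IsCoboundary Set.univ (m + 1) (f - linCocycle m c) ∧ SupportedIn (m + 2) (d f) ∧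
      ∀ γ : Γ, pullback (γ • ·) (d f) = d f := by
  have htrunc (γ : Γ) : IsLocallyExact (m + 1)
      (pullback (γ • ·) (d (trunc (m + 1) (linCocycle m c))) -
        d (trunc (m + 1) (linCocycle m c))) := by
    have h := (htriv γ).isLocallyExact_d_trunc
    rwa [d_trunc, d_sub, d_pullback, trunc_sub, ← pullback_trunc, ← d_trunc] at h
  obtain ⟨b, hb, hbs, hinv⟩ := exists_invariant_sub_d hfree (supportedIn_trunc _ _).d
    (by rw [d_trunc]; exact locallyZero_trunc (isCocycle_linCocycle c)) htrunc
  refine ⟨trunc (m + 1) (linCocycle m c) - b, LocallyZero.isCoboundary ?_, ?_, by rwa [d_sub]⟩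
  · exact hb.neg.congr fun l hl _ => by simp [trunc, hl]
  · exact ((supportedIn_trunc _ _).sub hbs).d

end InvariantCocycle

section CohomologyAction

variable {m t : ℕ} {G : Type*} [Group G] [MulAction G (SphereProd m t)]

/-- `θ` is the action of `G` on `H^m((S^m)^t; ℤ) = ℤ ^ t`, in which `g` acts by `(g⁻¹)^*`. -/
def IsCohomologyAction (m : ℕ) [MulAction G (SphereProd m t)]
    (θ : G →* Module.End ℤ (Fin t → ℤ)) : Prop :=
  ∀ g c, IsCoboundary Set.univ (m + 1)
    (pullback (g⁻¹ • ·) (linCocycle m c) - linCocycle m (θ g c))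

theorem eq_of_isCoboundary_linCocycle_sub {c c' : Fin t → ℤ}
    (h : IsCoboundary Set.univ (m + 1) (linCocycle m c - linCocycle m c')) : c = c' := by
  rw [← linCocycle_sub] at h
  exact sub_eq_zero.1 (eq_zero_of_isCoboundary_sum_coordCocycle h)

theorem exists_isCohomologyAction [ContinuousConstSMul G (SphereProd m t)] (hm : 0 < m) :
    ∃ θ : G →* Module.End ℤ (Fin t → ℤ), IsCohomologyAction m θ := by
  choose θ hθ using fun (g : G) (c : Fin t → ℤ) => exists_isCoboundary_sub_sum_coordCocycle hm
    ((isCocycle_linCocycle (m := m) c).pullback_of_continuous (continuous_const_smul g⁻¹))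
  change ∀ g c, IsCoboundary Set.univ (m + 1)
    (pullback (g⁻¹ • ·) (linCocycle m c) - linCocycle m (θ g c)) at hθ
  have huniq {g c c'} (h : IsCoboundary Set.univ (m + 1)
      (pullback (g⁻¹ • ·) (linCocycle m c) - linCocycle m c')) : θ g c = c' :=
    eq_of_isCoboundary_linCocycle_sub (m := m) (by simpa using h.sub (hθ g c))
  have hadd (g : G) (c c' : Fin t → ℤ) : θ g (c + c') = θ g c + θ g c' := huniq <| by
    rw [linCocycle_add, linCocycle_add, pullback_add, add_sub_add_comm]
    exact (hθ g c).add (hθ g c')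
  have hsmul (g : G) (a : ℤ) (c : Fin t → ℤ) : θ g (a • c) = a • θ g c := huniq <| by
    rw [linCocycle_smul, linCocycle_smul, pullback_smul, ← smul_sub]
    exact (hθ g c).smul a
  have hone (c : Fin t → ℤ) : θ 1 c = c := huniq <| by
    simp only [inv_one, one_smul, pullback_id, sub_self]
    exact IsCoboundary.zero
  have hmul (g g' : G) (c : Fin t → ℤ) : θ (g * g') c = θ g (θ g' c) := huniq <| by
    have h := ((hθ g' c).pullback_of_continuous (continuous_const_smul g⁻¹)).add (hθ g (θ g' c))
    rwa [pullback_sub, pullback_smul_pullback_smul, sub_add_sub_cancel, ← mul_inv_rev] at h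
  exact ⟨{ toFun := fun g => ⟨⟨θ g, hadd g⟩, hsmul g⟩
           map_one' := LinearMap.ext hone
           map_mul' := fun g g' => LinearMap.ext (hmul g g') }, hθ⟩

theorem IsCohomologyAction.isCoboundary_of_mem_ker {θ : G →* Module.End ℤ (Fin t → ℤ)}
    (hθ : IsCohomologyAction m θ) {γ : G} (hγ : γ ∈ θ.ker) (c : Fin t → ℤ) :
    IsCoboundary Set.univ (m + 1) (pullback (γ • ·) (linCocycle m c) - linCocycle m c) := by
  have h := hθ γ⁻¹ c
  rwa [inv_inv, MonoidHom.mem_ker.1 (inv_mem hγ)] at h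

end CohomologyAction

section InvariantLatticeBound

theorem smul_mem_invariantLattice_of_d_eq {m t : ℕ} {Γ : Type*} [Group Γ]
    [MulAction Γ (SphereProd m t)] (hm : 0 < m) {a : ℤ} {c : Fin t → ℤ}
    {f y : Cochain (SphereProd m t) ℤ}
    (hf : IsCoboundary Set.univ (m + 1) (f - linCocycle m c)) (hy : ∀ γ : Γ, pullback (γ • ·) y = y)
    (h : d y = a • d f) : a • c ∈ invariantLattice m t Γ := by
  have : Nonempty (SphereProd m t) := nonempty_sphereProd m t
  refine mem_invariantLattice.2 ⟨y, hy, ?_⟩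
  obtain ⟨θ, hθ⟩ := exists_primitive (f := y - a • f) (by rw [d_sub, d_zsmul, h, sub_self])
  have hyf : IsCoboundary Set.univ (m + 1) (y - a • f) :=
    IsCoboundary.of_two_le (by omega) θ (by rw [hθ, sub_self]; exact LocallyZero.zero)
  have hsum := hyf.add (hf.smul a)
  rwa [smul_sub, ← linCocycle_smul, sub_add_sub_cancel] at hsum

instance continuousConstSMul_subgroup {G X : Type*} [Group G] [TopologicalSpace X] [MulAction G X]
    [ContinuousConstSMul G X] (H : Subgroup G) : ContinuousConstSMul H X :=
  ⟨fun h => continuous_const_smul (h : G)⟩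

theorem exists_card_eq_two_pow {G : Type*} [Group G] [Finite G] (h : ∀ x : G, x * x = 1) :
    ∃ n, Nat.card G = 2 ^ n := by
  have : Fact (Nat.Prime 2) := ⟨Nat.prime_two⟩
  exact IsPGroup.iff_card.1 fun x => ⟨1, by rw [pow_one, pow_two, h]⟩

/-- The projection to `G ⧸ V` restricted to a subgroup `N`. -/
def restrictMk {G : Type*} [Group G] (N V : Subgroup G) [V.Normal] : N →* G ⧸ V :=
  (QuotientGroup.mk' V).comp N.subtype

theorem mul_self_eq_one_of_mem_ker_restrictMk {G : Type*} [Group G] {N V : Subgroup G} [V.Normal]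
    (hV : ∀ x ∈ V, x * x = 1) : ∀ γ ∈ (restrictMk N V).ker, γ * γ = 1 :=
  fun γ hγ => Subtype.ext (hV γ ((QuotientGroup.eq_one_iff _).1 hγ))

theorem exists_restrictMk_eq_smul_comm {G X : Type*} [Group G] [MulAction G X] {N V : Subgroup G}
    [N.Normal] [V.Normal] (hW : ∀ w : G ⧸ V, w * w = 1) (g : G) (γ : N) :
    ∃ γ' : N, restrictMk N V γ = restrictMk N V γ' ∧ ∀ x : X, g • γ • x = γ' • g • x := by
  refine ⟨⟨g * γ * g⁻¹, ‹N.Normal›.conj_mem γ γ.2 g⟩, ?_, fun x => ?_⟩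
  · have hcomm : Commute (g : G ⧸ V) (γ : G) := commute_of_mul_self_eq_one hW _ _
    change ((γ : G) : G ⧸ V) = (g * γ * g⁻¹ : G)
    rw [QuotientGroup.mk_mul, QuotientGroup.mk_mul, hcomm.eq, QuotientGroup.mk_inv,
      mul_inv_cancel_right]
  · simp only [Subgroup.smul_def, ← mul_smul, inv_mul_cancel_right]

variable {m t : ℕ} {G : Type*} [Group G] [Finite G] [MulAction G (SphereProd m t)]
  [ContinuousConstSMul G (SphereProd m t)] {V : Subgroup G} [V.Normal]
  {θ : G →* Module.End ℤ (Fin t → ℤ)} (hm : 0 < m) (hV : ∀ x ∈ V, x * x = 1)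
  (hW : ∀ w : G ⧸ V, w * w = 1) (hfree : ∀ (g : G) (x : SphereProd m t), g • x = x → g = 1)
  (hθ : IsCohomologyAction m θ)

include hm hV hW hfree hθ

theorem two_pow_succ_smul_mem_invariantLattice (c : Fin t → ℤ) :
    (2 : ℤ) ^ (m + 1) • c ∈ invariantLattice m t θ.ker := by
  have : Nonempty (SphereProd m t) := nonempty_sphereProd m t
  have hfree' (γ : θ.ker) (x : SphereProd m t) (h : γ • x = x) : γ = 1 :=
    Subtype.ext (hfree γ x h)
  have hsq := mul_self_eq_one_of_mem_ker_restrictMk (N := θ.ker) hV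
  obtain ⟨f, hf, hs, hinv⟩ := exists_isCoboundary_sub_linCocycle_invariant_d hfree'
    fun γ => hθ.isCoboundary_of_mem_ker γ.2 c
  obtain ⟨n, hn⟩ := exists_card_eq_two_pow (G := (restrictMk θ.ker V).ker) fun x =>
    Subtype.ext (hsq x x.2)
  obtain ⟨k, hk⟩ := exists_card_eq_two_pow (G := (restrictMk θ.ker V).range) fun x =>
    Subtype.ext (hW x)
  obtain ⟨y, hy, hyd⟩ :=
    exists_invariant_primitive_two_pow_smul hn hsq hfree' hinv hs (d_d f) hk hW
  exact smul_mem_invariantLattice_of_d_eq hm hf hy hyd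

theorem two_pow_smul_sub_mem_invariantLattice (g : G) (c : Fin t → ℤ) :
    (2 : ℤ) ^ m • (θ g c - c) ∈ invariantLattice m t θ.ker := by
  have : Nonempty (SphereProd m t) := nonempty_sphereProd m t
  have hfree' (γ : θ.ker) (x : SphereProd m t) (h : γ • x = x) : γ = 1 :=
    Subtype.ext (hfree γ x h)
  have hsq := mul_self_eq_one_of_mem_ker_restrictMk (N := θ.ker) hV
  obtain ⟨f, hf, hs, hinv⟩ := exists_isCoboundary_sub_linCocycle_invariant_d hfree'
    fun γ => hθ.isCoboundary_of_mem_ker γ.2 c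
  obtain ⟨n, hn⟩ := exists_card_eq_two_pow (G := (restrictMk θ.ker V).ker) fun x =>
    Subtype.ext (hsq x x.2)
  obtain ⟨y, hy, hyd⟩ := exists_invariant_primitive_two_pow_smul_pullback_sub hn hsq hfree' hinv hs
    (d_d f) (exists_restrictMk_eq_smul_comm hW g⁻¹)
  have htranslate : IsCoboundary Set.univ (m + 1)
      (pullback (g⁻¹ • ·) f - f - linCocycle m (θ g c - c)) := by
    have h := ((hf.pullback_of_continuous (continuous_const_smul g⁻¹)).add (hθ g c)).sub hf
    rwa [pullback_sub, sub_add_sub_cancel, sub_sub_sub_comm, ← linCocycle_sub] at h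
  exact smul_mem_invariantLattice_of_d_eq hm htranslate hy (by rw [hyd, d_sub, d_pullback])

end InvariantLatticeBound

end Cochain

namespace LatticeRep

open Module
open scoped commutatorElement

universe u v

section Index

theorem index_ker_eq_ncard_range {G M : Type*} [Group G] [Monoid M] (θ : G →* M) :
    θ.ker.index = (Set.range θ).ncard := by
  have hker : θ.ker = θ.toHomUnits.ker := by
    ext g
    rw [MonoidHom.mem_ker, MonoidHom.mem_ker, Units.ext_iff, MonoidHom.coe_toHomUnits,
      Units.val_one]
  rw [hker, Subgroup.index_ker, ← SetLike.coe_sort_coe, Nat.card_coe_set_eq, MonoidHom.coe_range,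
    ← Set.ncard_image_of_injective _ Units.val_injective, ← Set.range_comp]
  rfl

theorem index_eq_relIndex_mul_index_sup {A : Type*} [AddCommGroup A] (J H : AddSubgroup A) :
    J.index = J.relIndex H * (J ⊔ H).index := by
  rw [← AddSubgroup.relIndex_mul_index (le_sup_left : J ≤ J ⊔ H), sup_comm,
    AddSubgroup.relIndex_sup_right]

theorem ncard_le_length {α : Type*} {s : Set α} (l : List α) (h : ∀ x ∈ s, x ∈ l) :
    s.ncard ≤ l.length := by
  classical
  have hsub : s ⊆ l.toFinset := fun x hx => List.mem_toFinset.2 (h x hx)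
  refine (Set.ncard_le_ncard hsub (Finset.finite_toSet _)).trans ?_
  rw [Set.ncard_coe_finset]
  exact List.toFinset_card_le l

theorem exists_mem_central_ne_one {Q : Type*} [Group Q] [Finite Q] {p : ℕ} [Fact p.Prime]
    (hQ : IsPGroup p Q) (P : Subgroup Q) [P.Normal] (hP : P ≠ ⊥) :
    ∃ x ∈ P, x ≠ 1 ∧ ∀ g, g * x * g⁻¹ = x := by
  have hdvd : p ∣ Nat.card P := by
    refine ((hQ.to_subgroup P).card_eq_or_dvd).resolve_left fun h => hP ?_
    exact Subgroup.card_eq_one.1 h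
  have hconj : IsPGroup p (ConjAct Q) := hQ.of_equiv ConjAct.toConjAct
  obtain ⟨x, hx, hx1⟩ := hconj.exists_fixed_point_of_prime_dvd_card_of_fixed_point P hdvd
    (a := 1) fun g => smul_one g
  refine ⟨x, x.2, fun h => hx1 (Subtype.ext h.symm), fun g => ?_⟩
  exact congrArg Subtype.val (hx (ConjAct.toConjAct g))

theorem card_addMonoidHom_zmod (K : Type*) [AddCommGroup K] [Free ℤ K] [Module.Finite ℤ K] (n : ℕ) :
    Nat.card (K →+ ZMod n) = n ^ finrank ℤ K := by
  rw [Nat.card_congr ((addMonoidHomLequivInt ℤ).toEquiv.trans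
    ((finBasis ℤ K).constr ℤ).symm.toEquiv), Nat.card_fun, Nat.card_zmod, Nat.card_fin]

end Index

section AugLattice

variable {G : Type u} [Group G] {K : Type v} [AddCommGroup K]

/-- For a representation `θ` on `K`, the preimage in `K` of the augmentation submodule of `K / 2K`:
the subgroup generated by `2K` and by the differences `θ g x - x`. -/
def augLattice (θ : G →* End ℤ K) : AddSubgroup K :=
  AddSubgroup.closure (Set.range (fun x : K => 2 • x) ∪ {y | ∃ g x, θ g x - x = y})

variable (θ : G →* End ℤ K)

theorem two_smul_mem_augLattice (x : K) : 2 • x ∈ augLattice θ :=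
  AddSubgroup.subset_closure (Or.inl ⟨x, rfl⟩)

theorem sub_mem_augLattice (g : G) (x : K) : θ g x - x ∈ augLattice θ :=
  AddSubgroup.subset_closure (Or.inr ⟨g, x, rfl⟩)

variable {θ}

theorem augLattice_le {H : AddSubgroup K} (h : ∀ x : K, 2 • x ∈ H) (h' : ∀ g x, θ g x - x ∈ H) :
    augLattice θ ≤ H := by
  refine (AddSubgroup.closure_le _).2 ?_
  rintro _ (⟨x, rfl⟩ | ⟨g, x, rfl⟩)
  · exact h x
  · exact h' g x

variable (θ) in
theorem range_nsmul_two_le_augLattice : (nsmulAddMonoidHom (α := K) 2).range ≤ augLattice θ := by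
  rintro _ ⟨x, rfl⟩
  exact two_smul_mem_augLattice θ x

section Finite

variable [Free ℤ K] [Module.Finite ℤ K]

variable (θ)

theorem augLattice_index_dvd : (augLattice θ).index ∣ 2 ^ finrank ℤ K := by
  rw [← AddSubgroup.index_range_nsmul]
  exact AddSubgroup.index_dvd_of_le (range_nsmul_two_le_augLattice θ)

theorem augLattice_index_le : (augLattice θ).index ≤ 2 ^ finrank ℤ K :=
  Nat.le_of_dvd (by positivity) (augLattice_index_dvd θ)

theorem augLattice_index_ne_zero : (augLattice θ).index ≠ 0 :=
  ne_zero_of_dvd_ne_zero (by positivity) (augLattice_index_dvd θ)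

variable {θ}

theorem augLattice_ne_top (hG : IsPGroup 2 G) (hK : 0 < finrank ℤ K) : augLattice θ ≠ ⊤ := by
  have : Fact (Nat.Prime 2) := ⟨Nat.prime_two⟩
  let _ : DistribMulAction G K := DistribMulAction.compHom K θ
  have hcard : Nat.card (K →+ ZMod 2) = 2 ^ finrank ℤ K := card_addMonoidHom_zmod K 2
  have : Finite (K →+ ZMod 2) := Nat.finite_of_card_ne_zero (by rw [hcard]; positivity)
  have hdual : IsPGroup 2 Gᵈᵐᵃ := hG.of_equiv (MulEquiv.inv' G)
  obtain ⟨f, hf, hf0⟩ := hdual.exists_fixed_point_of_prime_dvd_card_of_fixed_point (K →+ ZMod 2)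
    (hcard ▸ dvd_pow_self 2 hK.ne') (a := 0) fun g => smul_zero g
  have hle : augLattice θ ≤ f.ker := by
    refine augLattice_le (fun x => ?_) fun g x => ?_
    · rw [AddMonoidHom.mem_ker, map_nsmul]
      exact CharTwo.two_nsmul _
    · have hfg : f (θ g x) = f x := DFunLike.congr_fun (hf (DomMulAct.mk g)) x
      rw [AddMonoidHom.mem_ker, map_sub, hfg, sub_self]
  intro htop
  rw [htop, top_le_iff] at hle
  exact hf0 (AddMonoidHom.ext fun x =>
    (AddMonoidHom.mem_ker.1 (hle ▸ AddSubgroup.mem_top x)).symm)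

theorem two_le_augLattice_index (hG : IsPGroup 2 G) (hK : 0 < finrank ℤ K) :
    2 ≤ (augLattice θ).index := by
  have hne_one : (augLattice θ).index ≠ 1 := mt AddSubgroup.index_eq_one.1 (augLattice_ne_top hG hK)
  have hne_zero := augLattice_index_ne_zero θ
  omega

end Finite

end AugLattice

section SubQuot

variable {G : Type u} [Group G] {K : Type v} [AddCommGroup K] (θ : G →* End ℤ K)

/-- The restriction of a representation to an invariant submodule. -/
def subRep (K₁ : Submodule ℤ K) (h : ∀ g, ∀ x ∈ K₁, θ g x ∈ K₁) : G →* End ℤ K₁ where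
  toFun g := (θ g).restrict (h g)
  map_one' := by
    ext x
    simp [LinearMap.restrict_apply]
  map_mul' g g' := by
    ext x
    simp [LinearMap.restrict_apply]

/-- The representation on the quotient by an invariant submodule. -/
def quotRep (K₁ : Submodule ℤ K) (h : ∀ g, ∀ x ∈ K₁, θ g x ∈ K₁) : G →* End ℤ (K ⧸ K₁) where
  toFun g := K₁.mapQ K₁ (θ g) (h g)
  map_one' := by
    ext x
    simp
  map_mul' g g' := by
    ext x
    simp

variable {θ} {K₁ : Submodule ℤ K} (h : ∀ g, ∀ x ∈ K₁, θ g x ∈ K₁)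

theorem quotRep_mk (g : G) (x : K) : quotRep θ K₁ h g (K₁.mkQ x) = K₁.mkQ (θ g x) := rfl

theorem subRep_mul_self {g : G} (hg : θ g * θ g = 1) : subRep θ K₁ h g * subRep θ K₁ h g = 1 :=
  LinearMap.ext fun x => Subtype.ext (LinearMap.congr_fun hg x)

theorem quotRep_mul_self {g : G} (hg : θ g * θ g = 1) :
    quotRep θ K₁ h g * quotRep θ K₁ h g = 1 := by
  refine LinearMap.ext fun x => ?_
  obtain ⟨x, rfl⟩ := K₁.mkQ_surjective x
  exact congrArg K₁.mkQ (LinearMap.congr_fun hg x)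

theorem mem_ker_subRep {g : G} : g ∈ (subRep θ K₁ h).ker ↔ ∀ x ∈ K₁, θ g x = x := by
  rw [MonoidHom.mem_ker]
  refine ⟨fun hg x hx => congrArg Subtype.val (LinearMap.congr_fun hg ⟨x, hx⟩), fun hg => ?_⟩
  exact LinearMap.ext fun x => Subtype.ext (hg x x.2)

theorem sub_mem_of_mem_ker_quotRep {g : G} (hg : g ∈ (quotRep θ K₁ h).ker) (x : K) :
    θ g x - x ∈ K₁ := by
  have hgx := LinearMap.congr_fun (MonoidHom.mem_ker.1 hg) (K₁.mkQ x)
  rw [quotRep_mk] at hgx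
  rw [← Submodule.ker_mkQ K₁, LinearMap.mem_ker, map_sub]
  exact sub_eq_zero.2 hgx

theorem augLattice_index_dvd_mul :
    (augLattice θ).index ∣
      (augLattice (subRep θ K₁ h)).index * (augLattice (quotRep θ K₁ h)).index := by
  rw [index_eq_relIndex_mul_index_sup _ K₁.toAddSubgroup]
  refine mul_dvd_mul ?_ ?_
  · refine AddSubgroup.index_dvd_of_le (augLattice_le (fun x => ?_) fun g x => ?_)
    · exact two_smul_mem_augLattice θ (x : K)
    · exact sub_mem_augLattice θ g (x : K)
  · have hsup : augLattice θ ⊔ K₁.toAddSubgroup =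
        ((augLattice θ).map K₁.mkQ.toAddMonoidHom).comap K₁.mkQ.toAddMonoidHom := by
      rw [AddSubgroup.comap_map_eq]
      congr 1
      ext x
      simp [AddMonoidHom.mem_ker]
    rw [hsup, AddSubgroup.index_comap_of_surjective _ K₁.mkQ_surjective]
    refine AddSubgroup.index_dvd_of_le (augLattice_le (fun x => ?_) fun g x => ?_)
    · obtain ⟨x, rfl⟩ := K₁.mkQ_surjective x
      exact ⟨2 • x, two_smul_mem_augLattice θ x, map_nsmul _ _ _⟩
    · obtain ⟨x, rfl⟩ := K₁.mkQ_surjective x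
      exact ⟨θ g x - x, sub_mem_augLattice θ g x, map_sub K₁.mkQ _ _⟩

theorem pow_apply_of_mem_ker {g : G} (hsub : g ∈ (subRep θ K₁ h).ker)
    (hquot : g ∈ (quotRep θ K₁ h).ker) (n : ℕ) (x : K) :
    θ (g ^ n) x = x + n • (θ g x - x) := by
  induction n with
  | zero => simp
  | succ n ih =>
    rw [pow_succ', map_mul, End.mul_apply, ih, map_add, map_nsmul,
      (mem_ker_subRep h).1 hsub _ (sub_mem_of_mem_ker_quotRep h hquot x), succ_nsmul']
    abel

variable [Finite G] [Free ℤ K]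

theorem ker_subRep_inf_ker_quotRep_le : (subRep θ K₁ h).ker ⊓ (quotRep θ K₁ h).ker ≤ θ.ker := by
  rintro g ⟨hsub, hquot⟩
  refine MonoidHom.mem_ker.2 (LinearMap.ext fun x => ?_)
  have hpow := pow_apply_of_mem_ker h hsub hquot (orderOf g) x
  rw [pow_orderOf_eq_one, map_one, End.one_apply, left_eq_add, ← natCast_zsmul] at hpow
  exact sub_eq_zero.1
    ((smul_eq_zero.1 hpow).resolve_left (Int.natCast_ne_zero.2 (orderOf_pos g).ne'))

theorem index_ker_le_mul :
    θ.ker.index ≤ (subRep θ K₁ h).ker.index * (quotRep θ K₁ h).ker.index :=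
  (Nat.le_of_dvd (Nat.pos_of_ne_zero Subgroup.index_ne_zero_of_finite)
    (Subgroup.index_dvd_of_le (ker_subRep_inf_ker_quotRep_le h))).trans Subgroup.index_inf_le

end SubQuot

section Eigenlattice

variable {K : Type v} [AddCommGroup K]

/-- The sublattice fixed by an endomorphism. -/
abbrev fixedBy (f : End ℤ K) : Submodule ℤ K := LinearMap.ker (f - 1)

/-- The sublattice on which an endomorphism acts by `-1`. -/
abbrev negatedBy (f : End ℤ K) : Submodule ℤ K := LinearMap.ker (f + 1)

variable {f z : End ℤ K} {x : K}

theorem mem_fixedBy : x ∈ fixedBy f ↔ f x = x := by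
  rw [LinearMap.mem_ker, LinearMap.sub_apply, End.one_apply, sub_eq_zero]

theorem mem_negatedBy : x ∈ negatedBy f ↔ f x = -x := by
  rw [LinearMap.mem_ker, LinearMap.add_apply, End.one_apply, add_eq_zero_iff_eq_neg]

theorem apply_mem_fixedBy_of_commute (h : Commute f z) (hx : x ∈ fixedBy z) : f x ∈ fixedBy z := by
  rw [mem_fixedBy] at hx ⊢
  rw [← End.mul_apply, ← h.eq, End.mul_apply, hx]

theorem apply_mem_negatedBy_of_commute (h : Commute f z) (hx : x ∈ negatedBy z) :
    f x ∈ negatedBy z := by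
  rw [mem_negatedBy] at hx ⊢
  rw [← End.mul_apply, ← h.eq, End.mul_apply, hx, map_neg]

theorem apply_mem_negatedBy_of_anticommute (h : f * z = -(z * f)) (hx : x ∈ fixedBy z) :
    f x ∈ negatedBy z := by
  have hfz := LinearMap.congr_fun h x
  rw [LinearMap.neg_apply, End.mul_apply, End.mul_apply, mem_fixedBy.1 hx] at hfz
  exact mem_negatedBy.2 (neg_eq_iff_eq_neg.2 hfz).symm

theorem apply_mem_fixedBy_of_anticommute (h : f * z = -(z * f)) (hx : x ∈ negatedBy z) :
    f x ∈ fixedBy z := by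
  have hfz := LinearMap.congr_fun h x
  rw [LinearMap.neg_apply, End.mul_apply, End.mul_apply, mem_negatedBy.1 hx, map_neg,
    neg_inj] at hfz
  exact mem_fixedBy.2 hfz.symm

theorem add_apply_mem_fixedBy (hz : z * z = 1) (x : K) : z x + x ∈ fixedBy z := by
  rw [mem_fixedBy, map_add, ← End.mul_apply, hz, End.one_apply, add_comm]

theorem sub_apply_mem_negatedBy (hz : z * z = 1) (x : K) : x - z x ∈ negatedBy z := by
  rw [mem_negatedBy, map_sub, ← End.mul_apply, hz, End.one_apply, neg_sub]

theorem range_add_one_le_fixedBy (hz : z * z = 1) : LinearMap.range (z + 1) ≤ fixedBy z := by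
  rintro _ ⟨x, rfl⟩
  exact add_apply_mem_fixedBy hz x

theorem two_smul_mem_range_add_one (hx : x ∈ fixedBy z) : 2 • x ∈ LinearMap.range (z + 1) :=
  ⟨x, by rw [LinearMap.add_apply, mem_fixedBy.1 hx, End.one_apply, two_nsmul]⟩

variable [Module.Finite ℤ K]

theorem finrank_negatedBy_eq (hf : Function.Injective f) (hfz : f * z = -(z * f)) :
    finrank ℤ (negatedBy z) = finrank ℤ (fixedBy z) := by
  refine le_antisymm ?_ ?_
  · exact LinearMap.finrank_le_finrank_of_injective
      (f := f.restrict (p := negatedBy z) (q := fixedBy z)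
        fun x hx => apply_mem_fixedBy_of_anticommute hfz hx)
      fun x y h => Subtype.ext (hf (congrArg Subtype.val h))
  · exact LinearMap.finrank_le_finrank_of_injective
      (f := f.restrict (p := fixedBy z) (q := negatedBy z)
        fun x hx => apply_mem_negatedBy_of_anticommute hfz hx)
      fun x y h => Subtype.ext (hf (congrArg Subtype.val h))

variable [Free ℤ K]

theorem free_quotient_ker (f : End ℤ K) : Free ℤ (K ⧸ LinearMap.ker f) :=
  Free.of_equiv f.quotKerEquivRange.symm

theorem finrank_fixedBy_pos (hz : z * z = 1) (h : z ≠ -1) : 0 < finrank ℤ (fixedBy z) := by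
  refine Nat.pos_of_ne_zero fun hrank => h (LinearMap.ext fun x => ?_)
  have := finrank_zero_iff.1 hrank
  have hx : (⟨z x + x, add_apply_mem_fixedBy hz x⟩ : fixedBy z) = 0 := Subsingleton.elim _ _
  exact eq_neg_of_add_eq_zero_left (congrArg Subtype.val hx)

theorem finrank_quotient_fixedBy_pos (h : z ≠ 1) : 0 < finrank ℤ (K ⧸ fixedBy z) := by
  have := free_quotient_ker (z - 1)
  refine Nat.pos_of_ne_zero fun hrank => h (sub_eq_zero.1 (LinearMap.ext fun x => ?_))
  have := finrank_zero_iff.1 hrank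
  exact LinearMap.mem_ker.1
    ((Submodule.Quotient.mk_eq_zero _).1 (Subsingleton.elim (Submodule.Quotient.mk x) 0))

theorem finrank_range_add_one (hz : z * z = 1) :
    finrank ℤ (LinearMap.range (z + 1)) = finrank ℤ (fixedBy z) := by
  refine le_antisymm (Submodule.finrank_mono (range_add_one_le_fixedBy hz)) ?_
  refine LinearMap.finrank_le_finrank_of_injective
    (f := (2 • (1 : End ℤ K)).restrict (p := fixedBy z) (q := LinearMap.range (z + 1))
      fun x hx => two_smul_mem_range_add_one hx) fun x y h => ?_
  have hxy : (2 : ℕ) • (x : K) = 2 • (y : K) := congrArg Subtype.val h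
  rw [← natCast_zsmul, ← natCast_zsmul] at hxy
  exact Subtype.ext (smul_right_injective K (r := ((2 : ℕ) : ℤ)) (by norm_num) hxy)

theorem finrank_eq_two_mul_fixedBy (hf : Function.Injective f) (hfz : f * z = -(z * f))
    (hz : z * z = 1) : finrank ℤ K = 2 * finrank ℤ (fixedBy z) := by
  have hrank : finrank ℤ (LinearMap.range (z + 1)) + finrank ℤ (negatedBy z) = finrank ℤ K := by
    rw [← (z + 1 : End ℤ K).quotKerEquivRange.finrank_eq]
    exact Submodule.finrank_quotient_add_finrank _
  rw [← hrank, finrank_range_add_one hz, finrank_negatedBy_eq hf hfz, two_mul]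

end Eigenlattice

section Scalar

variable {G : Type u} [Group G] {K : Type v} [AddCommGroup K] {θ : G →* End ℤ K}

variable (θ) in
theorem rep_inv_mul (g : G) : θ g⁻¹ * θ g = 1 := by
  rw [← map_mul, inv_mul_cancel, map_one]

variable (θ) in
theorem rep_mul_inv (g : G) : θ g * θ g⁻¹ = 1 := by
  rw [← map_mul, mul_inv_cancel, map_one]

variable (θ) in
theorem rep_injective (g : G) : Function.Injective (θ g) :=
  Function.LeftInverse.injective (g := θ g⁻¹) (LinearMap.congr_fun (rep_inv_mul θ g))

variable (θ) in
/-- The subgroup of the elements acting as `1` or as `-1`. -/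
def scalarSubgroup : Subgroup G where
  carrier := {g | θ g = 1 ∨ θ g = -1}
  one_mem' := Or.inl (map_one θ)
  mul_mem' := by
    rintro a b (ha | ha) (hb | hb) <;> simp [ha, hb]
  inv_mem' := by
    rintro a (ha | ha)
    · left
      simpa [ha] using rep_inv_mul θ a
    · right
      simpa [ha, neg_eq_iff_eq_neg] using rep_inv_mul θ a

theorem mem_scalarSubgroup {g : G} : g ∈ scalarSubgroup θ ↔ θ g = 1 ∨ θ g = -1 := Iff.rfl

instance normal_scalarSubgroup : (scalarSubgroup θ).Normal where
  conj_mem n hn g := by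
    rw [mem_scalarSubgroup, map_mul, map_mul]
    rcases hn with hn | hn
    · left
      rw [hn, mul_one, rep_mul_inv]
    · right
      rw [hn, mul_neg_one, neg_mul, rep_mul_inv]

theorem nontrivial_of_notMem_scalarSubgroup {g : G} (hg : g ∉ scalarSubgroup θ) : Nontrivial K := by
  by_contra hK
  rw [not_nontrivial_iff_subsingleton] at hK
  exact hg (Or.inl (Subsingleton.elim _ _))

theorem commute_or_anticommute_of_commutator_mem {g z : G} (h : ⁅g, z⁆ ∈ scalarSubgroup θ) :
    Commute (θ g) (θ z) ∨ θ g * θ z = -(θ z * θ g) := by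
  have hgz : θ g * θ z = θ ⁅g, z⁆ * (θ z * θ g) := by
    rw [← map_mul, ← map_mul, ← map_mul, commutatorElement_def]
    group
  rcases h with h | h
  · left
    rw [commute_iff_eq, hgz, h, one_mul]
  · right
    rw [hgz, h, neg_one_mul]

variable (θ) in
theorem relIndex_ker_scalarSubgroup_le_two : θ.ker.relIndex (scalarSubgroup θ) ≤ 2 := by
  change (θ.comp (scalarSubgroup θ).subtype).ker.index ≤ 2
  rw [index_ker_eq_ncard_range]
  refine ncard_le_length [1, -1] ?_
  rintro _ ⟨g, rfl⟩
  simpa using mem_scalarSubgroup.1 g.2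

theorem index_ker_le_of_scalarSubgroup_eq_top [Free ℤ K] [Module.Finite ℤ K]
    (h : scalarSubgroup θ = ⊤) : θ.ker.index ≤ 2 ^ finrank ℤ K := by
  rcases Nat.eq_zero_or_pos (finrank ℤ K) with hrank | hrank
  · have := finrank_zero_iff.1 hrank
    rw [hrank, index_ker_eq_ncard_range]
    exact Set.ncard_le_one_of_subsingleton _
  · rw [← Subgroup.relIndex_top_right, ← h]
    exact (relIndex_ker_scalarSubgroup_le_two θ).trans (Nat.le_self_pow hrank.ne' 2)

theorem index_ker_le_of_mul_self [Finite G] [Free ℤ K] [Module.Finite ℤ K]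
    (hsq : ∀ g, θ g * θ g = 1) : θ.ker.index ≤ 2 ^ finrank ℤ K := by
  induction hn : finrank ℤ K using Nat.strong_induction_on generalizing K with
  | _ n ih =>
    subst hn
    by_cases htop : scalarSubgroup θ = ⊤
    · exact index_ker_le_of_scalarSubgroup_eq_top htop
    obtain ⟨z, hz⟩ := not_forall.1 (mt (Subgroup.eq_top_iff' _).2 htop)
    obtain ⟨hz_one, hz_neg⟩ := not_or.1 hz
    have hinv : ∀ g, ∀ x ∈ fixedBy (θ z), θ g x ∈ fixedBy (θ z) := fun g x hx => by
      refine apply_mem_fixedBy_of_commute ?_ hx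
      have hunits := commute_of_mul_self_eq_one (Λ := θ.toHomUnits.range)
        (by rintro ⟨_, a, rfl⟩; exact Subtype.ext (Units.ext (hsq a))) ⟨_, g, rfl⟩ ⟨_, z, rfl⟩
      exact congrArg (fun u : θ.toHomUnits.range => ((u : (End ℤ K)ˣ) : End ℤ K)) hunits
    have hpos := finrank_fixedBy_pos (hsq z) hz_neg
    have hpos' := finrank_quotient_fixedBy_pos hz_one
    have hadd := Submodule.finrank_quotient_add_finrank (fixedBy (θ z))
    have := free_quotient_ker (θ z - 1)
    calc θ.ker.index
        ≤ (subRep θ _ hinv).ker.index * (quotRep θ _ hinv).ker.index := index_ker_le_mul hinv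
      _ ≤ 2 ^ finrank ℤ (fixedBy (θ z)) * 2 ^ finrank ℤ (K ⧸ fixedBy (θ z)) :=
        Nat.mul_le_mul (ih _ (by omega) (fun g => subRep_mul_self hinv (hsq g)) rfl)
          (ih _ (by omega) (fun g => quotRep_mul_self hinv (hsq g)) rfl)
      _ = 2 ^ finrank ℤ K := by rw [← pow_add, add_comm, hadd]

end Scalar

section TwoStep

variable {G : Type u} [Group G] {V : Subgroup G}

theorem isPGroup_two_of_mul_self_mem (hV : ∀ v ∈ V, v * v = 1) (hG : ∀ g, g * g ∈ V) :
    IsPGroup 2 G :=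
  fun g => ⟨2, by rw [show 2 ^ 2 = 2 * 2 from rfl, pow_mul, pow_two, pow_two, hV _ (hG g)]⟩

variable [V.Normal]

theorem commutator_mem_of_mul_self_mem (hG : ∀ g, g * g ∈ V) (g h : G) : ⁅g, h⁆ ∈ V := by
  have hsq : ∀ x : G ⧸ V, x * x = 1 := fun x => by
    obtain ⟨x, rfl⟩ := QuotientGroup.mk_surjective x
    exact (QuotientGroup.eq_one_iff _).2 (hG x)
  rw [← QuotientGroup.eq_one_iff]
  exact (map_commutatorElement (QuotientGroup.mk' V) g h).trans
    (commutatorElement_eq_one_iff_commute.2 (commute_of_mul_self_eq_one hsq _ _))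

theorem exists_commutator_mem_scalarSubgroup [Finite G] {K : Type v} [AddCommGroup K]
    {θ : G →* End ℤ K} (hV : ∀ v ∈ V, v * v = 1) (hG : ∀ g, g * g ∈ V)
    (h : ∃ z, θ z * θ z = 1 ∧ z ∉ scalarSubgroup θ) :
    ∃ z : G, θ z * θ z = 1 ∧ z ∉ scalarSubgroup θ ∧ ∀ g : G, ⁅g, z⁆ ∈ scalarSubgroup θ := by
  by_cases hle : V ≤ scalarSubgroup θ
  · obtain ⟨z, hz, hzS⟩ := h
    exact ⟨z, hz, hzS, fun g => hle (commutator_mem_of_mul_self_mem hG g z)⟩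
  have : Fact (Nat.Prime 2) := ⟨Nat.prime_two⟩
  have : (V.map (QuotientGroup.mk' (scalarSubgroup θ))).Normal :=
    Subgroup.Normal.map inferInstance _ (QuotientGroup.mk'_surjective _)
  obtain ⟨_, ⟨z, hz, rfl⟩, hz_one, hcentral⟩ := exists_mem_central_ne_one
    ((isPGroup_two_of_mul_self_mem hV hG).to_quotient (scalarSubgroup θ))
    (V.map (QuotientGroup.mk' (scalarSubgroup θ))) fun hbot => hle <| by
      rwa [Subgroup.map_eq_bot_iff, QuotientGroup.ker_mk'] at hbot
  refine ⟨z, by rw [← map_mul, hV z hz, map_one],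
    fun hzS => hz_one ((QuotientGroup.eq_one_iff z).2 hzS), fun g => ?_⟩
  rw [← QuotientGroup.eq_one_iff]
  exact mul_inv_eq_one.2 (hcentral g)

end TwoStep

section Swap

variable {G : Type u} [Group G] {K : Type v} [AddCommGroup K] {θ : G →* End ℤ K} {z : End ℤ K}

variable (θ z) in
/-- The subgroup of the elements acting by endomorphisms that commute with `z`. -/
def repCentralizer : Subgroup G where
  carrier := {h | Commute (θ h) z}
  one_mem' := by
    rw [Set.mem_ofPred_eq, map_one]
    exact Commute.one_left z
  mul_mem' ha hb := by
    rw [Set.mem_ofPred_eq, map_mul]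
    exact Commute.mul_left ha hb
  inv_mem' {a} ha := Commute.units_inv_left (u := θ.toHomUnits a) ha

variable (θ z) in
/-- The action of the centralizer of `z` on the sublattice fixed by `z`. -/
def fixedRep : repCentralizer θ z →* End ℤ (fixedBy z) :=
  subRep (θ.comp (repCentralizer θ z).subtype) (fixedBy z)
    fun h _ hx => apply_mem_fixedBy_of_commute h.2 hx

variable (θ z) in
/-- The action of the centralizer of `z` on the sublattice negated by `z`. -/
def negatedRep : repCentralizer θ z →* End ℤ (negatedBy z) :=
  subRep (θ.comp (repCentralizer θ z).subtype) (negatedBy z)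
    fun h _ hx => apply_mem_negatedBy_of_commute h.2 hx

theorem apply_eq_self_of_mem_ker_fixedRep {h : repCentralizer θ z} (hh : h ∈ (fixedRep θ z).ker)
    {x : K} (hx : x ∈ fixedBy z) : θ h x = x :=
  (mem_ker_subRep (θ := θ.comp (repCentralizer θ z).subtype) _).1 hh x hx

theorem apply_eq_self_of_mem_ker_negatedRep {h : repCentralizer θ z}
    (hh : h ∈ (negatedRep θ z).ker) {x : K} (hx : x ∈ negatedBy z) : θ h x = x :=
  (mem_ker_subRep (θ := θ.comp (repCentralizer θ z).subtype) _).1 hh x hx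

theorem negatedRep_mem_range_of_mem_ker_fixedRep [(repCentralizer θ z).Normal] {V : Subgroup G}
    [V.Normal] (hG : ∀ g, g * g ∈ V) {g : G} (hg : θ g * z = -(z * θ g)) {h : repCentralizer θ z}
    (hh : h ∈ (fixedRep θ z).ker) :
    ∃ v ∈ V.subgroupOf (repCentralizer θ z), negatedRep θ z v = negatedRep θ z h := by
  have hdef : ⁅g⁻¹, (h : G)⁻¹⁆ = g⁻¹ * (h : G)⁻¹ * g * h := by
    rw [commutatorElement_def, inv_inv, inv_inv]
  have hmem : ⁅g⁻¹, (h : G)⁻¹⁆ ∈ repCentralizer θ z := by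
    have hconj := Subgroup.Normal.conj_mem inferInstance _ (inv_mem h.2) g⁻¹
    rw [inv_inv] at hconj
    exact hdef ▸ mul_mem hconj h.2
  refine ⟨⟨_, hmem⟩, commutator_mem_of_mul_self_mem hG _ _,
    LinearMap.ext fun y => Subtype.ext ?_⟩
  have hfix : θ (h : G)⁻¹ (θ g (θ h y)) = θ g (θ h y) :=
    apply_eq_self_of_mem_ker_fixedRep (inv_mem hh)
      (apply_mem_fixedBy_of_anticommute hg (apply_mem_negatedBy_of_commute h.2 y.2))
  change θ ⁅g⁻¹, (h : G)⁻¹⁆ y = θ h y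
  rw [hdef, map_mul, map_mul, map_mul, End.mul_apply, End.mul_apply, End.mul_apply, hfix,
    ← End.mul_apply, rep_inv_mul, End.one_apply]

theorem add_one_preimage_le_augLattice_sup {g : G} (hg : θ g * z = -(z * θ g)) {x y : K}
    (hy : y ∈ fixedBy z) (hxy : z x + x = 2 • y) :
    x ∈ augLattice θ ⊔ (fixedBy z).toAddSubgroup := by
  have hneg : x - y ∈ negatedBy z := by
    rw [mem_negatedBy, map_sub, mem_fixedBy.1 hy, eq_neg_iff_add_eq_zero, sub_add_sub_comm, hxy,
      two_nsmul, sub_self]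
  have hsum : x = -(θ g (x - y) - (x - y)) + (θ g (x - y) + y) := by abel
  rw [hsum]
  exact add_mem (AddSubgroup.mem_sup_left (neg_mem (sub_mem_augLattice θ g (x - y))))
    (AddSubgroup.mem_sup_right (add_mem (apply_mem_fixedBy_of_anticommute hg hneg) hy))

theorem range_add_one_le_augLattice {k : G} (hk : θ k = z) :
    (LinearMap.range (z + 1)).toAddSubgroup ≤ augLattice θ := by
  rintro _ ⟨x, rfl⟩
  have hx := add_mem (sub_mem_augLattice θ k x) (two_smul_mem_augLattice θ x)
  rwa [hk, two_nsmul, sub_add_add_cancel] at hx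

variable [Free ℤ K]

theorem ne_neg_of_isUnit [Nontrivial K] {f : End ℤ K} (hf : IsUnit f) : f ≠ -f := by
  intro h
  have := IsAddTorsionFree.of_isTorsionFree ℤ K
  have hx : ∀ x, f x = 0 := fun x => self_eq_neg.1 (LinearMap.congr_fun h x)
  exact hf.ne_zero (LinearMap.ext hx)

theorem index_repCentralizer_eq_two [Nontrivial K] (hz : z * z = 1)
    (hcomm : ∀ h, Commute (θ h) z ∨ θ h * z = -(z * θ h)) {g : G} (hg : θ g * z = -(z * θ g)) :
    (repCentralizer θ z).index = 2 := by
  have hnot : ∀ {h}, θ h * z = -(z * θ h) → h ∉ repCentralizer θ z := fun {h} hanti hmem =>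
    ne_neg_of_isUnit (((Group.isUnit h).map θ).mul ⟨⟨z, z, hz, hz⟩, rfl⟩)
      (hanti.trans (congrArg Neg.neg (Commute.eq hmem).symm))
  rw [Subgroup.index_eq_two_iff]
  refine ⟨g, fun b => ?_⟩
  rcases hcomm b with hb | hb
  · refine Or.inr ⟨hb, hnot ?_⟩
    rw [map_mul, mul_assoc, hg, mul_neg, ← mul_assoc, hb.eq, mul_assoc]
  · refine Or.inl ⟨?_, hnot hb⟩
    change θ (b * g) * z = z * θ (b * g)
    rw [map_mul, mul_assoc, hg, mul_neg, ← mul_assoc, hb, neg_mul, neg_neg, mul_assoc]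

theorem ker_fixedRep_inf_ker_negatedRep_le (hz : z * z = 1) :
    (fixedRep θ z).ker ⊓ (negatedRep θ z).ker ≤ θ.ker.subgroupOf (repCentralizer θ z) := by
  rintro h ⟨hfix, hneg⟩
  refine MonoidHom.mem_ker.2 (LinearMap.ext fun x => ?_)
  have hsum : (2 : ℤ) • x = z x + x + (x - z x) := by
    rw [two_smul]
    abel
  refine smul_right_injective K (r := (2 : ℤ)) two_ne_zero ?_
  change (2 : ℤ) • θ h x = (2 : ℤ) • x
  rw [← map_smul, hsum, map_add, apply_eq_self_of_mem_ker_fixedRep hfix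
    (add_apply_mem_fixedBy hz x), apply_eq_self_of_mem_ker_negatedRep hneg
    (sub_apply_mem_negatedBy hz x)]

variable [Module.Finite ℤ K]

theorem relIndex_ker_negatedRep_le [Finite G] [(repCentralizer θ z).Normal] {V : Subgroup G}
    [V.Normal] (hV : ∀ v ∈ V, v * v = 1) (hG : ∀ g, g * g ∈ V) {g : G}
    (hg : θ g * z = -(z * θ g)) :
    (negatedRep θ z).ker.relIndex (fixedRep θ z).ker ≤ 2 ^ finrank ℤ (fixedBy z) := by
  let θV := (negatedRep θ z).comp (V.subgroupOf (repCentralizer θ z)).subtype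
  have hsq : ∀ v, θV v * θV v = 1 := fun v => by
    rw [← map_mul, show v * v = 1 from Subtype.ext (Subtype.ext (hV _ v.2)), map_one]
  calc (negatedRep θ z).ker.relIndex (fixedRep θ z).ker
      = ((negatedRep θ z).comp (fixedRep θ z).ker.subtype).ker.index := rfl
    _ ≤ θV.ker.index := by
        rw [index_ker_eq_ncard_range, index_ker_eq_ncard_range]
        refine Set.ncard_le_ncard ?_ (Set.finite_range _)
        rintro _ ⟨h, rfl⟩
        obtain ⟨v, hv, hvh⟩ := negatedRep_mem_range_of_mem_ker_fixedRep hG hg h.2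
        exact ⟨⟨v, hv⟩, hvh⟩
    _ ≤ 2 ^ finrank ℤ (negatedBy z) := index_ker_le_of_mul_self hsq
    _ = 2 ^ finrank ℤ (fixedBy z) := by rw [finrank_negatedBy_eq (rep_injective θ g) hg]

theorem index_ker_le_mul_index_ker_fixedRep [Finite G] [Nontrivial K] {V : Subgroup G} [V.Normal]
    (hV : ∀ v ∈ V, v * v = 1) (hG : ∀ g, g * g ∈ V) (hz : z * z = 1)
    (hcomm : ∀ h, Commute (θ h) z ∨ θ h * z = -(z * θ h)) {g : G} (hg : θ g * z = -(z * θ g)) :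
    θ.ker.index ≤ 2 ^ finrank ℤ (fixedBy z) * (fixedRep θ z).ker.index * 2 := by
  have hindex := index_repCentralizer_eq_two hz hcomm hg
  have := Subgroup.normal_of_index_eq_two hindex
  have hle : θ.ker ≤ repCentralizer θ z := fun h hh => by
    change Commute (θ h) z
    rw [MonoidHom.mem_ker.1 hh]
    exact Commute.one_left z
  rw [← Subgroup.relIndex_mul_index hle, hindex]
  refine Nat.mul_le_mul_right 2 ?_
  calc θ.ker.relIndex (repCentralizer θ z)
      ≤ ((fixedRep θ z).ker ⊓ (negatedRep θ z).ker).index :=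
        Nat.le_of_dvd (Nat.pos_of_ne_zero Subgroup.index_ne_zero_of_finite)
          (Subgroup.index_dvd_of_le (ker_fixedRep_inf_ker_negatedRep_le hz))
    _ = (negatedRep θ z).ker.relIndex (fixedRep θ z).ker * (fixedRep θ z).ker.index := by
        rw [← Subgroup.relIndex_mul_index
          (inf_le_left : (fixedRep θ z).ker ⊓ (negatedRep θ z).ker ≤ _), inf_comm,
          Subgroup.inf_relIndex_right]
    _ ≤ 2 ^ finrank ℤ (fixedBy z) * (fixedRep θ z).ker.index :=
        Nat.mul_le_mul_right _ (relIndex_ker_negatedRep_le hV hG hg)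

theorem relIndex_map_subtype_range_nsmul (A : Submodule ℤ K) (n : ℕ) :
    ((nsmulAddMonoidHom (α := A) n).range.map A.subtype.toAddMonoidHom).relIndex A.toAddSubgroup =
      n ^ finrank ℤ A := by
  rw [← AddSubgroup.index_range_nsmul]
  exact congrArg AddSubgroup.index (AddSubgroup.comap_map_eq_self_of_injective
    (f := A.subtype.toAddMonoidHom) Subtype.val_injective _)

/- With `A` the fixed lattice and `R` the image of `z + 1`, we have `2A ≤ R ≤ A` and `[A : 2A]` is
the asserted bound. The index of the augmentation lattice splits into a factor dividing `[A : R]`,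
and one dividing `[R : 2A]` because every `x` with `(z + 1) x ∈ 2A` is congruent modulo `A` to an
element negated by `z`, which `g` moves into `A`. -/
theorem augLattice_index_le_of_anticommute (hz : z * z = 1) {g k : G}
    (hg : θ g * z = -(z * θ g)) (hk : θ k = z) :
    (augLattice θ).index ≤ 2 ^ finrank ℤ (fixedBy z) := by
  let A := (fixedBy z).toAddSubgroup
  let R := (LinearMap.range (z + 1)).toAddSubgroup
  let T := (nsmulAddMonoidHom (α := fixedBy z) 2).range.map (fixedBy z).subtype.toAddMonoidHom
  have hTR : T ≤ R := by
    rintro _ ⟨_, ⟨x, rfl⟩, rfl⟩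
    exact two_smul_mem_range_add_one x.2
  have hcomap : T.comap (z + 1 : End ℤ K).toAddMonoidHom ≤ augLattice θ ⊔ A := by
    rintro x ⟨_, ⟨y, rfl⟩, hy⟩
    exact add_one_preimage_le_augLattice_sup hg y.2 hy.symm
  have hsup : (augLattice θ ⊔ A).index ∣ T.relIndex R := by
    refine (AddSubgroup.index_dvd_of_le hcomap).trans ?_
    rw [AddSubgroup.index_comap]
    rfl
  refine Nat.le_of_dvd (by positivity) ?_
  rw [index_eq_relIndex_mul_index_sup _ A, ← relIndex_map_subtype_range_nsmul (fixedBy z) 2,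
    ← AddSubgroup.relIndex_mul_relIndex _ _ _ hTR (range_add_one_le_fixedBy hz), mul_comm]
  exact mul_dvd_mul hsup (AddSubgroup.relIndex_dvd_of_le_left _ (range_add_one_le_augLattice hk))

end Swap

section SquareNegOne

theorem anticommute_of_mul_self_eq_neg_one {R : Type*} [Ring R] {a b : R} (ha : a * a = -1)
    (hb : b * b = -1) (hab : a * b * (a * b) = -1) : b * a = -(a * b) :=
  calc b * a = (a * a) * (b * a) * (b * b) := by rw [ha, hb, neg_one_mul, mul_neg_one, neg_neg]
    _ = a * (a * b * (a * b)) * b := by simp only [mul_assoc]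
    _ = -(a * b) := by rw [hab, mul_neg_one, neg_mul]

variable {G : Type u} [Group G] {K : Type v} [AddCommGroup K] {θ : G →* End ℤ K}

theorem anticommute_of_notMem_scalarSubgroup (h : ∀ g, g ∉ scalarSubgroup θ → θ g * θ g = -1)
    {a b : G} (ha : a ∉ scalarSubgroup θ) (hb : b ∉ scalarSubgroup θ)
    (hab : a * b ∉ scalarSubgroup θ) : θ b * θ a = -(θ a * θ b) :=
  anticommute_of_mul_self_eq_neg_one (h a ha) (h b hb) (by rw [← map_mul, h _ hab])

variable [Free ℤ K]

theorem mem_scalarSubgroup_or_mul_mem (h : ∀ g, g ∉ scalarSubgroup θ → θ g * θ g = -1) {a b : G}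
    (ha : a ∉ scalarSubgroup θ) (hb : b ∉ scalarSubgroup θ) (hab : a * b ∉ scalarSubgroup θ)
    (g : G) :
    g ∈ scalarSubgroup θ ∨ a * g ∈ scalarSubgroup θ ∨ b * g ∈ scalarSubgroup θ ∨
      a * b * g ∈ scalarSubgroup θ := by
  by_contra hmem
  simp only [not_or] at hmem
  obtain ⟨hg, hag, hbg, habg⟩ := hmem
  have := nontrivial_of_notMem_scalarSubgroup hg
  have hga := anticommute_of_notMem_scalarSubgroup h ha hg hag
  have hgb := anticommute_of_notMem_scalarSubgroup h hb hg hbg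
  have hgab := anticommute_of_notMem_scalarSubgroup h hab hg habg
  refine ne_neg_of_isUnit ((Group.isUnit (a * b * g)).map θ) ?_
  rw [map_mul, ← hgab, map_mul, ← mul_assoc, hga, neg_mul, mul_assoc, mul_assoc, hgb, mul_neg,
    neg_neg]

theorem index_scalarSubgroup_le_four (h : ∀ g, g ∉ scalarSubgroup θ → θ g * θ g = -1) :
    (scalarSubgroup θ).index ≤ 4 := by
  have hmk : ∀ {c g : G}, c * g ∈ scalarSubgroup θ →
      (g : G ⧸ scalarSubgroup θ) = (c⁻¹ : G) := fun {c g} hcg => by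
    rw [eq_comm, QuotientGroup.eq, inv_inv]
    exact hcg
  rw [Subgroup.index, ← Set.ncard_univ]
  by_cases hpair : ∃ a b, a ∉ scalarSubgroup θ ∧ b ∉ scalarSubgroup θ ∧ a * b ∉ scalarSubgroup θ
  · obtain ⟨a, b, ha, hb, hab⟩ := hpair
    refine ncard_le_length (α := G ⧸ scalarSubgroup θ)
      [1, (a⁻¹ : G), (b⁻¹ : G), ((a * b)⁻¹ : G)] fun q _ => ?_
    obtain ⟨g, rfl⟩ := QuotientGroup.mk_surjective q
    rcases mem_scalarSubgroup_or_mul_mem h ha hb hab g with hg | hg | hg | hg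
    · simp [(QuotientGroup.eq_one_iff g).2 hg]
    all_goals simp [hmk hg]
  push Not at hpair
  by_cases hex : ∃ a, a ∉ scalarSubgroup θ
  · obtain ⟨a, ha⟩ := hex
    refine (ncard_le_length (α := G ⧸ scalarSubgroup θ) [1, (a⁻¹ : G)] fun q _ => ?_).trans
      (by simp)
    obtain ⟨g, rfl⟩ := QuotientGroup.mk_surjective q
    by_cases hg : g ∈ scalarSubgroup θ
    · simp [(QuotientGroup.eq_one_iff g).2 hg]
    · simp [hmk (hpair a g ha hg)]
  · push Not at hex
    refine (ncard_le_length (α := G ⧸ scalarSubgroup θ) [1] fun q _ => ?_).trans (by simp)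
    obtain ⟨g, rfl⟩ := QuotientGroup.mk_surjective q
    simp [(QuotientGroup.eq_one_iff g).2 (hex g)]

theorem index_ker_le_eight (h : ∀ g, g ∉ scalarSubgroup θ → θ g * θ g = -1) :
    θ.ker.index ≤ 8 := by
  have hle : θ.ker ≤ scalarSubgroup θ := fun g hg => Or.inl hg
  rw [← Subgroup.relIndex_mul_index hle]
  exact Nat.mul_le_mul (relIndex_ker_scalarSubgroup_le_two θ) (index_scalarSubgroup_le_four h)

theorem finrank_ne_one_of_mul_self_eq_neg_one {f : End ℤ K} (hf : f * f = -1) :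
    finrank ℤ K ≠ 1 := by
  intro hrank
  have hdet : LinearMap.det f * LinearMap.det f = -1 := by
    rw [← map_mul, hf, ← neg_one_smul ℤ (1 : End ℤ K), LinearMap.det_smul, hrank, map_one, pow_one,
      mul_one]
  nlinarith [mul_self_nonneg (LinearMap.det f)]

variable [Module.Finite ℤ K]

theorem augLattice_index_ne_of_mul_self_eq_neg_one (hpos : 0 < finrank ℤ K) {g : G}
    (hg : θ g * θ g = -1) : (augLattice θ).index ≠ 2 ^ finrank ℤ K := by
  intro heq
  have hindex : (nsmulAddMonoidHom (α := K) 2).range.index = 2 ^ finrank ℤ K :=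
    AddSubgroup.index_range_nsmul _ _
  have hle : augLattice θ ≤ (nsmulAddMonoidHom (α := K) 2).range := by
    have hmul := AddSubgroup.relIndex_mul_index (range_nsmul_two_le_augLattice θ)
    rw [heq, hindex] at hmul
    exact AddSubgroup.relIndex_eq_one.1 (Nat.eq_of_mul_eq_mul_right (by positivity)
      (hmul.trans (one_mul _).symm))
  have hcongr : ∀ x, ∃ y : K, θ g x = x + 2 • y := fun x => by
    obtain ⟨y, hy⟩ := hle (sub_mem_augLattice θ g x)
    exact ⟨y, eq_add_of_sub_eq' hy.symm⟩
  have htop : (nsmulAddMonoidHom (α := K) 2).range = ⊤ := by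
    refine eq_top_iff.2 fun x _ => ?_
    obtain ⟨y, hy⟩ := hcongr x
    obtain ⟨w, hw⟩ := hcongr y
    have hgg := LinearMap.congr_fun hg x
    rw [End.mul_apply, hy, map_add, map_nsmul, hy, hw, LinearMap.neg_apply, End.one_apply] at hgg
    refine ⟨-(y + w), smul_right_injective K (r := (2 : ℤ)) two_ne_zero ?_⟩
    change (2 : ℤ) • (2 • (-(y + w))) = (2 : ℤ) • x
    have hzero : x + 2 • y + 2 • (y + 2 • w) + x = 0 := by rw [hgg, neg_add_cancel]
    rw [← sub_eq_zero, ← neg_eq_zero, ← hzero]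
    abel
  rw [htop, AddSubgroup.index_top] at hindex
  exact (Nat.one_lt_two_pow hpos.ne').ne hindex

theorem augLattice_index_dvd_two_of_mul_self_eq_neg_one (hrank : finrank ℤ K = 2) {g : G}
    (hg : θ g * θ g = -1) : (augLattice θ).index ∣ 2 := by
  have hne := augLattice_index_ne_of_mul_self_eq_neg_one (by omega) hg
  obtain ⟨k, hk, hindex⟩ := (Nat.dvd_prime_pow Nat.prime_two).1 (augLattice_index_dvd θ)
  rw [hindex, hrank] at hne
  rw [hrank] at hk
  have hk_le : k ≤ 1 := Nat.lt_succ_iff.1 (lt_of_le_of_ne hk fun h => hne (h ▸ rfl))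
  exact hindex ▸ pow_dvd_pow 2 hk_le

/- If some element squares to `-1` then the image of `θ` has at most `8` elements, so only the
ranks `1` and `2` need care. -/
theorem index_mul_augLattice_index_le_of_mul_self_eq_neg_one
    (h : ∀ g, g ∉ scalarSubgroup θ → θ g * θ g = -1) :
    θ.ker.index * (augLattice θ).index ≤ 4 ^ finrank ℤ K := by
  have hfour : 4 ^ finrank ℤ K = 2 ^ finrank ℤ K * 2 ^ finrank ℤ K := by
    rw [← mul_pow]
    norm_num
  by_cases htop : scalarSubgroup θ = ⊤
  · rw [hfour]
    exact Nat.mul_le_mul (index_ker_le_of_scalarSubgroup_eq_top htop) (augLattice_index_le θ)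
  obtain ⟨g, hg⟩ := not_forall.1 (mt (Subgroup.eq_top_iff' _).2 htop)
  have := nontrivial_of_notMem_scalarSubgroup hg
  have hpos : 0 < finrank ℤ K := finrank_pos
  have hne_one := finrank_ne_one_of_mul_self_eq_neg_one (h g hg)
  have height := index_ker_le_eight h
  by_cases hrank : finrank ℤ K = 2
  · have hdvd := augLattice_index_dvd_two_of_mul_self_eq_neg_one hrank (h g hg)
    rw [hrank]
    exact (Nat.mul_le_mul height (Nat.le_of_dvd two_pos hdvd)).trans_eq (by norm_num)
  · rw [hfour]
    refine Nat.mul_le_mul (height.trans ?_) (augLattice_index_le θ)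
    exact Nat.pow_le_pow_right two_pos (show 3 ≤ finrank ℤ K by omega)

end SquareNegOne

section AugBound

/-- The inequality `|θ(G)| * |K / augLattice θ| ≤ 4 ^ n` for all representations on lattices of rank
`n` of finite groups that are extensions of an elementary abelian `2`-group by another one. -/
def AugBound (n : ℕ) : Prop :=
  ∀ (G : Type u) [Group G] [Finite G] (V : Subgroup G) [V.Normal] (K : Type v) [AddCommGroup K]
    [Free ℤ K] [Module.Finite ℤ K] (θ : G →* End ℤ K), (∀ v ∈ V, v * v = 1) →
    (∀ g : G, g * g ∈ V) → finrank ℤ K = n → θ.ker.index * (augLattice θ).index ≤ 4 ^ n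

section InductionStep

variable {G : Type u} [Group G] [Finite G] {K : Type v} [AddCommGroup K] [Free ℤ K]
  [Module.Finite ℤ K] {θ : G →* End ℤ K} {V : Subgroup G} [V.Normal] (hV : ∀ v ∈ V, v * v = 1)
  (hG : ∀ g, g * g ∈ V) (ih : ∀ k < finrank ℤ K, AugBound.{u, v} k) {z : End ℤ K}
  (hz : z * z = 1)

include hV hG ih hz

theorem index_mul_augLattice_index_le_of_commute (hz_one : z ≠ 1) (hz_neg : z ≠ -1)
    (hcomm : ∀ g, Commute (θ g) z) : θ.ker.index * (augLattice θ).index ≤ 4 ^ finrank ℤ K := by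
  have hinv : ∀ g, ∀ x ∈ fixedBy z, θ g x ∈ fixedBy z := fun g _ hx =>
    apply_mem_fixedBy_of_commute (hcomm g) hx
  have hpos := finrank_fixedBy_pos hz hz_neg
  have hpos' := finrank_quotient_fixedBy_pos hz_one
  have hadd := Submodule.finrank_quotient_add_finrank (fixedBy z)
  have := free_quotient_ker (z - 1)
  have hsub := ih (finrank ℤ (fixedBy z)) (by omega) G V _ (subRep θ _ hinv) hV hG rfl
  have hquot := ih (finrank ℤ (K ⧸ fixedBy z)) (by omega) G V _ (quotRep θ _ hinv) hV hG rfl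
  have hindex := Nat.le_of_dvd (Nat.pos_of_ne_zero (mul_ne_zero (augLattice_index_ne_zero _)
    (augLattice_index_ne_zero _))) (augLattice_index_dvd_mul hinv)
  calc _ ≤ _ := Nat.mul_le_mul (index_ker_le_mul hinv) hindex
    _ = _ := Nat.mul_mul_mul_comm _ _ _ _
    _ ≤ _ := Nat.mul_le_mul hsub hquot
    _ = _ := by rw [← pow_add, add_comm, hadd]

theorem index_mul_augLattice_index_le_of_anticommute (hz_neg : z ≠ -1)
    (hcomm : ∀ h, Commute (θ h) z ∨ θ h * z = -(z * θ h)) {g k : G} (hg : θ g * z = -(z * θ g))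
    (hk : θ k = z) : θ.ker.index * (augLattice θ).index ≤ 4 ^ finrank ℤ K := by
  have hpos : 0 < finrank ℤ (fixedBy z) := finrank_fixedBy_pos hz hz_neg
  have hrank := finrank_eq_two_mul_fixedBy (rep_injective θ g) hg hz
  have : Nontrivial K := nontrivial_of_finrank_pos (R := ℤ) (by omega)
  have hfix : (fixedRep θ z).ker.index * (augLattice (fixedRep θ z)).index ≤
      4 ^ finrank ℤ (fixedBy z) :=
    ih _ (by omega) _ (V.subgroupOf (repCentralizer θ z)) _ (fixedRep θ z)
      (fun v hv => Subtype.ext (hV _ hv)) (fun h => hG h) rfl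
  have htwo : 2 ≤ (augLattice (fixedRep θ z)).index :=
    two_le_augLattice_index ((isPGroup_two_of_mul_self_mem hV hG).to_subgroup _) hpos
  calc θ.ker.index * (augLattice θ).index
      ≤ (2 ^ finrank ℤ (fixedBy z) * (fixedRep θ z).ker.index * 2) * 2 ^ finrank ℤ (fixedBy z) :=
        Nat.mul_le_mul (index_ker_le_mul_index_ker_fixedRep hV hG hz hcomm hg)
          (augLattice_index_le_of_anticommute hz hg hk)
    _ = ((fixedRep θ z).ker.index * 2) * (2 * 2) ^ finrank ℤ (fixedBy z) := by rw [mul_pow]; ring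
    _ ≤ 4 ^ finrank ℤ (fixedBy z) * 4 ^ finrank ℤ (fixedBy z) :=
        Nat.mul_le_mul_right _ ((Nat.mul_le_mul_left _ htwo).trans hfix)
    _ = 4 ^ finrank ℤ K := by rw [← pow_add, hrank, two_mul]

end InductionStep

theorem augBound (n : ℕ) : AugBound.{u, v} n := by
  induction n using Nat.strong_induction_on with
  | _ n ih =>
    intro G _ _ V _ K _ _ _ θ hV hG hn
    subst hn
    by_cases hex : ∃ z, θ z * θ z = 1 ∧ z ∉ scalarSubgroup θ
    · obtain ⟨z, hz, hzS, hcommutator⟩ := exists_commutator_mem_scalarSubgroup hV hG hex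
      obtain ⟨hz_one, hz_neg⟩ := not_or.1 hzS
      have hcomm := fun g => commute_or_anticommute_of_commutator_mem (hcommutator g)
      by_cases hall : ∀ g, Commute (θ g) (θ z)
      · exact index_mul_augLattice_index_le_of_commute hV hG ih hz hz_one hz_neg hall
      · obtain ⟨g, hg⟩ := not_forall.1 hall
        exact index_mul_augLattice_index_le_of_anticommute hV hG ih hz hz_neg hcomm
          ((hcomm g).resolve_left hg) rfl
    · push Not at hex
      refine index_mul_augLattice_index_le_of_mul_self_eq_neg_one fun g hg => ?_
      have hfourth : θ (g * g) * θ (g * g) = 1 := by rw [← map_mul, hV _ (hG g), map_one]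
      have hsq := hex (g * g) hfourth
      rw [mem_scalarSubgroup, map_mul] at hsq
      exact hsq.resolve_left fun h => hg (hex g h)

end AugBound

end LatticeRep

section CardBound

open Cochain LatticeRep

theorem index_map_nsmul {K : Type*} [AddCommGroup K] [Module.Free ℤ K] [Module.Finite ℤ K]
    (H : AddSubgroup K) {n : ℕ} (hn : n ≠ 0) :
    (H.map (nsmulAddMonoidHom n)).index = H.index * n ^ Module.finrank ℤ K := by
  have hinj : Function.Injective (nsmulAddMonoidHom (α := K) n) := fun x y h =>
    smul_right_injective K (r := (n : ℤ)) (Nat.cast_ne_zero.2 hn) (by simpa using h)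
  rw [AddSubgroup.index_map_of_injective _ hinj, AddSubgroup.index_range_nsmul]

section FreeAction

variable {m t : ℕ} {G : Type*} [Group G] [Finite G] [MulAction G (SphereProd m t)]
  [ContinuousConstSMul G (SphereProd m t)] {V : Subgroup G} [V.Normal]
  {θ : G →* Module.End ℤ (Fin t → ℤ)} (hm : 0 < m) (hV : ∀ x ∈ V, x * x = 1)
  (hW : ∀ w : G ⧸ V, w * w = 1) (hfree : ∀ (g : G) (x : SphereProd m t), g • x = x → g = 1)

include hm hV hW hfree

theorem map_augLattice_le_invariantLattice (hθ : IsCohomologyAction m θ) :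
    (augLattice θ).map (nsmulAddMonoidHom (2 ^ m)) ≤ invariantLattice m t θ.ker := by
  have hsmul (c : Fin t → ℤ) : nsmulAddMonoidHom (2 ^ m) c = (2 : ℤ) ^ m • c := by
    rw [nsmulAddMonoidHom_apply, ← natCast_zsmul, Nat.cast_pow, Nat.cast_ofNat]
  refine AddSubgroup.map_le_iff_le_comap.2 (augLattice_le (fun c => ?_) fun g c => ?_) <;>
    rw [AddSubgroup.mem_comap, hsmul]
  · rw [← natCast_zsmul, smul_smul, Nat.cast_ofNat, ← pow_succ]
    exact two_pow_succ_smul_mem_invariantLattice hm hV hW hfree hθ c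
  · exact two_pow_smul_sub_mem_invariantLattice hm hV hW hfree hθ g c

theorem card_ker_le (hθ : IsCohomologyAction m θ) :
    Nat.card θ.ker ≤ (augLattice θ).index * (2 ^ m) ^ t := by
  have hindex : ((augLattice θ).map (nsmulAddMonoidHom (2 ^ m))).index =
      (augLattice θ).index * (2 ^ m) ^ t := by
    rw [index_map_nsmul _ (by positivity), Module.finrank_fin_fun]
  have hne : (augLattice θ).index * (2 ^ m) ^ t ≠ 0 :=
    mul_ne_zero (augLattice_index_ne_zero θ) (by positivity)
  have hdvd := AddSubgroup.index_dvd_of_le (map_augLattice_le_invariantLattice hm hV hW hfree hθ)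
  rw [hindex] at hdvd
  have : Fact (Nat.Prime 2) := ⟨Nat.prime_two⟩
  obtain ⟨s, hs⟩ := IsPGroup.iff_card.1 ((isPGroup_two_of_mul_self_mem hV fun g =>
    (QuotientGroup.eq_one_iff _).1 (hW g)).to_subgroup θ.ker)
  have hcard : Nat.card θ.ker ∣ (invariantLattice m t θ.ker).index :=
    card_dvd_index_invariantLattice hm (fun γ x h => Subtype.ext (hfree γ x h))
      (fun γ i => linCocycle_single (m := m) i ▸ hθ.isCoboundary_of_mem_ker γ.2 (Pi.single i 1)) hs
      (ne_zero_of_dvd_ne_zero hne hdvd)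
  exact Nat.le_of_dvd (Nat.pos_of_ne_zero hne) (hcard.trans hdvd)

theorem card_le_of_free_action : Nat.card G ≤ 2 ^ ((m + 2) * t) := by
  obtain ⟨θ, hθ⟩ := exists_isCohomologyAction (G := G) (t := t) hm
  have hbound := augBound t G V _ θ hV (fun g => (QuotientGroup.eq_one_iff _).1 (hW g))
    (Module.finrank_fin_fun ℤ)
  calc Nat.card G = Nat.card θ.ker * θ.ker.index := (Subgroup.card_mul_index _).symm
    _ ≤ (augLattice θ).index * (2 ^ m) ^ t * θ.ker.index :=
      Nat.mul_le_mul_right _ (card_ker_le hm hV hW hfree hθ)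
    _ = (2 ^ m) ^ t * (θ.ker.index * (augLattice θ).index) := by ring
    _ ≤ (2 ^ m) ^ t * (2 ^ 2) ^ t := Nat.mul_le_mul_left _ hbound
    _ = 2 ^ ((m + 2) * t) := by rw [← mul_pow, ← pow_add, ← pow_mul]

end FreeAction

theorem card_sph_zero_le_two : Nat.card (Sph 0) ≤ 2 := by
  rw [← Set.ncard_univ]
  exact ncard_le_length [pole 0 1, pole 0 (-1)] fun x _ => by simpa using eq_pole_or_eq_pole x

theorem card_le_two_pow_of_free_action_sph_zero {t : ℕ} {G : Type*} [Group G]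
    [MulAction G (SphereProd 0 t)]
    (hfree : ∀ (g : G) (x : SphereProd 0 t), g • x = x → g = 1) : Nat.card G ≤ 2 ^ t := by
  have : Finite (Sph 0) := Set.finite_univ_iff.1 <|
    (Set.toFinite {pole 0 1, pole 0 (-1)}).subset fun x _ => eq_pole_or_eq_pole x
  obtain ⟨x⟩ := nonempty_sphereProd 0 t
  have horbit : Function.Injective fun g : G => g • x := fun g h hgh =>
    (inv_mul_eq_one.1 (hfree (h⁻¹ * g) x (by
      rw [mul_smul, show g • x = h • x from hgh, inv_smul_smul]))).symm
  calc Nat.card G ≤ Nat.card (SphereProd 0 t) := Nat.card_le_card_of_injective _ horbit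
    _ = Nat.card (Sph 0) ^ t := by rw [Nat.card_fun, Nat.card_fin]
    _ ≤ 2 ^ t := Nat.pow_le_pow_left card_sph_zero_le_two t

end CardBound

theorem stmt16_general (m t : ℕ) (G : Type*) [Group G] (V : Subgroup G) [V.Normal]
    (hV : ∀ v ∈ V, v * v = 1) (rV : ℕ) (hrV : Nat.card V = 2 ^ rV)
    (hW : ∀ w : G ⧸ V, w * w = 1) (rW : ℕ) (hrW : Nat.card (G ⧸ V) = 2 ^ rW)
    (ρ : G → (Fin t → Sph m) → (Fin t → Sph m)) (hρ1 : ∀ x, ρ 1 x = x)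
    (hρmul : ∀ g h x, ρ (g * h) x = ρ g (ρ h x)) (hcont : ∀ g, Continuous (ρ g))
    (hfree : ∀ g x, ρ g x = x → g = 1) : rV + rW ≤ (m + 2) * t := by
  let : MulAction G (Cochain.SphereProd m t) := { smul := ρ, one_smul := hρ1, mul_smul := hρmul }
  have : ContinuousConstSMul G (Cochain.SphereProd m t) := ⟨hcont⟩
  have hcard : Nat.card G = 2 ^ (rV + rW) := by
    rw [Subgroup.card_eq_card_quotient_mul_card_subgroup V, hrW, hrV, mul_comm, pow_add]
  have : Finite G := Nat.finite_of_card_ne_zero (by rw [hcard]; positivity)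
  refine (Nat.pow_le_pow_iff_right one_lt_two).1 (hcard.ge.trans ?_)
  obtain rfl | hm := Nat.eq_zero_or_pos m
  · exact (card_le_two_pow_of_free_action_sph_zero hfree).trans
      (Nat.pow_le_pow_right two_pos (by omega))
  · exact card_le_of_free_action hm hV hW hfree

theorem stmt16 (m t : ℕ) (hm7 : 7 < m)
    (G : Type) [Group G] [Finite G] (V : Subgroup G) [V.Normal]
    (hV : IsElemAbelian2 V) (hmax : IsMaximalRank2 V)
    (htV : Nat.card V = 2 ^ t)
    (hW : ∀ w : G ⧸ V, w * w = 1)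
    (rW : ℕ)
    (hrW : Nat.card (G ⧸ V) = 2 ^ rW)
    -- a free continuous action of G on X = (S^m)^t
    (ρ : G → (Fin t → Sph m) → (Fin t → Sph m))
    (hρ1 : ∀ x, ρ 1 x = x)
    (hρmul : ∀ g h x, ρ (g * h) x = ρ g (ρ h x))
    (hcont : ∀ g, Continuous (ρ g))
    (hfree : ∀ g x, ρ g x = x → g = 1) :
    rW ≤ (m + 1) * t := by
  have h := stmt16_general m t G V hV.1 t htV hW rW hrW ρ hρ1 hρmul hcont hfree
  linarith
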